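/- Fix a number field L of degree d over ℚ with ring of integers O_L. There is a constant depending only on L (and not on X, q, B, or α) such that the following holds. Let X ≥ 2, let B > 0, and let α be a real number with a rational approximation of denominator q where X·B^{−1} > q > B. Then |Σ_{N(𝔞) ≤ X} Λ_L(𝔞)·e(α·N(𝔞))| = O( X·( log²(X)·B^{−10^{−d}/12} + log²(X)·X^{−10^{−d}/60} + log²(X)·X^{−10^{−d}/(10d)} + log^{2 + d²/2}(X)·B^{−1/12} ) ). -/

import Mathlib

/-!
The estimate is proved by Vaughan's method for the push-forwards of `Λ_L` and of the Möbius function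
along the ideal norm. Write `r(n)` (`rr`) for the number of ideals of norm `n`, and `λ(n)` (`lam`),
`μ(n)` (`mu`) for the sums of `Λ_L` and of the Möbius function over these ideals. Grouping ideals by
norm turns the sum into `∑ λ(n) e(αn)`, and unique factorization gives the Dirichlet convolution
identities `λ * r = r log` and `μ * r = 1` (`lam_mul_rr`, `mu_mul_rr`). These are all that Vaughan's
identity `vaughan` needs. Since at most `d` primes lie above a rational prime, `r` is bounded by the
divisor function `τ_{2^d}` (`rr_le`), so all weights are controlled by divisor functions, which cost
only powers of `log X`.

Type I sums require cancellation in `∑_{m ≤ Y} r(m) e(θm)`, a sum over all ideals of norm at most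
`Y`. In each of the finitely many ideal classes an ideal `𝔟` is replaced by the generators of the
principal ideal `𝔟J`, `J` being a fixed ideal of the inverse class. The generators are restricted to
those whose conjugates are all of size about `|N x|^{1/d}`; every orbit of the unit group meets this
set in a bounded, nonzero number of points (`exists_domain`), and each point is weighted by the
inverse of that number. The resulting sum over a box in `𝓞 L` is averaged over the translates
`x + tm`, where `m = N(J)` and `0 ≤ t < T`. On such a line the norm is a polynomial in `t` of degree
`d` with leading coefficient `m^d`, so Weyl's inequality (`weyl`) applies; the cutoffs and weights
change only where one of boundedly many polynomials of bounded degree changes sign, and are removed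
by partial summation (`abel_signs`). This yields `ideal_weyl`, a Weyl inequality for ideals, in which
`θ` enters only through the sums of `min(T, 1/‖θ M h₁⋯h_{d-1}‖)` with a fixed integer `M`.

The rational approximation to `α` enters through the classical estimate `sum_G` for
`∑_{n ≤ N} min(X/n, 1/‖αn‖)`. Averaging `ideal_weyl` over `θ = αk`, grouping the products
`k h₁⋯h_{d-1}` and removing divisor functions by the arithmetic-geometric mean inequality gives the
Type I estimate `typeI`. The Type II sums (`bilinear`) need no further arithmetic of `L`: the square
is opened, and the inner sums are geometric series. Altogether (`core`) the sum is
`O(X v (1 + log X)^A)` with `A = 4·4^d + 2` and `v^{2^d} = max(1/B, X^{-1/(4d)})`.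

The exponents `2^{-d}` and `2^{-d}/(4d)` obtained in this way exceed `10^{-d}/12` and `10^{-d}/60`,
and the difference absorbs the powers of the logarithm once `B` is larger than
`(1 + log X)^{12·10^d}`. For smaller `B` the term `B^{-10^{-d}/12} log² X` already exceeds the trivial
bound (`main_bound`). The last two terms of the bound are nonnegative and play no part.
-/

open scoped BigOperators Classical
open NumberField

/-- `e(x) = exp(2πix)`. -/
noncomputable def eF (x : ℝ) : ℂ := Complex.exp (2 * Real.pi * Complex.I * x)

/-- `α` has a rational approximation with denominator `q`: there are relatively prime
integers `a` and `q` with `|α − a/q| < 1/q²`. -/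
def HasRatApprox (α : ℝ) (q : ℕ) : Prop :=
  ∃ a : ℤ, Int.gcd a (q : ℤ) = 1 ∧ |α - (a : ℝ) / q| < 1 / (q : ℝ) ^ 2

/-- The von Mangoldt function on nonzero ideals of `𝓞 L`: `Λ_L(𝔞) = log N(𝔭)` if
`𝔞 = 𝔭^n` for a prime ideal `𝔭` and `n ≥ 1`, and `0` otherwise. -/
noncomputable def LamIdeal (L : Type*) [Field L] [NumberField L] (I : Ideal (𝓞 L)) : ℝ :=
  if ∃ (P : Ideal (𝓞 L)) (n : ℕ), P.IsPrime ∧ P ≠ ⊥ ∧ n ≠ 0 ∧ I = P ^ n then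
    Real.log (Ideal.absNorm I.radical)
  else 0

/-! ### Exponential sums and the distance to the nearest integer -/

namespace VMI

section

/-- The distance from `x` to the nearest integer. -/
noncomputable def nd (x : ℝ) : ℝ := |x - round x|

/-- The harmonic combination `1 / (1/Y + ‖x‖)`, comparable to `min (Y, 1/‖x‖)`
(and equal to `Y` when `x` is an integer). -/
noncomputable def G (Y x : ℝ) : ℝ := (Y⁻¹ + nd x)⁻¹

lemma nd_nonneg (x : ℝ) : 0 ≤ nd x := abs_nonneg _

lemma nd_le (x : ℝ) (z : ℤ) : nd x ≤ |x - z| := round_le x z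

lemma nd_neg (x : ℝ) : nd (-x) = nd x := by
  apply le_antisymm
  · refine (nd_le _ (-round x)).trans (le_of_eq ?_)
    rw [nd, ← abs_neg]; congr 1; push_cast; ring
  · refine (nd_le _ (-round (-x))).trans (le_of_eq ?_)
    rw [nd, ← abs_neg]; congr 1; push_cast; ring

lemma nd_abs_mul (x : ℝ) (h : ℤ) : nd (x * |h|) = nd (x * h) := by
  rcases abs_choice h with e | e <;> rw [e]
  push_cast; rw [mul_neg, nd_neg]

lemma nd_zero : nd 0 = 0 := by simp [nd]

lemma G_nonneg {Y : ℝ} (hY : 0 ≤ Y) (x : ℝ) : 0 ≤ G Y x :=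
  inv_nonneg.2 (add_nonneg (inv_nonneg.2 hY) (nd_nonneg x))

lemma G_le {Y : ℝ} (hY : 0 < Y) (x : ℝ) : G Y x ≤ Y := by
  have h := nd_nonneg x
  rw [G, inv_le_comm₀ (by positivity) hY]; linarith

lemma G_mono {Y Z : ℝ} (hY : 0 < Y) (h : Y ≤ Z) (x : ℝ) : G Y x ≤ G Z x := by
  have h1 := nd_nonneg x
  have hZ := hY.trans_le h
  have : Z⁻¹ ≤ Y⁻¹ := inv_anti₀ hY h
  exact inv_anti₀ (by positivity) (by linarith)

lemma G_zero (Y : ℝ) : G Y 0 = Y := by simp [G, nd_zero]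

lemma G_neg (Y x : ℝ) : G Y (-x) = G Y x := by rw [G, nd_neg, G]

lemma G_le_inv {Y : ℝ} (hY : 0 ≤ Y) {x : ℝ} (h : 0 < nd x) : G Y x ≤ (nd x)⁻¹ := by
  have := inv_nonneg.2 hY
  exact inv_anti₀ h (by linarith)

lemma norm_eF (x : ℝ) : ‖eF x‖ = 1 := by
  rw [eF, show (2 * Real.pi * Complex.I * x : ℂ) = ((2 * Real.pi * x : ℝ) : ℂ) * Complex.I by
    push_cast; ring]
  exact Complex.norm_exp_ofReal_mul_I _

lemma eF_add (x y : ℝ) : eF (x + y) = eF x * eF y := by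
  rw [eF, eF, eF, ← Complex.exp_add]; congr 1; push_cast; ring

lemma eF_int (z : ℤ) : eF z = 1 := by
  rw [eF, show (2 * Real.pi * Complex.I * ((z : ℝ) : ℂ) : ℂ) = z * (2 * Real.pi * Complex.I) by
    push_cast; ring]
  exact Complex.exp_int_mul_two_pi_mul_I z

lemma eF_conj (x : ℝ) : (starRingEnd ℂ) (eF x) = eF (-x) := by
  rw [eF, eF, ← Complex.exp_conj]; congr 1
  simp only [map_mul, Complex.conj_ofReal, Complex.conj_I, Complex.ofReal_neg, map_ofNat]
  ring

lemma norm_eF_sub_one (x : ℝ) : 4 * nd x ≤ ‖eF x - 1‖ := by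
  have h0 : eF x = eF (x - round x) := by
    conv_lhs => rw [← sub_add_cancel x (round x : ℝ), eF_add, eF_int, mul_one]
  set y := x - round x with hy
  have hy2 : |y| ≤ 1 / 2 := abs_sub_round x
  have h1 : eF y = Complex.exp (Complex.I * ((2 * Real.pi * y : ℝ) : ℂ)) := by
    rw [eF]; congr 1; push_cast; ring
  rw [h0, h1, Complex.norm_exp_I_mul_ofReal_sub_one, norm_mul]
  have h2 : 2 / Real.pi * |Real.pi * y| ≤ |Real.sin (Real.pi * y)| := by
    apply Real.mul_abs_le_abs_sin
    rw [abs_mul, abs_of_pos Real.pi_pos]; nlinarith [Real.pi_pos]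
  rw [abs_mul, abs_of_pos Real.pi_pos, ← mul_assoc, div_mul_cancel₀ _ Real.pi_pos.ne'] at h2
  have h3 : 2 * Real.pi * y / 2 = Real.pi * y := by ring
  rw [h3, Real.norm_eq_abs, Real.norm_eq_abs, abs_two]
  simp only [nd, ← hy]; linarith

/-- The geometric sum bound. -/
lemma geom_bound (f : ℤ → ℝ) (γ : ℝ) (hf : ∀ t, f (t + 1) - f t = γ) (a b : ℤ) (T : ℝ)
    (hT : 0 < T) (hab : (b : ℝ) ≤ a + T) :
    ‖∑ t ∈ Finset.Ico a b, eF (f t)‖ ≤ 2 * G T γ := by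
  set S := ∑ t ∈ Finset.Ico a b, eF (f t) with hS
  have hG := G_nonneg hT.le γ
  rcases le_or_gt b a with h | h
  · rw [hS, Finset.Ico_eq_empty (by omega), Finset.sum_empty, norm_zero]; positivity
  have h1 : ‖S‖ ≤ T := by
    refine (norm_sum_le _ _).trans ?_
    simp only [norm_eF, Finset.sum_const, Int.card_Ico, nsmul_eq_mul, mul_one]
    have : (((b - a).toNat : ℤ) : ℝ) = b - a := by
      rw [Int.toNat_of_nonneg (by omega)]; push_cast; ring
    have h' : (((b - a).toNat : ℕ) : ℝ) = b - a := by exact_mod_cast this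
    rw [h']; linarith
  have h2 : (eF γ - 1) * S = eF (f b) - eF (f a) := by
    have : ∀ t, (eF γ - 1) * eF (f t) = eF (f (t + 1)) - eF (f t) := fun t => by
      rw [← hf t, sub_mul, ← eF_add, one_mul]; congr 2; ring
    rw [hS, Finset.mul_sum, Finset.sum_congr rfl (fun t _ => this t)]
    clear_value S
    clear hab h1 hS
    obtain ⟨n, rfl⟩ := Int.le.dest h.le
    clear h
    induction n with
    | zero => simp
    | succ n ih =>
      push_cast
      rw [← add_assoc, ← Finset.insert_Ico_right_eq_Ico_add_one (by omega),
        Finset.sum_insert (by simp), ih]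
      ring
  have h3 : 4 * nd γ * ‖S‖ ≤ 2 := by
    calc 4 * nd γ * ‖S‖ ≤ ‖eF γ - 1‖ * ‖S‖ := by gcongr; exact norm_eF_sub_one γ
      _ = ‖eF (f b) - eF (f a)‖ := by rw [← norm_mul, h2]
      _ ≤ 2 := by
        refine (norm_sub_le _ _).trans ?_
        rw [norm_eF, norm_eF]; norm_num
  have h4 : (T⁻¹ + nd γ) * ‖S‖ ≤ 2 := by
    have : T⁻¹ * ‖S‖ ≤ 1 := by rw [inv_mul_le_iff₀ hT]; linarith
    nlinarith [nd_nonneg γ, norm_nonneg S]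
  have h5 : 0 < T⁻¹ + nd γ := add_pos_of_pos_of_nonneg (inv_pos.2 hT) (nd_nonneg _)
  rw [G, ← div_eq_mul_inv, le_div_iff₀ h5]; linarith

end

end VMI

/-! ### Weyl differencing -/

namespace VMI

section

/-- `WP j γ f`: the `j`-th iterated differences of `f` with steps `h₁, …, h_j` are affine functions
of slope `γ h₁ ⋯ h_j`. For a real polynomial of degree `j + 1` with leading coefficient `β` this
holds with `γ = (j + 1)! β`. -/
def WP : ℕ → ℝ → (ℤ → ℝ) → Prop
  | 0, γ, f => ∀ t, f (t + 1) - f t = γ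
  | j + 1, γ, f => ∀ h : ℤ, WP j (γ * h) (fun t => f (t + h) - f t)

/-- The Weyl sum `∑ G (T, γ h₁ ⋯ h_j)` over `|h_i| < T`. -/
noncomputable def H : ℕ → ℕ → ℝ → ℝ
  | 0, T, γ => G T γ
  | j + 1, T, γ => ∑ h ∈ Finset.Ioo (-(T : ℤ)) T, H j T (γ * h)

/-- The Weyl sum `∑ G (T, γ h₁ ⋯ h_j)` restricted to `1 ≤ h_i < T`. -/
noncomputable def Hp : ℕ → ℕ → ℝ → ℝ
  | 0, T, γ => G T γ
  | j + 1, T, γ => ∑ h ∈ Finset.Ico 1 T, Hp j T (γ * (h : ℕ))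

lemma H_nonneg (j T : ℕ) (γ : ℝ) : 0 ≤ H j T γ := by
  induction j generalizing γ with
  | zero => exact G_nonneg (Nat.cast_nonneg _) _
  | succ j ih => exact Finset.sum_nonneg fun _ _ => ih _

lemma Hp_nonneg (j T : ℕ) (γ : ℝ) : 0 ≤ Hp j T γ := by
  induction j generalizing γ with
  | zero => exact G_nonneg (Nat.cast_nonneg _) _
  | succ j ih => exact Finset.sum_nonneg fun _ _ => ih _

lemma H_neg (j T : ℕ) (γ : ℝ) : H j T (-γ) = H j T γ := by
  induction j generalizing γ with
  | zero => exact G_neg _ _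
  | succ j ih =>
    simp only [H]
    refine Finset.sum_congr rfl fun h _ => ?_
    rw [neg_mul, ih]

lemma card_Ioo_le (T : ℕ) : ((Finset.Ioo (-(T : ℤ)) T).card : ℝ) ≤ 2 * T := by
  rw [Int.card_Ioo]
  have : ((T : ℤ) - -(T : ℤ) - 1).toNat ≤ 2 * T := by omega
  exact_mod_cast this

lemma H_le (j T : ℕ) (hT : 0 < T) (γ : ℝ) : H j T γ ≤ (2 * T) ^ j * T := by
  induction j generalizing γ with
  | zero =>
    simp only [H, pow_zero, one_mul]
    exact G_le (by exact_mod_cast hT) γ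
  | succ j ih =>
    simp only [H]
    refine (Finset.sum_le_sum fun (h : ℤ) _ => ih (γ * h)).trans ?_
    rw [Finset.sum_const, nsmul_eq_mul, pow_succ]
    have := card_Ioo_le T
    calc _ ≤ (2 * (T : ℝ)) * ((2 * T) ^ j * T) := by gcongr
      _ = _ := by ring

lemma sum_Ioo_even (F : ℤ → ℝ) (hF : ∀ h, F (-h) = F h) (T : ℕ) (hT : 0 < T) :
    ∑ h ∈ Finset.Ioo (-(T : ℤ)) T, F h = F 0 + 2 * ∑ h ∈ Finset.Ico 1 T, F (h : ℕ) := by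
  obtain ⟨n, rfl⟩ : ∃ n, T = n + 1 := ⟨T - 1, by omega⟩
  clear hT
  induction n with
  | zero => simp [show Finset.Ioo (-1 : ℤ) 1 = {0} by decide]
  | succ n ih =>
    have h1 : Finset.Ioo (-((n + 1 + 1 : ℕ) : ℤ)) ((n + 1 + 1 : ℕ) : ℤ) =
        insert (-(n + 1 : ℤ)) (insert ((n + 1 : ℤ))
          (Finset.Ioo (-((n + 1 : ℕ) : ℤ)) ((n + 1 : ℕ) : ℤ))) := by
      ext x; simp only [Finset.mem_insert, Finset.mem_Ioo]; push_cast; omega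
    rw [h1, Finset.sum_insert, Finset.sum_insert, ih, Finset.sum_Ico_succ_top (show 1 ≤ n + 1 by omega), hF]
    · push_cast; ring
    · simp
    · simp; omega

/-- Terms with some `h_i = 0` contribute `O(T ^ j)`; the remaining ones come in sign classes. -/
lemma H_le_Hp (j T : ℕ) (hT : 0 < T) (γ : ℝ) :
    H j T γ ≤ 2 ^ j * Hp j T γ + j * 2 ^ j * T ^ j := by
  induction j generalizing γ with
  | zero => simp [H, Hp]
  | succ j ih =>
    simp only [H, Hp]
    rw [sum_Ioo_even _ _ T hT]
    · have h0 := H_le j T hT (γ * (0 : ℤ))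
      have h1 : ∑ h ∈ Finset.Ico 1 T, H j T (γ * ((h : ℕ) : ℤ)) ≤
          2 ^ j * ∑ h ∈ Finset.Ico 1 T, Hp j T (γ * (h : ℕ)) + T * (j * 2 ^ j * T ^ j) := by
        calc _ ≤ ∑ h ∈ Finset.Ico 1 T, (2 ^ j * Hp j T (γ * (h : ℕ)) + j * 2 ^ j * T ^ j) :=
              Finset.sum_le_sum fun h _ => by simpa using ih (γ * (h : ℕ))
          _ ≤ _ := by
            rw [Finset.sum_add_distrib, ← Finset.mul_sum, Finset.sum_const, nsmul_eq_mul,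
              Nat.card_Ico]
            gcongr
            exact_mod_cast Nat.sub_le _ _
      refine (add_le_add h0 (mul_le_mul_of_nonneg_left h1 zero_le_two)).trans ?_
      rw [mul_pow]; push_cast
      have : (0 : ℝ) ≤ 2 ^ j * T ^ j * T := by positivity
      rw [pow_succ, pow_succ]
      nlinarith
    · intro h; push_cast; rw [mul_neg, H_neg]

/-- The differencing step: the square is opened and the pairs are grouped by their difference `h`. -/
lemma weyl_sq (z : ℤ → ℂ) (a b : ℤ) (T : ℕ) (hab : b ≤ a + T) :
    ‖∑ t ∈ Finset.Ico a b, z t‖ ^ 2 ≤ ∑ h ∈ Finset.Ioo (-(T : ℤ)) T,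
      ‖∑ t ∈ Finset.Ico (max a (a - h)) (min b (b - h)), z (t + h) * (starRingEnd ℂ) (z t)‖ := by
  set S := ∑ t ∈ Finset.Ico a b, z t with hS
  have h1 : S * (starRingEnd ℂ) S = ∑ h ∈ Finset.Ioo (-(T : ℤ)) T,
      ∑ t ∈ Finset.Ico (max a (a - h)) (min b (b - h)), z (t + h) * (starRingEnd ℂ) (z t) := by
    rw [hS, map_sum, Finset.sum_mul_sum, Finset.sum_comm, Finset.sum_sigma', Finset.sum_sigma']
    refine Finset.sum_bij' (fun p _ => ⟨p.2 - p.1, p.1⟩) (fun p _ => ⟨p.2, p.2 + p.1⟩) ?_ ?_ ?_ ?_ ?_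
    · rintro ⟨t, s⟩ h
      simp only [Finset.mem_sigma, Finset.mem_Ico, Finset.mem_Ioo] at h ⊢
      omega
    · rintro ⟨t, s⟩ h
      simp only [Finset.mem_sigma, Finset.mem_Ico, Finset.mem_Ioo] at h ⊢
      omega
    · rintro ⟨t, s⟩ h; simp
    · rintro ⟨t, s⟩ h; simp
    · rintro ⟨t, s⟩ h; simp
  have h2 : ‖S‖ ^ 2 = ‖S * (starRingEnd ℂ) S‖ := by
    rw [norm_mul, RCLike.norm_conj, sq]
  rw [h2, h1]
  exact norm_sum_le _ _

/-- Weyl's inequality. -/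
lemma weyl (j : ℕ) (γ : ℝ) (f : ℤ → ℝ) (hf : WP j γ f) (a b : ℤ) (T : ℕ) (hT : 0 < T)
    (hab : b ≤ a + T) :
    ‖∑ t ∈ Finset.Ico a b, eF (f t)‖ ^ (2 ^ j) * (2 * T) ^ (j + 1) ≤
      2 * (2 * T) ^ (2 ^ j) * H j T γ := by
  induction j generalizing γ f a b with
  | zero =>
    have := geom_bound f γ hf a b T (by exact_mod_cast hT) (by exact_mod_cast hab)
    simp only [pow_zero, pow_one, zero_add, H]
    have hT' : (0 : ℝ) ≤ 2 * T := by positivity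
    nlinarith
  | succ j ih =>
    set S := fun h : ℤ => ∑ t ∈ Finset.Ico (max a (a - h)) (min b (b - h)),
      eF (f (t + h) - f t) with hS
    have h1 : ‖∑ t ∈ Finset.Ico a b, eF (f t)‖ ^ 2 ≤
        ∑ h ∈ Finset.Ioo (-(T : ℤ)) T, ‖S h‖ := by
      refine (weyl_sq (fun t => eF (f t)) a b T hab).trans (le_of_eq ?_)
      refine Finset.sum_congr rfl fun h _ => ?_
      rw [hS]; congr 1
      refine Finset.sum_congr rfl fun t _ => ?_
      rw [eF_conj, ← eF_add, sub_eq_add_neg]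
    have h2 : ∀ h : ℤ, ‖S h‖ ^ (2 ^ j) * (2 * T) ^ (j + 1) ≤
        2 * (2 * T) ^ (2 ^ j) * H j T (γ * h) := fun h =>
      ih (γ * h) _ (hf h) _ _ (by omega)
    obtain ⟨m, hm⟩ : ∃ m, 2 ^ j = m + 1 := ⟨2 ^ j - 1, by have := Nat.one_le_two_pow (n := j); omega⟩
    have h3 : (∑ h ∈ Finset.Ioo (-(T : ℤ)) T, ‖S h‖) ^ (2 ^ j) ≤
        (2 * T) ^ m * ∑ h ∈ Finset.Ioo (-(T : ℤ)) T, ‖S h‖ ^ (2 ^ j) := by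
      rw [hm]
      refine (pow_sum_le_card_mul_sum_pow (fun _ _ => norm_nonneg _) m).trans ?_
      gcongr
      exact card_Ioo_le T
    have hT' : (0 : ℝ) < 2 * T := by positivity
    calc ‖∑ t ∈ Finset.Ico a b, eF (f t)‖ ^ (2 ^ (j + 1)) * (2 * (T : ℝ)) ^ (j + 1 + 1)
        = (‖∑ t ∈ Finset.Ico a b, eF (f t)‖ ^ 2) ^ (2 ^ j) * (2 * (T : ℝ)) ^ (j + 1 + 1) := by
          rw [← pow_mul]; congr 2; ring
      _ ≤ (∑ h ∈ Finset.Ioo (-(T : ℤ)) T, ‖S h‖) ^ (2 ^ j) * (2 * (T : ℝ)) ^ (j + 1 + 1) := by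
          gcongr
      _ ≤ ((2 * T) ^ m * ∑ h ∈ Finset.Ioo (-(T : ℤ)) T, ‖S h‖ ^ (2 ^ j)) *
            (2 * (T : ℝ)) ^ (j + 1 + 1) := by gcongr
      _ = (2 * T) ^ (2 ^ j) *
            ∑ h ∈ Finset.Ioo (-(T : ℤ)) T, (‖S h‖ ^ (2 ^ j) * (2 * (T : ℝ)) ^ (j + 1)) := by
          rw [← Finset.sum_mul, hm]; ring
      _ ≤ (2 * T) ^ (2 ^ j) *
            ∑ h ∈ Finset.Ioo (-(T : ℤ)) T, 2 * (2 * T) ^ (2 ^ j) * H j T (γ * h) := by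
          exact mul_le_mul_of_nonneg_left (Finset.sum_le_sum fun h _ => h2 h) (by positivity)
      _ = _ := by
          rw [← Finset.mul_sum, H, pow_succ 2 j, mul_two, pow_add]; ring

/-- Weyl's inequality with a free parameter `l`, which stands for the relative size of the sum and
avoids roots; its optimal value makes the two terms equal. -/
lemma weyl_lam (j : ℕ) (γ : ℝ) (f : ℤ → ℝ) (hf : WP j γ f) (a b : ℤ) (T : ℕ) (hT : 0 < T)
    (hab : b ≤ a + T) (l : ℝ) (hl : 0 < l) :
    ‖∑ t ∈ Finset.Ico a b, eF (f t)‖ * T ^ j ≤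
      2 ^ (2 ^ j) * (l * T ^ (j + 1) + (l⁻¹) ^ (2 ^ j - 1) * H j T γ) := by
  set S := ‖∑ t ∈ Finset.Ico a b, eF (f t)‖ with hS
  have hw := weyl j γ f hf a b T hT hab
  rw [← hS] at hw
  have hH := H_nonneg j T γ
  have hT' : (0 : ℝ) < T := by exact_mod_cast hT
  have hS0 : 0 ≤ S := norm_nonneg _
  obtain ⟨m, hm⟩ : ∃ m, 2 ^ j = m + 1 := ⟨2 ^ j - 1, by have := Nat.one_le_two_pow (n := j); omega⟩
  rw [hm] at hw ⊢
  rw [Nat.add_sub_cancel]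
  have h2 : (1 : ℝ) ≤ 2 ^ (m + 1) := one_le_pow₀ (by norm_num)
  -- For `S ≤ l T` the first term suffices; otherwise `S ≤ (S / (l T)) ^ (2 ^ j - 1) S`, and the
  -- power of `S` on the right is bounded by Weyl's inequality.
  rcases le_or_gt S (l * T) with h | h
  · have : S * T ^ j ≤ l * T ^ (j + 1) := by
      calc S * T ^ j ≤ l * T * T ^ j := by gcongr
        _ = _ := by ring
    have h3 : 0 ≤ (l⁻¹) ^ m * H j T γ := by positivity
    have h4 : 0 ≤ l * (T : ℝ) ^ (j + 1) := by positivity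
    nlinarith
  · have h5 : (l * T) ^ m ≤ S ^ m := by gcongr
    have h6 : S * (l * T) ^ m * (2 * T) ^ (j + 1) ≤ 2 * (2 * T) ^ (m + 1) * H j T γ := by
      refine le_trans ?_ hw
      gcongr
      rw [pow_succ']; gcongr
    have h7 : S * T ^ j * (2 : ℝ) ^ (j + 1) ≤ 2 * 2 ^ (m + 1) * ((l⁻¹) ^ m * H j T γ) := by
      have hpos : 0 < l ^ m * (T : ℝ) ^ (m + 1) := by positivity
      refine le_of_mul_le_mul_left ?_ hpos
      calc l ^ m * (T : ℝ) ^ (m + 1) * (S * T ^ j * (2 : ℝ) ^ (j + 1))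
          = S * (l * T) ^ m * (2 * T) ^ (j + 1) := by rw [mul_pow, mul_pow]; ring
        _ ≤ 2 * (2 * T) ^ (m + 1) * H j T γ := h6
        _ = l ^ m * (T : ℝ) ^ (m + 1) * (2 * 2 ^ (m + 1) * ((l⁻¹) ^ m * H j T γ)) := by
          rw [inv_pow, mul_pow]; field_simp
    have h8 : (2 : ℝ) ≤ 2 ^ (j + 1) := by
      rw [pow_succ]; have : (1 : ℝ) ≤ 2 ^ j := one_le_pow₀ (by norm_num)
      linarith
    have h9 : 0 ≤ S * (T : ℝ) ^ j := by positivity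
    have h10 : 0 ≤ l * (T : ℝ) ^ (j + 1) := by positivity
    have h11 : 0 ≤ (2 : ℝ) ^ (m + 1) * (l * (T : ℝ) ^ (j + 1)) := by positivity
    nlinarith

open Polynomial in
/-- Differencing lowers the degree by one and multiplies the leading coefficient by `(j + 1) h`. -/
lemma coeff_diff (p : ℝ[X]) (j : ℕ) (hp : p.natDegree ≤ j + 1) (h : ℝ) :
    (taylor h p - p).natDegree ≤ j ∧ (taylor h p - p).coeff j = (j + 1) * p.coeff (j + 1) * h := by
  have hc : ∀ n, (taylor h p).coeff n = ∑ i ∈ Finset.range (j + 2),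
      (i.choose n : ℝ) * p.coeff i * h ^ (i - n) := fun n => by
    rw [taylor_coeff, hasseDeriv_apply, sum_over_range' _ _ (j + 2) (by omega), eval_finsetSum]
    · simp only [eval_monomial]
    · simp
  constructor
  · rw [natDegree_le_iff_coeff_eq_zero]
    intro n hn
    rw [coeff_sub, hc]
    rcases Nat.eq_or_lt_of_le (Nat.succ_le_of_lt hn) with e | e
    · rw [← Nat.succ_eq_add_one] at hp
      subst e
      rw [Finset.sum_range_succ, Finset.sum_eq_zero]
      · simp
      · intro i hi
        rw [Finset.mem_range] at hi
        simp [Nat.choose_eq_zero_of_lt hi]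
    · rw [Finset.sum_eq_zero, coeff_eq_zero_of_natDegree_lt (by omega), sub_zero]
      intro i hi
      rw [Finset.mem_range] at hi
      simp [Nat.choose_eq_zero_of_lt (show i < n by omega)]
  · rw [coeff_sub, hc, Finset.sum_range_succ, Finset.sum_range_succ, Finset.sum_eq_zero]
    · simp
    · intro i hi
      rw [Finset.mem_range] at hi
      simp [Nat.choose_eq_zero_of_lt hi]

open Polynomial in
/-- Polynomials satisfy the hypothesis of Weyl's inequality. -/
lemma WP_poly (j : ℕ) (p : ℝ[X]) (hp : p.natDegree ≤ j + 1) :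
    WP j ((j + 1).factorial * p.coeff (j + 1)) (fun t => p.eval (t : ℝ)) := by
  induction j generalizing p with
  | zero =>
    intro t
    rw [eq_X_add_C_of_natDegree_le_one hp]
    simp
    ring
  | succ j ih =>
    intro h
    obtain ⟨h1, h2⟩ := coeff_diff p (j + 1) hp h
    have := ih (taylor (h : ℝ) p - p) h1
    rw [h2] at this
    convert this using 1
    · rw [Nat.factorial_succ (j + 1)]; push_cast; ring
    · ext t; simp [taylor_eval, add_comm]

end

end VMI

/-! ### Sums over multiples of `α` -/

namespace VMI

section

lemma harm_le (N : ℕ) : ∑ j ∈ Finset.Icc 1 N, ((j : ℝ))⁻¹ ≤ 1 + Real.log N := by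
  have h := harmonic_le_one_add_log N
  rw [harmonic_eq_sum_Icc] at h
  push_cast at h
  exact h

lemma nd_eq_min (x : ℝ) : nd x = min (Int.fract x) (1 - Int.fract x) := abs_sub_round_eq_min x

/-- Sums of `G` over well-spaced points modulo one. -/
lemma spaced_sum (s : Finset ℕ) (x : ℕ → ℝ) (q : ℕ) (hq : 0 < q)
    (hx : ∀ n ∈ s, ∀ m ∈ s, n ≠ m → 1 / (2 * q : ℝ) ≤ nd (x n - x m)) (Y : ℝ) (hY : 0 < Y) :
    ∑ n ∈ s, G Y (x n) ≤ 2 * Y + 4 * q * (1 + Real.log (2 * q)) := by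
  -- Modulo one, each of the `2 q` cells of length `1 / (2 q)` contains at most one point.
  set φ : ℕ → ℕ := fun n => ⌊2 * q * Int.fract (x n)⌋₊ with hφ
  have hq' : (0 : ℝ) < 2 * q := by positivity
  have hfl : ∀ n, (φ n : ℝ) ≤ 2 * q * Int.fract (x n) := fun n =>
    Nat.floor_le (mul_nonneg hq'.le (Int.fract_nonneg _))
  have hfl2 : ∀ n, 2 * q * Int.fract (x n) < φ n + 1 := fun n => Nat.lt_floor_add_one _
  have hinj : Set.InjOn φ s := by
    intro n hn m hm h
    by_contra hne
    have h1 := hx n hn m hm hne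
    have h2 := nd_le (x n - x m) (⌊x n⌋ - ⌊x m⌋)
    have h3 : |Int.fract (x n) - Int.fract (x m)| < 1 / (2 * q) := by
      have hab : |Int.fract (x n) - Int.fract (x m)| * (2 * q) =
          |(Int.fract (x n) - Int.fract (x m)) * (2 * q)| := by rw [abs_mul, abs_of_pos hq']
      rw [lt_div_iff₀ hq', hab, abs_lt]
      have a1 := hfl n; have a2 := hfl m; have a3 := hfl2 n; have a4 := hfl2 m
      have h' : (φ n : ℝ) = φ m := by exact_mod_cast h
      constructor <;> nlinarith
    have h4 : x n - x m - ((⌊x n⌋ - ⌊x m⌋ : ℤ) : ℝ) = Int.fract (x n) - Int.fract (x m) := by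
      rw [Int.fract, Int.fract]; push_cast; ring
    rw [h4] at h2
    linarith
  -- A point in an extreme cell is bounded by `Y`, the others by the reciprocals of their distances
  -- to both ends of the unit interval.
  set g : ℕ → ℝ := fun j => (if j = 0 then Y else 0) + (if j = 2 * q - 1 then Y else 0) +
    2 * q * ((j : ℝ))⁻¹ + 2 * q * (((2 * q - 1 - j : ℕ) : ℝ))⁻¹ with hg
  have hg0 : ∀ j, 0 ≤ g j := fun j => by
    simp only [hg]; split_ifs <;> positivity
  have hlt : ∀ n, φ n < 2 * q := fun n => by
    have h1 := hfl n
    have h2 := Int.fract_lt_one (x n)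
    have : (φ n : ℝ) < 2 * q := by nlinarith
    exact_mod_cast this
  have hle : ∀ n ∈ s, G Y (x n) ≤ g (φ n) := by
    intro n _
    have e1 : 0 ≤ 2 * q * ((φ n : ℝ))⁻¹ := by positivity
    have e2 : 0 ≤ 2 * q * (((2 * q - 1 - φ n : ℕ) : ℝ))⁻¹ := by positivity
    by_cases h0 : φ n = 0
    · have := G_le hY (x n)
      simp only [hg, if_pos h0]
      split_ifs <;> linarith
    by_cases h1 : φ n = 2 * q - 1
    · have := G_le hY (x n)
      simp only [hg, if_pos h1]
      split_ifs <;> linarith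
    simp only [hg, if_neg h0, if_neg h1, zero_add]
    have hl := hlt n
    have p1 : (0 : ℝ) < φ n := by exact_mod_cast Nat.pos_of_ne_zero h0
    have p2 : (0 : ℝ) < ((2 * q - 1 - φ n : ℕ) : ℝ) := by
      exact_mod_cast (show 0 < 2 * q - 1 - φ n by omega)
    have p3 : ((2 * q - 1 - φ n : ℕ) : ℝ) = 2 * q - 1 - φ n := by
      rw [Nat.cast_sub (by omega), Nat.cast_sub (by omega)]; push_cast; ring
    have hnd := nd_eq_min (x n)
    rcases min_choice (Int.fract (x n)) (1 - Int.fract (x n)) with h | h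
    · rw [h] at hnd
      have : (φ n : ℝ) / (2 * q) ≤ nd (x n) := by
        rw [hnd, div_le_iff₀ hq']; linarith [hfl n]
      have h5 := G_le_inv hY.le (x := x n) (lt_of_lt_of_le (by positivity) this)
      have h6 := inv_anti₀ (by positivity) this
      rw [inv_div, div_eq_mul_inv] at h6
      linarith
    · rw [h] at hnd
      have : ((2 * q - 1 - φ n : ℕ) : ℝ) / (2 * q) ≤ nd (x n) := by
        rw [hnd, div_le_iff₀ hq', p3]; linarith [hfl2 n]
      have h5 := G_le_inv hY.le (x := x n) (lt_of_lt_of_le (by positivity) this)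
      have h6 := inv_anti₀ (by positivity) this
      rw [inv_div, div_eq_mul_inv] at h6
      linarith
  have hharm : ∑ j ∈ Finset.range (2 * q), ((j : ℝ))⁻¹ ≤ 1 + Real.log (2 * q) := by
    have := harm_le (2 * q)
    push_cast at this
    refine le_trans ?_ this
    rw [Finset.range_eq_Ico, Finset.sum_eq_sum_Ico_succ_bot (by omega)]
    simp only [Nat.cast_zero, inv_zero, zero_add]
    refine Finset.sum_le_sum_of_subset_of_nonneg ?_ (fun _ _ _ => by positivity)
    intro j hj
    simp only [Finset.mem_Ico, Finset.mem_Icc] at hj ⊢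
    omega
  calc ∑ n ∈ s, G Y (x n) ≤ ∑ n ∈ s, g (φ n) := Finset.sum_le_sum hle
    _ = ∑ j ∈ s.image φ, g j := (Finset.sum_image hinj).symm
    _ ≤ ∑ j ∈ Finset.range (2 * q), g j := by
      refine Finset.sum_le_sum_of_subset_of_nonneg ?_ (fun _ _ _ => hg0 _)
      intro j hj
      obtain ⟨n, _, rfl⟩ := Finset.mem_image.1 hj
      exact Finset.mem_range.2 (hlt n)
    _ = 2 * Y + 2 * q * ∑ j ∈ Finset.range (2 * q), ((j : ℝ))⁻¹ +
        2 * q * ∑ j ∈ Finset.range (2 * q), (((2 * q - 1 - j : ℕ) : ℝ))⁻¹ := by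
      simp only [hg, Finset.sum_add_distrib, Finset.mul_sum, Finset.sum_ite_eq', Finset.mem_range]
      rw [if_pos (by omega), if_pos (by omega)]; ring
    _ ≤ _ := by
      rw [Finset.sum_range_reflect (fun j : ℕ => ((j : ℝ))⁻¹)]
      nlinarith

/-- The multiples of `α` by nonzero integers of size at most `q / 2` stay away from the integers, since
`a m / q` is not an integer. -/
lemma spacing (α : ℝ) (q : ℕ) (hq : 0 < q) (h : HasRatApprox α q) (m : ℤ) (hm : m ≠ 0)
    (hmq : 2 * |m| ≤ q) : 1 / (2 * q : ℝ) ≤ nd (α * m) := by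
  obtain ⟨a, hco, ha⟩ := h
  have hq' : (0 : ℝ) < q := by exact_mod_cast hq
  set z := round (α * m) with hz
  have h1 : a * m - z * q ≠ 0 := by
    intro h0
    have hd : (q : ℤ) ∣ a * m := ⟨z, by linarith⟩
    have hd2 : (q : ℤ) ∣ m := by
      refine Int.dvd_of_dvd_mul_right_of_gcd_one hd ?_
      rw [Int.gcd_comm]; exact hco
    have := Int.le_of_dvd (abs_pos.2 hm) ((dvd_abs _ _).2 hd2)
    have := abs_pos.2 hm
    omega
  have h2 : (1 : ℝ) ≤ |(a * m - z * q : ℝ)| := by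
    exact_mod_cast Int.one_le_abs h1
  have h3 : |α * m - a * m / q| ≤ 1 / (2 * q) := by
    rw [show α * m - a * m / q = (α - a / q) * m by ring, abs_mul]
    have hm' : |(m : ℝ)| ≤ q / 2 := by
      have : 2 * |(m : ℝ)| ≤ q := by exact_mod_cast hmq
      linarith
    calc |α - a / q| * |(m : ℝ)| ≤ 1 / (q : ℝ) ^ 2 * (q / 2) := by gcongr
      _ = _ := by field_simp
  have h4 : 1 / (q : ℝ) ≤ |(a * m / q - z : ℝ)| := by
    rw [show (a * m / q - z : ℝ) = (a * m - z * q) / q by field_simp, abs_div, abs_of_pos hq']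
    gcongr
  have h5 : |(a * m / q - z : ℝ)| ≤ |α * m - z| + |α * m - a * m / q| := by
    have := abs_sub_le (a * m / q : ℝ) (α * m) z
    rw [abs_sub_comm (a * m / q : ℝ) (α * m)] at this
    linarith
  have h6 : 1 / (q : ℝ) = 1 / (2 * q) + 1 / (2 * q) := by field_simp; norm_num
  have h7 : nd (α * m) = |α * m - z| := rfl
  rw [h7]; linarith

/-- The basic estimate on `∑ min (X/n, 1/‖α n‖)`. -/
lemma sum_G (α : ℝ) (q : ℕ) (hq : 0 < q) (h : HasRatApprox α q) (X : ℝ) (hX : 0 < X) (N : ℕ)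
    (l : ℝ) (hl1 : 1 + Real.log (2 * q) ≤ l) (hl2 : 1 + Real.log N ≤ l) :
    ∑ n ∈ Finset.Icc 1 N, G (X / n) (α * n) ≤ 20 * (X / q + N + q) * l := by
  -- In a block of length about `q / 2` the points `α n` are well spaced. The first block, where
  -- `X / n` may be large, contains no point within `1 / (2 q)` of an integer.
  set b := (q + 1) / 2 with hb
  have hb1 : 0 < b := by omega
  have hbq : (q : ℝ) ≤ 2 * b := by exact_mod_cast (show q ≤ 2 * b by omega)
  have hb1' : (0 : ℝ) < b := by exact_mod_cast hb1
  have hq' : (0 : ℝ) < q := by exact_mod_cast hq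
  have hq1 : (1 : ℝ) ≤ q := by exact_mod_cast hq
  set Λ := 1 + Real.log (2 * q) with hΛ
  have hΛ1 : 1 ≤ Λ := by
    have := Real.log_nonneg (show (1 : ℝ) ≤ 2 * q by linarith)
    linarith
  set s : ℕ → Finset ℕ := fun k => (Finset.Icc 1 N).filter (fun n => n / b = k) with hs
  have hsp : ∀ k, ∀ n ∈ s k, ∀ m ∈ s k, n ≠ m → 1 / (2 * q : ℝ) ≤ nd (α * n - α * m) := by
    intro k n hn m hm hne
    simp only [hs, Finset.mem_filter] at hn hm
    have e1 := Nat.div_add_mod n b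
    have e2 := Nat.div_add_mod m b
    have e3 := Nat.mod_lt n hb1
    have e4 := Nat.mod_lt m hb1
    rw [hn.2] at e1
    rw [hm.2] at e2
    have := spacing α q hq h ((n : ℤ) - m) (by omega)
      (by rcases abs_cases ((n : ℤ) - m) with h | h <;> omega)
    rw [← mul_sub]
    exact_mod_cast this
  have h0 : ∑ n ∈ s 0, G (X / n) (α * n) ≤ 16 * q * Λ := by
    have h1 : ∀ n ∈ s 0, G (X / n) (α * n) ≤ 2 * G (2 * q) (α * n) := by
      intro n hn
      simp only [hs, Finset.mem_filter, Finset.mem_Icc] at hn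
      have hn0 : (0 : ℝ) < n := by exact_mod_cast (show 0 < n by omega)
      have e0 := (Nat.div_eq_zero_iff).1 hn.2
      have e1 : (1 : ℝ) / (2 * q) ≤ nd (α * n) := by
        have := spacing α q hq h (n : ℤ) (by omega) (by rw [abs_of_nonneg] <;> omega)
        exact_mod_cast this
      have e2 : (0 : ℝ) < 1 / (2 * q) := by positivity
      refine (G_le_inv (by positivity) (e2.trans_le e1)).trans ?_
      rw [G, ← div_eq_mul_inv, ← one_div, div_le_div_iff₀ (e2.trans_le e1) (by
        rw [one_div] at e2; linarith [nd_nonneg (α * n)])]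
      rw [one_div] at e1 e2
      linarith
    refine (Finset.sum_le_sum h1).trans ?_
    rw [← Finset.mul_sum]
    have := spaced_sum (s 0) (fun n => α * n) q hq (hsp 0) (2 * q) (by positivity)
    rw [← hΛ] at this
    nlinarith
  have hk : ∀ k ∈ Finset.Icc 1 (N / b), ∑ n ∈ s k, G (X / n) (α * n) ≤
      2 * (X / b) * ((k : ℝ))⁻¹ + 4 * q * Λ := by
    intro k hk
    rw [Finset.mem_Icc] at hk
    have hk0 : (0 : ℝ) < k := by exact_mod_cast (show 0 < k by omega)
    have h1 : ∀ n ∈ s k, G (X / n) (α * n) ≤ G (X / (b * k)) (α * n) := by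
      intro n hn
      simp only [hs, Finset.mem_filter, Finset.mem_Icc] at hn
      have hn0 : (0 : ℝ) < n := by exact_mod_cast (show 0 < n by omega)
      apply G_mono (by positivity)
      have : b * k ≤ n := by rw [← hn.2]; exact Nat.mul_div_le _ _
      have : (b * k : ℝ) ≤ n := by exact_mod_cast this
      gcongr
    refine (Finset.sum_le_sum h1).trans ?_
    refine (spaced_sum (s k) (fun n => α * n) q hq (hsp k) (X / (b * k)) (by positivity)).trans ?_
    rw [← hΛ]
    apply le_of_eq
    field_simp
  have hsum : ∑ n ∈ Finset.Icc 1 N, G (X / n) (α * n) =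
      ∑ k ∈ Finset.range (N / b + 1), ∑ n ∈ s k, G (X / n) (α * n) := by
    rw [Finset.sum_fiberwise_of_maps_to]
    intro n hn
    rw [Finset.mem_Icc] at hn
    rw [Finset.mem_range]
    exact Nat.lt_succ_of_le (Nat.div_le_div_right hn.2)
  have hNb : ((N / b : ℕ) : ℝ) ≤ N / b := Nat.cast_div_le
  have hlog : ∑ k ∈ Finset.Icc 1 (N / b), ((k : ℝ))⁻¹ ≤ l := by
    refine le_trans ?_ ((harm_le N).trans hl2)
    refine Finset.sum_le_sum_of_subset_of_nonneg ?_ (fun _ _ _ => by positivity)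
    exact Finset.Icc_subset_Icc_right (Nat.div_le_self _ _)
  rw [hsum, Finset.range_eq_Ico, Finset.sum_eq_sum_Ico_succ_bot (Nat.succ_pos _), zero_add]
  have hIco : Finset.Ico 1 (N / b + 1) = Finset.Icc 1 (N / b) := by
    ext; simp only [Finset.mem_Ico, Finset.mem_Icc]; omega
  rw [hIco]
  have h2 := Finset.sum_le_sum hk
  rw [Finset.sum_add_distrib, ← Finset.mul_sum, Finset.sum_const, Nat.card_Icc,
    Nat.add_sub_cancel, nsmul_eq_mul] at h2
  have h3 : X / b ≤ 2 * (X / q) := by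
    rw [div_le_iff₀ hb1']
    calc X = X / q * q := by field_simp
      _ ≤ X / q * (2 * b) := by gcongr
      _ = _ := by ring
  have h4 : ((N / b : ℕ) : ℝ) * (4 * q * Λ) ≤ 8 * N * Λ := by
    calc ((N / b : ℕ) : ℝ) * (4 * q * Λ) ≤ N / b * (4 * (2 * b) * Λ) := by gcongr
      _ = _ := by field_simp; ring
  have h5 : 2 * (X / b) * ∑ k ∈ Finset.Icc 1 (N / b), ((k : ℝ))⁻¹ ≤ 2 * (2 * (X / q)) * l := by
    gcongr
  have h6 : (N : ℝ) * Λ ≤ N * l := by gcongr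
  have h7 : (q : ℝ) * Λ ≤ q * l := by gcongr
  have h8 : 0 ≤ X / q * l := by
    have : 0 ≤ X / q := by positivity
    have : 0 ≤ l := by linarith
    positivity
  have h9 : 0 ≤ (N : ℝ) * l := mul_nonneg (Nat.cast_nonneg _) (by linarith)
  have h10 : 0 ≤ (q : ℝ) * l := mul_nonneg (Nat.cast_nonneg _) (by linarith)
  nlinarith

end

end VMI

/-! ### Divisor functions and Dirichlet convolution -/

namespace VMI

section

/-- The `j`-fold divisor function `τ_j`, as a real-valued arithmetic function. -/
noncomputable def D (j : ℕ) : ArithmeticFunction ℝ := (ArithmeticFunction.zeta : ArithmeticFunction ℝ) ^ j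

lemma zeta_apply' {n : ℕ} (hn : n ≠ 0) : ((ArithmeticFunction.zeta : ArithmeticFunction ℝ)) n = 1 := by
  simp [ArithmeticFunction.natCoe_apply, hn]

lemma mul_nonneg' {f g : ArithmeticFunction ℝ} (hf : ∀ n, 0 ≤ f n) (hg : ∀ n, 0 ≤ g n) (n : ℕ) :
    0 ≤ (f * g) n := by
  rw [ArithmeticFunction.mul_apply]
  exact Finset.sum_nonneg fun x _ => mul_nonneg (hf _) (hg _)

lemma abs_mul_le' {f g f' g' : ArithmeticFunction ℝ} (hf : ∀ n, |f n| ≤ f' n)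
    (hg : ∀ n, |g n| ≤ g' n) (n : ℕ) : |(f * g) n| ≤ (f' * g') n := by
  rw [ArithmeticFunction.mul_apply, ArithmeticFunction.mul_apply]
  refine (Finset.abs_sum_le_sum_abs _ _).trans (Finset.sum_le_sum fun x _ => ?_)
  rw [abs_mul]
  exact mul_le_mul (hf _) (hg _) (abs_nonneg _) ((abs_nonneg _).trans (hf _))

lemma mul_le' {f g f' g' : ArithmeticFunction ℝ} (hf0 : ∀ n, 0 ≤ f n) (hg0 : ∀ n, 0 ≤ g n)
    (hf : ∀ n, f n ≤ f' n) (hg : ∀ n, g n ≤ g' n) (n : ℕ) : (f * g) n ≤ (f' * g') n := by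
  have := abs_mul_le' (f := f) (g := g) (f' := f') (g' := g')
    (fun n => by rw [abs_of_nonneg (hf0 n)]; exact hf n)
    (fun n => by rw [abs_of_nonneg (hg0 n)]; exact hg n) n
  exact (le_abs_self _).trans this

lemma zeta_nonneg (n : ℕ) : 0 ≤ (ArithmeticFunction.zeta : ArithmeticFunction ℝ) n := by
  rw [ArithmeticFunction.natCoe_apply]; exact Nat.cast_nonneg _

lemma D_nonneg (j n : ℕ) : 0 ≤ D j n := by
  induction j generalizing n with
  | zero => simp only [D, pow_zero, ArithmeticFunction.one_apply]; split_ifs <;> norm_num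
  | succ j ih =>
    rw [D, pow_succ]
    exact mul_nonneg' ih zeta_nonneg n

lemma D_succ (j n : ℕ) : D (j + 1) n = ∑ c ∈ n.divisors, D j c := by
  rw [D, pow_succ, ← D]
  exact ArithmeticFunction.coe_mul_zeta_apply

open scoped Pointwise in
/-- The divisor functions are submultiplicative, without any coprimality assumption. -/
lemma D_submul (j a b : ℕ) : D j (a * b) ≤ D j a * D j b := by
  induction j generalizing a b with
  | zero =>
    simp only [D, pow_zero, ArithmeticFunction.one_apply]
    split_ifs <;> simp_all
  | succ j ih =>
    rw [D_succ, D_succ, D_succ, Finset.sum_mul_sum, Nat.divisors_mul, ← Finset.sum_product']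
    have : (a.divisors.product b.divisors).image (fun p => p.1 * p.2) =
        a.divisors * b.divisors := rfl
    rw [← this]
    calc _ ≤ ∑ p ∈ a.divisors.product b.divisors, D j (p.1 * p.2) := by
            rw [← Finset.sum_fiberwise_of_maps_to (s := a.divisors.product b.divisors)
              (t := (a.divisors.product b.divisors).image (fun p => p.1 * p.2))
              (g := fun p => p.1 * p.2) (fun p hp => Finset.mem_image_of_mem _ hp)]
            refine Finset.sum_le_sum fun c hc => ?_
            obtain ⟨p, hp, rfl⟩ := Finset.mem_image.1 hc
            refine Finset.single_le_sum (f := fun p : ℕ × ℕ => D j (p.1 * p.2))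
              (fun _ _ => D_nonneg _ _) ?_
            exact Finset.mem_filter.2 ⟨hp, rfl⟩
      _ ≤ _ := Finset.sum_le_sum fun p _ => ih _ _

/-- `τ_i τ_j ≤ τ_{ij}`. -/
lemma D_mul_D (i j n : ℕ) : D i n * D j n ≤ D (i * j) n := by
  induction i generalizing n with
  | zero =>
    simp only [D, pow_zero, ArithmeticFunction.one_apply, zero_mul]
    split_ifs with h
    · subst h
      have : ∀ j, D j 1 = 1 := fun j => by
        induction j with
        | zero => simp [D]
        | succ j ih => rw [D_succ]; simpa using ih
      rw [← D, this]; norm_num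
    · simp
  | succ i ih =>
    rcases Nat.eq_zero_or_pos n with rfl | hn
    · simp
    have e : D ((i + 1) * j) = D (i * j) * D j := by
      simp only [D, ← pow_add]; congr 1; ring
    have e2 : D (i + 1) = D i * ArithmeticFunction.zeta := by simp only [D, pow_succ]
    rw [e, e2, ArithmeticFunction.mul_apply, ArithmeticFunction.mul_apply, Finset.sum_mul]
    refine Finset.sum_le_sum fun x hx => ?_
    rw [Nat.mem_divisorsAntidiagonal] at hx
    have hx2 : x.2 ≠ 0 := by rintro h; rw [h] at hx; simp at hx; omega
    rw [zeta_apply' hx2, mul_one, ← hx.1]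
    calc D i x.1 * D j (x.1 * x.2) ≤ D i x.1 * (D j x.1 * D j x.2) :=
          mul_le_mul_of_nonneg_left (D_submul _ _ _) (D_nonneg _ _)
      _ = (D i x.1 * D j x.1) * D j x.2 := by ring
      _ ≤ _ := mul_le_mul_of_nonneg_right (ih _) (D_nonneg _ _)

/-- Summing a Dirichlet convolution against a weight. -/
lemma sum_conv {E : Type*} [AddCommGroup E] [Module ℝ E] (f g : ArithmeticFunction ℝ) (F : ℕ → E)
    (N : ℕ) : ∑ n ∈ Finset.Icc 1 N, (f * g) n • F n =
      ∑ k ∈ Finset.Icc 1 N, f k • ∑ m ∈ Finset.Icc 1 (N / k), g m • F (k * m) := by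
  simp only [ArithmeticFunction.mul_apply, Finset.sum_smul, Finset.smul_sum]
  rw [Finset.sum_sigma', Finset.sum_sigma']
  refine Finset.sum_bij' (fun p _ => ⟨p.2.1, p.2.2⟩) (fun p _ => ⟨p.1 * p.2, (p.1, p.2)⟩)
    ?_ ?_ ?_ ?_ ?_
  · rintro ⟨n, a, b⟩ h
    simp only [Finset.mem_sigma, Finset.mem_Icc, Nat.mem_divisorsAntidiagonal] at h ⊢
    obtain ⟨⟨h1, h2⟩, rfl, h3⟩ := h
    have ha : 0 < a := Nat.pos_of_ne_zero (by rintro rfl; simp at h3)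
    have hb : 0 < b := Nat.pos_of_ne_zero (by rintro rfl; simp at h3)
    refine ⟨⟨ha, le_trans (Nat.le_mul_of_pos_right _ hb) h2⟩, hb, ?_⟩
    rw [Nat.le_div_iff_mul_le ha, mul_comm]; exact h2
  · rintro ⟨a, b⟩ h
    simp only [Finset.mem_sigma, Finset.mem_Icc, Nat.mem_divisorsAntidiagonal] at h ⊢
    obtain ⟨⟨h1, h2⟩, h3, h4⟩ := h
    rw [Nat.le_div_iff_mul_le h1, mul_comm] at h4
    have : 0 < a * b := Nat.mul_pos h1 h3
    exact ⟨⟨this, h4⟩, trivial, this.ne'⟩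
  · rintro ⟨n, a, b⟩ h
    simp only [Finset.mem_sigma, Finset.mem_Icc, Nat.mem_divisorsAntidiagonal] at h
    obtain ⟨⟨h1, h2⟩, rfl, h3⟩ := h
    trivial
  · rintro ⟨a, b⟩ h; rfl
  · rintro ⟨n, a, b⟩ h
    simp only [Finset.mem_sigma, Finset.mem_Icc, Nat.mem_divisorsAntidiagonal] at h
    obtain ⟨⟨h1, h2⟩, rfl, h3⟩ := h
    simp only [mul_smul]

lemma sum_D_div (j N : ℕ) :
    ∑ n ∈ Finset.Icc 1 N, D j n / n ≤ (1 + Real.log N) ^ j := by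
  have h0 : 0 ≤ ∑ n ∈ Finset.Icc 1 N, ((n : ℝ))⁻¹ :=
    Finset.sum_nonneg fun _ _ => by positivity
  refine le_trans ?_ (pow_le_pow_left₀ h0 (harm_le N) j)
  induction j with
  | zero =>
    simp only [pow_zero]
    rcases Nat.eq_zero_or_pos N with rfl | hN
    · simp
    rw [Finset.sum_eq_single 1]
    · simp [D]
    · intro b _ hb; simp [D, hb]
    · intro h; simp at h; omega
  | succ j ih =>
    have := sum_conv (D j) (ArithmeticFunction.zeta) (fun n : ℕ => ((n : ℝ))⁻¹) N
    simp only [smul_eq_mul, ← div_eq_mul_inv] at this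
    rw [D, pow_succ, ← D, this, pow_succ]
    refine le_trans ?_ (mul_le_mul_of_nonneg_right ih h0)
    rw [Finset.sum_mul]
    refine Finset.sum_le_sum fun k hk => ?_
    rw [div_eq_mul_inv, mul_assoc]
    refine mul_le_mul_of_nonneg_left ?_ (D_nonneg _ _)
    rw [Finset.mul_sum]
    calc _ ≤ ∑ m ∈ Finset.Icc 1 (N / k), ((k : ℝ))⁻¹ * ((m : ℝ))⁻¹ := by
          refine Finset.sum_le_sum fun m hm => ?_
          rw [Finset.mem_Icc] at hm
          rw [zeta_apply' (by omega)]; push_cast; rw [one_div, mul_inv]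
      _ ≤ _ := Finset.sum_le_sum_of_subset_of_nonneg
          (Finset.Icc_subset_Icc_right (Nat.div_le_self _ _)) (fun _ _ _ => by positivity)

/-- The steps `h₁, …, h_j` are grouped by their product `m`, which arises from at most `τ_j(m)` of them;
`F` is a majorant of the terms. -/
lemma Hp_le_sum (j T : ℕ) (hT : 0 < T) (γ : ℝ) (F : ℕ → ℝ) (hF : ∀ n, 0 ≤ F n) (N k : ℕ) (hk : 0 < k)
    (h : ∀ n, 0 < n → n ≤ k * T ^ j → n ≤ N ∧ G T (γ * n) ≤ F n) :
    Hp j T (γ * k) ≤ ∑ m ∈ Finset.Icc 1 (N / k), D j m * F (k * m) := by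
  induction j generalizing k with
  | zero =>
    obtain ⟨h1, h2⟩ := h k hk (by simp)
    simp only [Hp]
    refine h2.trans ?_
    have := Finset.single_le_sum (f := fun m => D 0 m * F (k * m)) (s := Finset.Icc 1 (N / k))
      (fun m _ => mul_nonneg (D_nonneg _ _) (hF _)) (a := 1)
      (by rw [Finset.mem_Icc]; exact ⟨le_rfl, (Nat.one_le_div_iff hk).2 h1⟩)
    simpa [D] using this
  | succ j ih =>
    have hc := sum_conv ArithmeticFunction.zeta (D j) (fun m => F (k * m)) (N / k)
    simp only [smul_eq_mul] at hc
    rw [show D (j + 1) = ArithmeticFunction.zeta * D j by simp only [D, pow_succ']]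
    rw [hc]
    simp only [Hp]
    calc ∑ h ∈ Finset.Ico 1 T, Hp j T (γ * k * (h : ℕ))
        ≤ ∑ h ∈ Finset.Ico 1 T, ∑ m ∈ Finset.Icc 1 (N / (k * h)), D j m * F (k * h * m) := by
          refine Finset.sum_le_sum fun a ha => ?_
          rw [Finset.mem_Ico] at ha
          have := ih (k * a) (Nat.mul_pos hk ha.1) (fun n hn hn2 => h n hn (hn2.trans ?_))
          · push_cast at this
            rwa [mul_assoc]
          · calc k * a * T ^ j ≤ k * T * T ^ j := by gcongr; exact ha.2.le
              _ = _ := by rw [pow_succ']; ring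
      _ ≤ _ := by
          have hsub : Finset.Ico 1 T ⊆ Finset.Icc 1 (N / k) := by
            intro a ha
            rw [Finset.mem_Ico] at ha
            rw [Finset.mem_Icc]
            refine ⟨ha.1, ?_⟩
            rw [Nat.le_div_iff_mul_le hk]
            refine (h (a * k) (Nat.mul_pos ha.1 hk) ?_).1
            calc a * k ≤ T * k := by gcongr; exact ha.2.le
              _ = k * T ^ 1 := by ring
              _ ≤ k * T ^ (j + 1) := by gcongr; omega
          refine le_trans (Finset.sum_le_sum_of_subset_of_nonneg hsub ?_) (le_of_eq ?_)
          · intro a _ _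
            exact Finset.sum_nonneg fun m _ => mul_nonneg (D_nonneg _ _) (hF _)
          · refine Finset.sum_congr rfl fun a ha => ?_
            rw [Finset.mem_Icc] at ha
            rw [zeta_apply' (by omega), one_mul, Nat.div_div_eq_div_mul]
            refine Finset.sum_congr rfl fun m _ => ?_
            rw [mul_assoc k a m]

end

end VMI

/-! ### Partial summation against sign-change weights -/

namespace VMI

section

open Polynomial

lemma root_of_sign_ne (p : ℝ[X]) (a b : ℝ) (hab : a ≤ b)
    (h : SignType.sign (p.eval a) ≠ SignType.sign (p.eval b)) :
    ∃ ρ, a ≤ ρ ∧ ρ ≤ b ∧ p.eval ρ = 0 := by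
  have hc : ContinuousOn (fun x => p.eval x) (Set.Icc a b) := p.continuous.continuousOn
  rcases lt_trichotomy (p.eval a) 0 with ha | ha | ha
  · rcases lt_or_ge (p.eval b) 0 with hb | hb
    · rw [sign_neg ha, sign_neg hb] at h; exact absurd rfl h
    · obtain ⟨x, hx, hx2⟩ := intermediate_value_Icc hab hc (show (0 : ℝ) ∈ _ from ⟨ha.le, hb⟩)
      exact ⟨x, hx.1, hx.2, hx2⟩
  · exact ⟨a, le_rfl, hab, ha⟩
  · rcases le_or_gt (p.eval b) 0 with hb | hb
    · obtain ⟨x, hx, hx2⟩ := intermediate_value_Icc' hab hc (show (0 : ℝ) ∈ _ from ⟨hb, ha.le⟩)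
      exact ⟨x, hx.1, hx.2, hx2⟩
    · rw [sign_pos ha, sign_pos hb] at h; exact absurd rfl h

/-- A sign change between `t` and `t + 1` forces a root in `[t, t + 1]`, and a root lies in at most two
of these intervals. -/
lemma sign_changes (p : ℝ[X]) (T : ℕ) :
    ((Finset.range T).filter fun t : ℕ => SignType.sign (p.eval (t : ℝ)) ≠
      SignType.sign (p.eval ((t : ℝ) + 1))).card ≤ 2 * p.natDegree := by
  rcases eq_or_ne p 0 with rfl | hp
  · simp
  have hsub : ((Finset.range T).filter fun t : ℕ => SignType.sign (p.eval (t : ℝ)) ≠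
      SignType.sign (p.eval ((t : ℝ) + 1))) ⊆
      p.roots.toFinset.biUnion fun ρ => {⌊ρ⌋₊, ⌊ρ⌋₊ - 1} := by
    intro t ht
    rw [Finset.mem_filter] at ht
    obtain ⟨ρ, h1, h2, h3⟩ := root_of_sign_ne p t (t + 1) (by linarith) ht.2
    rw [Finset.mem_biUnion]
    refine ⟨ρ, by simp [hp, h3], ?_⟩
    have h0 : (0 : ℝ) ≤ ρ := le_trans (Nat.cast_nonneg t) h1
    rcases lt_or_eq_of_le h2 with h | h
    · have : ⌊ρ⌋₊ = t := (Nat.floor_eq_iff h0).2 ⟨h1, h⟩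
      simp [this]
    · have : ⌊ρ⌋₊ = t + 1 := by rw [h]; exact_mod_cast Nat.floor_natCast (R := ℝ) (t + 1)
      simp [this]
  refine (Finset.card_le_card hsub).trans ((Finset.card_biUnion_le_card_mul _ _ 2
    fun ρ _ => Finset.card_le_two).trans ?_)
  rw [mul_comm]
  exact Nat.mul_le_mul_left _ ((Multiset.toFinset_card_le _).trans (p.card_roots'))

/-- Partial summation against a weight that changes only when one of finitely many polynomials
changes sign. -/
lemma abel_signs {ι : Type*} (s : Finset ι) (p : ι → ℝ[X]) (c : ℕ → ℝ) (hc : ∀ t, |c t| ≤ 1)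
    (hcs : ∀ t : ℕ, (∀ i ∈ s, SignType.sign ((p i).eval (t : ℝ)) =
      SignType.sign ((p i).eval ((t : ℝ) + 1))) → c t = c (t + 1))
    (g : ℕ → ℂ) (T : ℕ) (W : ℝ) (hW : ∀ n ≤ T, ‖∑ t ∈ Finset.range n, g t‖ ≤ W) :
    ‖∑ t ∈ Finset.range T, (c t : ℂ) * g t‖ ≤ W * (1 + 4 * ∑ i ∈ s, ((p i).natDegree : ℝ)) := by
  have hW0 : 0 ≤ W := (norm_nonneg _).trans (hW 0 (Nat.zero_le _))
  have key : ∑ t ∈ Finset.range (T - 1), |c (t + 1) - c t| ≤ 4 * ∑ i ∈ s, ((p i).natDegree : ℝ) := by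
    calc ∑ t ∈ Finset.range (T - 1), |c (t + 1) - c t|
        ≤ ∑ t ∈ Finset.range (T - 1), ∑ i ∈ s,
          if SignType.sign ((p i).eval (t : ℝ)) ≠ SignType.sign ((p i).eval ((t : ℝ) + 1))
            then (2 : ℝ) else 0 := by
          refine Finset.sum_le_sum fun t _ => ?_
          by_cases h : ∀ i ∈ s, SignType.sign ((p i).eval (t : ℝ)) =
              SignType.sign ((p i).eval ((t : ℝ) + 1))
          · rw [hcs t h, sub_self, abs_zero]
            exact Finset.sum_nonneg fun _ _ => by split_ifs <;> norm_num
          · push Not at h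
            obtain ⟨i, hi, hne⟩ := h
            refine le_trans ?_ (Finset.single_le_sum (a := i) (fun _ _ => by
              split_ifs <;> norm_num) hi)
            rw [if_pos hne]
            have h1 := abs_le.1 (hc t)
            have h2 := abs_le.1 (hc (t + 1))
            rw [abs_le]; constructor <;> linarith
      _ = ∑ i ∈ s, 2 * ((((Finset.range (T - 1)).filter fun t : ℕ => SignType.sign ((p i).eval (t : ℝ))
            ≠ SignType.sign ((p i).eval ((t : ℝ) + 1))).card : ℕ) : ℝ) := by
          rw [Finset.sum_comm]
          refine Finset.sum_congr rfl fun i _ => ?_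
          rw [← Finset.sum_filter, Finset.sum_const, nsmul_eq_mul, mul_comm]
      _ ≤ ∑ i ∈ s, 2 * (2 * ((p i).natDegree : ℝ)) := by
          refine Finset.sum_le_sum fun i _ => ?_
          gcongr
          exact_mod_cast sign_changes (p i) (T - 1)
      _ = _ := by rw [Finset.mul_sum]; exact Finset.sum_congr rfl fun _ _ => by ring
  have hp := Finset.sum_range_by_parts (fun t => (c t : ℂ)) g T
  simp only [smul_eq_mul] at hp
  rw [hp]
  refine (norm_sub_le _ _).trans ?_
  rw [mul_add, mul_one]
  refine add_le_add ?_ ?_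
  · rw [norm_mul, Complex.norm_real, Real.norm_eq_abs]
    calc _ ≤ 1 * W := mul_le_mul (hc _) (hW _ le_rfl) (norm_nonneg _) zero_le_one
      _ = W := one_mul _
  · refine (norm_sum_le _ _).trans ?_
    calc _ ≤ ∑ t ∈ Finset.range (T - 1), |c (t + 1) - c t| * W := by
          refine Finset.sum_le_sum fun t ht => ?_
          rw [Finset.mem_range] at ht
          rw [norm_mul, ← Complex.ofReal_sub, Complex.norm_real, Real.norm_eq_abs]
          exact mul_le_mul_of_nonneg_left (hW _ (by omega)) (abs_nonneg _)
      _ ≤ _ := by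
          rw [← Finset.sum_mul, mul_comm]
          exact mul_le_mul_of_nonneg_left key hW0

/-- Weyl's inequality with a weight that changes only with the signs of the polynomials `p i`. -/
lemma line_bound {ι : Type*} (s : Finset ι) (p : ι → ℝ[X]) (c : ℕ → ℝ) (hc : ∀ t, |c t| ≤ 1)
    (hcs : ∀ t : ℕ, (∀ i ∈ s, SignType.sign ((p i).eval (t : ℝ)) =
      SignType.sign ((p i).eval ((t : ℝ) + 1))) → c t = c (t + 1))
    (j : ℕ) (f : ℝ[X]) (hf : f.natDegree ≤ j + 1) (T : ℕ) (hT : 0 < T) (l : ℝ) (hl : 0 < l) :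
    ‖∑ t ∈ Finset.range T, (c t : ℂ) * eF (f.eval (t : ℝ))‖ * (T : ℝ) ^ j ≤
      (1 + 4 * ∑ i ∈ s, ((p i).natDegree : ℝ)) * (2 ^ (2 ^ j) *
        (l * (T : ℝ) ^ (j + 1) + (l⁻¹) ^ (2 ^ j - 1) * H j T ((j + 1).factorial * f.coeff (j + 1)))) := by
  have hT' : (0 : ℝ) < (T : ℝ) ^ j := by positivity
  set W : ℝ := 2 ^ (2 ^ j) * (l * (T : ℝ) ^ (j + 1) + (l⁻¹) ^ (2 ^ j - 1) *
    H j T ((j + 1).factorial * f.coeff (j + 1))) with hWdef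
  have := abel_signs s p c hc hcs (fun t => eF (f.eval (t : ℝ))) T (W / (T : ℝ) ^ j) ?_
  · calc _ ≤ _ := mul_le_mul_of_nonneg_right this hT'.le
      _ = _ := by field_simp
  · intro n hn
    rw [le_div_iff₀ hT']
    have h := weyl_lam j _ _ (WP_poly j f hf) 0 n T hT (by omega) l hl
    refine le_trans (le_of_eq ?_) h
    congr 2
    refine Finset.sum_bij (fun t _ => (t : ℤ)) ?_ ?_ ?_ ?_
    · intro t ht; rw [Finset.mem_range] at ht; rw [Finset.mem_Ico]; omega
    · intro a _ b _ h; exact_mod_cast h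
    · intro b hb; rw [Finset.mem_Ico] at hb
      exact ⟨b.toNat, by rw [Finset.mem_range]; omega, by omega⟩
    · intro a _; simp

end

end VMI

/-! ### Balanced generators, boxes and the norm polynomial -/

namespace VMI

section

open Polynomial

variable (L : Type*) [Field L] [NumberField L]

lemma norm_abs (x : L) : |((Algebra.norm ℚ x : ℚ) : ℝ)| = ∏ φ : L →+* ℂ, ‖φ x‖ := by
  have h := Algebra.norm_eq_prod_embeddings ℚ ℂ x
  have h2 := congrArg norm h
  rw [norm_prod] at h2
  rw [← Fintype.prod_equiv (RingHom.equivRatAlgHom L ℂ) (fun φ => ‖φ x‖) (fun φ => ‖φ x‖)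
    (fun _ => rfl)] at h2
  rw [← h2]
  simp

/-- Every nonzero integer of `L` has an associate all of whose conjugates have comparable size. -/
lemma exists_unit_balanced : ∃ C : ℝ, 1 ≤ C ∧ ∀ x : 𝓞 L, x ≠ 0 → ∃ u : (𝓞 L)ˣ, ∀ φ : L →+* ℂ,
    ‖φ ((u * x : 𝓞 L) : L)‖ ^ (Module.finrank ℚ L) ≤ C * |((Algebra.norm ℚ (x : L) : ℚ) : ℝ)| := by
  obtain ⟨R, hR⟩ := (mixedEmbedding.fundamentalCone.isBounded_normLeOne L).exists_norm_le
  refine ⟨max R 1 ^ Module.finrank ℚ L, one_le_pow₀ (le_max_right _ _), fun x hx => ?_⟩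
  have hx' : mixedEmbedding.norm (mixedEmbedding L (x : L)) ≠ 0 := by
    rw [mixedEmbedding.norm_eq_norm]; simpa using hx
  obtain ⟨u, hu⟩ := mixedEmbedding.fundamentalCone.exists_unit_smul_mem hx'
  refine ⟨u, fun φ => ?_⟩
  have hN : mixedEmbedding.norm (mixedEmbedding L (x : L)) = |((Algebra.norm ℚ (x : L) : ℚ) : ℝ)| := by
    rw [mixedEmbedding.norm_eq_norm]; simp
  rw [hN] at hx'
  set n := |((Algebra.norm ℚ (x : L) : ℚ) : ℝ)| with hn
  have hn0 : 0 < n := lt_of_le_of_ne (abs_nonneg _) (Ne.symm hx')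
  have hd : Module.finrank ℚ L ≠ 0 := Module.finrank_pos.ne'
  -- After scaling to norm one, a point of the fundamental cone lies in a bounded set.
  set c : ℝ := (n ^ ((Module.finrank ℚ L : ℝ)⁻¹)) with hc
  have hc0 : 0 < c := Real.rpow_pos_of_pos hn0 _
  have hcd : c ^ Module.finrank ℚ L = n := Real.rpow_inv_natCast_pow hn0.le hd
  have hmem : c⁻¹ • (u • mixedEmbedding L (x : L)) ∈ mixedEmbedding.fundamentalCone.normLeOne L := by
    refine ⟨mixedEmbedding.fundamentalCone.smul_mem_of_mem hu (inv_pos.2 hc0).ne', ?_⟩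
    change mixedEmbedding.norm (c⁻¹ • (u • mixedEmbedding L (x : L))) ≤ 1
    rw [mixedEmbedding.norm_smul, mixedEmbedding.norm_unit_smul, hN,
      abs_of_pos (inv_pos.2 hc0), inv_pow, hcd, inv_mul_cancel₀ hn0.ne']
  have h1 := hR _ hmem
  have h2 : mixedEmbedding.normAtPlace (InfinitePlace.mk φ) (c⁻¹ • (u • mixedEmbedding L (x : L))) ≤ R := by
    refine le_trans ?_ h1
    rw [mixedEmbedding.norm_eq_sup'_normAtPlace]
    exact Finset.le_sup' (fun w => mixedEmbedding.normAtPlace w (c⁻¹ • (u • mixedEmbedding L (x : L)))) (Finset.mem_univ _)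
  rw [mixedEmbedding.normAtPlace_smul, mixedEmbedding.unitSMul_smul, ← map_mul, mixedEmbedding.normAtPlace_apply,
    InfinitePlace.apply, abs_of_pos (inv_pos.2 hc0)] at h2
  have h3 : ‖φ ((u * x : 𝓞 L) : L)‖ ≤ max R 1 * c := by
    rw [inv_mul_le_iff₀ hc0] at h2
    refine le_trans (le_of_eq ?_) (h2.trans ?_)
    · exact congrArg (fun z => ‖φ z‖) (map_mul (algebraMap (𝓞 L) L) _ _)
    rw [mul_comm]
    exact mul_le_mul_of_nonneg_right (le_max_left _ _) hc0.le
  calc _ ≤ (max R 1 * c) ^ Module.finrank ℚ L := pow_le_pow_left₀ (norm_nonneg _) h3 _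
    _ = _ := by rw [mul_pow, hcd]

/-- Integers of bounded conjugates. -/
lemma finite_box (R : ℝ) : {x : 𝓞 L | ∀ φ : L →+* ℂ, ‖φ (x : L)‖ ≤ R}.Finite := by
  have := Embeddings.finite_of_norm_le L ℂ R
  refine Set.Finite.of_finite_image (f := fun x : 𝓞 L => (x : L)) (this.subset ?_) ?_
  · rintro _ ⟨x, hx, rfl⟩
    exact ⟨x.isIntegral_coe, hx⟩
  · intro a _ b _ h; exact RingOfIntegers.ext h

/-- The integers of `L` all of whose conjugates have absolute value at most `R`. -/
noncomputable def box (R : ℝ) : Finset (𝓞 L) := (finite_box L R).toFinset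

lemma mem_box {R : ℝ} {x : 𝓞 L} : x ∈ box L R ↔ ∀ φ : L →+* ℂ, ‖φ (x : L)‖ ≤ R := by
  simp [box]

/-- The coordinates with respect to an integral basis are bounded linear combinations of the conjugates. -/
lemma card_box : ∃ C : ℝ, 0 < C ∧ ∀ R : ℝ, 1 ≤ R →
    ((box L R).card : ℝ) ≤ C * R ^ (Module.finrank ℚ L) := by
  let b := canonicalEmbedding.latticeBasis L
  let ι := Module.Free.ChooseBasisIndex ℤ (𝓞 L)
  have hcont : ∀ i : ι, ∃ K : ℝ, ∀ v, ‖b.repr v i‖ ≤ K * ‖v‖ := fun i => by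
    let f : ((L →+* ℂ) → ℂ) →L[ℂ] ℂ := LinearMap.toContinuousLinearMap (b.coord i)
    exact ⟨‖f‖, fun v => f.le_opNorm v⟩
  choose K hK using hcont
  set M : ℝ := 1 + ∑ i, |K i| with hM
  have hM1 : 1 ≤ M := by
    have : 0 ≤ ∑ i, |K i| := Finset.sum_nonneg fun _ _ => abs_nonneg _
    linarith
  have hcard : Fintype.card ι = Module.finrank ℚ L := by
    rw [← Module.finrank_eq_card_chooseBasisIndex, RingOfIntegers.rank]
  refine ⟨(3 * M) ^ Module.finrank ℚ L, by positivity, fun R hR => ?_⟩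
  have hcoord : ∀ x ∈ box L R, ∀ i, |((RingOfIntegers.basis L).repr x i : ℝ)| ≤ M * R := by
    intro x hx i
    rw [mem_box] at hx
    have h1 := hK i (canonicalEmbedding L (x : L))
    have h2 : b.repr (canonicalEmbedding L (x : L)) i = (((RingOfIntegers.basis L).repr x i : ℤ) : ℂ) := by
      rw [canonicalEmbedding.integralBasis_repr_apply]
      rw [integralBasis_repr_apply]
      simp
    rw [h2] at h1
    have h3 : ‖canonicalEmbedding L (x : L)‖ ≤ R :=
      (pi_norm_le_iff_of_nonneg (by linarith)).2 fun φ => by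
        rw [canonicalEmbedding.apply_at]; exact hx φ
    rw [Complex.norm_intCast] at h1
    refine h1.trans ?_
    have h4 : K i ≤ M := by
      have := Finset.single_le_sum (f := fun i => |K i|) (fun _ _ => abs_nonneg _) (Finset.mem_univ i)
      have h5 := le_abs_self (K i)
      linarith
    exact mul_le_mul h4 h3 (norm_nonneg _) (by linarith)
  let Z : Finset (ι → ℤ) := Fintype.piFinset fun _ => Finset.Icc (-⌊M * R⌋) ⌊M * R⌋
  have hle : (box L R).card ≤ Z.card := by
    refine Finset.card_le_card_of_injOn (fun x => fun i => (RingOfIntegers.basis L).repr x i) ?_ ?_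
    · intro x hx
      refine Finset.mem_coe.2 (Fintype.mem_piFinset.2 fun i => Finset.mem_Icc.2 ?_)
      have := abs_le.1 (hcoord x hx i)
      constructor
      · rw [neg_le]; rw [Int.le_floor]; push_cast; linarith
      · rw [Int.le_floor]; exact this.2
    · intro x _ y _ h
      apply (RingOfIntegers.basis L).repr.injective
      ext i
      exact congrFun h i
  have hZ : (Z.card : ℝ) ≤ (3 * M * R) ^ Module.finrank ℚ L := by
    simp only [Z, Fintype.card_piFinset, Finset.prod_const, Finset.card_univ, hcard]
    push_cast
    refine pow_le_pow_left₀ (by positivity) ?_ _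
    rw [Int.card_Icc]
    have hMR : 1 ≤ M * R := one_le_mul_of_one_le_of_one_le hM1 hR
    have h0 : 0 ≤ ⌊M * R⌋ := Int.floor_nonneg.2 (by linarith)
    have h1 := Int.floor_le (M * R)
    have h2 : (((⌊M * R⌋ + 1 - -⌊M * R⌋).toNat : ℤ) : ℝ) = 2 * ⌊M * R⌋ + 1 := by
      rw [Int.toNat_of_nonneg (by linarith)]; push_cast; ring
    rw [Int.cast_natCast] at h2
    rw [h2]; linarith
  calc ((box L R).card : ℝ) ≤ Z.card := by exact_mod_cast hle
    _ ≤ _ := hZ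
    _ = _ := by rw [mul_pow]

/-- The polynomial `t ↦ N(x + t m)`. -/
lemma norm_poly (x : L) (m : ℕ) : ∃ p : ℝ[X], p.natDegree ≤ Module.finrank ℚ L ∧
    p.coeff (Module.finrank ℚ L) = (m : ℝ) ^ Module.finrank ℚ L ∧
    ∀ t : ℕ, p.eval (t : ℝ) = ((Algebra.norm ℚ (x + t * m) : ℚ) : ℝ) := by
  let q : ℚ[X] := (Algebra.lmul ℚ L (-x)).charpoly
  have hqd : q.natDegree = Module.finrank ℚ L := LinearMap.charpoly_natDegree _
  have hqm : q.Monic := LinearMap.charpoly_monic _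
  refine ⟨(q.comp (C (m : ℚ) * X)).map (algebraMap ℚ ℝ), ?_, ?_, ?_⟩
  · refine (natDegree_map_le).trans (natDegree_comp_le.trans ?_)
    rw [hqd]
    calc _ ≤ Module.finrank ℚ L * 1 := Nat.mul_le_mul_left _ ((natDegree_C_mul_le _ _).trans natDegree_X_le)
      _ = _ := mul_one _
  · rw [coeff_map, comp_C_mul_X_coeff, ← hqd, hqm.coeff_natDegree]
    simp
  · intro t
    have h := LinearMap.eval_charpoly (Algebra.lmul ℚ L (-x)) ((m : ℚ) * t)
    have h2 : (q.comp (C (m : ℚ) * X)).eval (t : ℚ) = Algebra.norm ℚ (x + t * m) := by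
      rw [eval_comp]
      simp only [eval_mul, eval_C, eval_X]
      rw [h, Algebra.norm_apply]
      congr 1
      ext y
      simp [Algebra.smul_def]
      ring
    have h3 : ((t : ℝ)) = algebraMap ℚ ℝ (t : ℚ) := by simp
    rw [h3, eval_map_algebraMap, aeval_algebraMap_apply, coe_aeval_eq_eval, h2]
    simp

end

end VMI

/-! ### A fundamental set for the units and sums over ideal classes -/

namespace VMI

section

variable {L : Type*} [Field L] [NumberField L]

/-- The norm of an integer of `L`, as a real number. -/
noncomputable def nrm (x : 𝓞 L) : ℝ := ((Algebra.norm ℚ (x : L) : ℚ) : ℝ)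

/-- Integers all of whose conjugates have size at most about `|N x|^{1/d}`. -/
def Dom (C : ℝ) (x : 𝓞 L) : Prop :=
  ∀ φ : L →+* ℂ, ‖φ (x : L)‖ ^ (Module.finrank ℚ L) ≤ C * |nrm x|

lemma nrm_int (x : 𝓞 L) : nrm x = ((Algebra.norm ℤ x : ℤ) : ℝ) := by
  rw [nrm, ← Algebra.coe_norm_int]; simp

lemma abs_nrm (x : 𝓞 L) : |nrm x| = (Ideal.absNorm (Ideal.span {x}) : ℝ) := by
  rw [nrm_int, Ideal.absNorm_span_singleton, ← Int.cast_abs, Nat.cast_natAbs]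

lemma nrm_ne_zero {x : 𝓞 L} (hx : x ≠ 0) : nrm x ≠ 0 := by
  rw [nrm]; simpa using hx

lemma nrm_mul (x y : 𝓞 L) : nrm (x * y) = nrm x * nrm y := by
  rw [nrm, nrm, nrm]; simp

lemma abs_nrm_unit (u : (𝓞 L)ˣ) : |nrm (u : 𝓞 L)| = 1 := by
  rw [abs_nrm, Ideal.span_singleton_eq_top.2 u.isUnit]; simp

variable (L) in
/-- A fundamental set for the units: it meets every orbit, and only finitely many units can move one
of its points to another. -/
lemma exists_domain : ∃ (C : ℝ) (U : Finset (𝓞 L)ˣ), 1 ≤ C ∧ 1 ∈ U ∧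
    (∀ x : 𝓞 L, x ≠ 0 → ∃ u : (𝓞 L)ˣ, Dom C ((u : 𝓞 L) * x)) ∧
    ∀ (x : 𝓞 L) (u : (𝓞 L)ˣ), x ≠ 0 → Dom C x → Dom C ((u : 𝓞 L) * x) → u ∈ U := by
  obtain ⟨C, hC, h⟩ := exists_unit_balanced L
  have hC0 : 0 < C := by linarith
  have hfin : {u : (𝓞 L)ˣ | ∀ φ : L →+* ℂ, ‖φ ((u : 𝓞 L) : L)‖ ≤ C}.Finite := by
    refine Set.Finite.of_finite_image (f := fun u : (𝓞 L)ˣ => (u : 𝓞 L))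
      ((finite_box L C).subset ?_) ?_
    · rintro _ ⟨u, hu, rfl⟩; exact hu
    · intro a _ b _ h; exact Units.ext h
  have hd : Module.finrank ℚ L ≠ 0 := Module.finrank_pos.ne'
  refine ⟨C, hfin.toFinset, hC, ?_, ?_, ?_⟩
  · rw [Set.Finite.mem_toFinset]
    intro φ; simpa using hC
  · intro x hx
    obtain ⟨u, hu⟩ := h x hx
    refine ⟨u, fun φ => (hu φ).trans (le_of_eq ?_)⟩
    rw [nrm_mul, abs_mul, abs_nrm_unit, one_mul]; rfl
  · intro x u hx h1 h2
    rw [Set.Finite.mem_toFinset]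
    intro φ
    set d := Module.finrank ℚ L with hdd
    have hn : 0 < |nrm x| := abs_pos.2 (nrm_ne_zero hx)
    set n := |nrm x| with hndef
    -- a lower bound for `‖φ x‖`, since the product of all conjugates is the norm
    have hlow : n ≤ ‖φ (x : L)‖ ^ d * C ^ (d - 1) := by
      have hp : n = ∏ ψ : L →+* ℂ, ‖ψ (x : L)‖ := norm_abs L (x : L)
      have hp2 : n ^ d = ∏ ψ : L →+* ℂ, ‖ψ (x : L)‖ ^ d := by rw [hp, Finset.prod_pow]
      rw [← Finset.mul_prod_erase _ _ (Finset.mem_univ φ)] at hp2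
      have hp3 : ∏ ψ ∈ Finset.univ.erase φ, ‖ψ (x : L)‖ ^ d ≤ (C * n) ^ (d - 1) := by
        have hc : (Finset.univ.erase φ).card = d - 1 := by
          rw [Finset.card_erase_of_mem (Finset.mem_univ _), Finset.card_univ, Embeddings.card]
        rw [← hc, ← Finset.prod_const]
        exact Finset.prod_le_prod (fun _ _ => by positivity) (fun ψ _ => h1 ψ)
      have hp4 : n ^ d ≤ ‖φ (x : L)‖ ^ d * (C * n) ^ (d - 1) := by
        rw [hp2]; exact mul_le_mul_of_nonneg_left hp3 (by positivity)
      have e : n ^ d = n * n ^ (d - 1) := by rw [← pow_succ', Nat.sub_add_cancel (by omega)]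
      rw [e, mul_pow, ← mul_assoc] at hp4
      exact le_of_mul_le_mul_right hp4 (by positivity)
    have h3 := h2 φ
    rw [nrm_mul, abs_mul, abs_nrm_unit, one_mul, ← hndef] at h3
    have h4 : ‖φ ((u * x : 𝓞 L) : L)‖ = ‖φ ((u : 𝓞 L) : L)‖ * ‖φ (x : L)‖ := by
      rw [← norm_mul, ← map_mul]; exact congrArg (fun z => ‖φ z‖) (map_mul (algebraMap (𝓞 L) L) _ _)
    rw [h4, mul_pow, ← hdd] at h3
    have h5 : ‖φ ((u : 𝓞 L) : L)‖ ^ d ≤ C ^ d := by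
      have hx0 : 0 < ‖φ (x : L)‖ ^ d := by
        by_contra hcon
        have : ‖φ (x : L)‖ ^ d = 0 := le_antisymm (not_lt.1 hcon) (by positivity)
        rw [this, zero_mul] at hlow; linarith
      have e : C ^ d = C * C ^ (d - 1) := by rw [← pow_succ', Nat.sub_add_cancel (by omega)]
      refine le_of_mul_le_mul_right ?_ hx0
      calc _ ≤ C * n := h3
        _ ≤ C * (‖φ (x : L)‖ ^ d * C ^ (d - 1)) := mul_le_mul_of_nonneg_left hlow hC0.le
        _ = _ := by rw [e]; ring
    exact le_of_pow_le_pow_left₀ hd hC0.le h5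

/-- The number of points of the fundamental set in the orbit of `x`. -/
noncomputable def wt (C : ℝ) (U : Finset (𝓞 L)ˣ) (x : 𝓞 L) : ℕ := (U.filter fun u : (𝓞 L)ˣ => Dom C ((u : 𝓞 L) * x)).card

/-- The weights of the generators of a principal ideal that lie in the fundamental set add up to `1`. -/
lemma sum_wt {C : ℝ} {U : Finset (𝓞 L)ˣ}
    (h1 : ∀ x : 𝓞 L, x ≠ 0 → ∃ u : (𝓞 L)ˣ, Dom C ((u : 𝓞 L) * x))
    (h2 : ∀ (x : 𝓞 L) (u : (𝓞 L)ˣ), x ≠ 0 → Dom C x → Dom C ((u : 𝓞 L) * x) → u ∈ U)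
    (S : Finset (𝓞 L)) (I : Ideal (𝓞 L)) (hI : I ≠ ⊥) (x₀ : 𝓞 L) (hx₀ : Ideal.span {x₀} = I)
    (hS : ∀ x, Dom C x → Ideal.span {x} = I → x ∈ S) :
    ∑ x ∈ S.filter (fun x => Dom C x ∧ Ideal.span {x} = I), ((wt C U x : ℝ))⁻¹ = 1 := by
  have hne : ∀ x : 𝓞 L, Ideal.span {x} = I → x ≠ 0 := by
    rintro x h rfl; apply hI; rw [← h]; simp
  set A := S.filter (fun x => Dom C x ∧ Ideal.span {x} = I) with hA
  have hmem : ∀ x, x ∈ A ↔ Dom C x ∧ Ideal.span {x} = I := fun x => by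
    rw [hA, Finset.mem_filter]; exact ⟨fun h => h.2, fun h => ⟨hS x h.1 h.2, h⟩⟩
  obtain ⟨u, hu⟩ := h1 x₀ (hne x₀ hx₀)
  have hspan : ∀ (x : 𝓞 L) (u : (𝓞 L)ˣ), Ideal.span {(u : 𝓞 L) * x} = Ideal.span {x} :=
    fun x u => by rw [Ideal.span_singleton_mul_left_unit u.isUnit]
  -- Every generator in the fundamental set has the same weight, the number of such generators.
  have hcard : ∀ x ∈ A, wt C U x = A.card := by
    intro x hx
    rw [hmem] at hx
    have hx0 := hne x hx.2
    refine Finset.card_bij (fun u _ => (u : 𝓞 L) * x) ?_ ?_ ?_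
    · intro v hv
      rw [Finset.mem_filter] at hv
      rw [hmem, hspan]; exact ⟨hv.2, hx.2⟩
    · intro a _ b _ hab
      exact Units.ext (mul_right_cancel₀ hx0 hab)
    · intro y hy
      rw [hmem] at hy
      have hass : Associated x y := Ideal.span_singleton_eq_span_singleton.1 (hx.2.trans hy.2.symm)
      obtain ⟨v, hv⟩ := hass
      have hv' : (v : 𝓞 L) * x = y := by rw [mul_comm]; exact hv
      have hD : Dom C ((v : 𝓞 L) * x) := by rw [hv']; exact hy.1
      exact ⟨v, Finset.mem_filter.2 ⟨h2 x v hx0 hx.1 hD, hD⟩, hv'⟩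
  have hpos : 0 < A.card := Finset.card_pos.2 ⟨u * x₀, (hmem _).2 ⟨hu, by rw [hspan, hx₀]⟩⟩
  rw [Finset.sum_congr rfl fun x hx => by rw [hcard x hx], Finset.sum_const, nsmul_eq_mul,
    mul_inv_cancel₀ (by exact_mod_cast hpos.ne')]

/-- The nonzero ideals of norm at most `Y`. -/
noncomputable def ideals (L : Type*) [Field L] [NumberField L] (Y : ℕ) : Finset (Ideal (𝓞 L)) :=
  (Ideal.finite_setOfPred_absNorm_le Y).toFinset.erase ⊥

lemma mem_ideals {Y : ℕ} {I : Ideal (𝓞 L)} : I ∈ ideals L Y ↔ I ≠ ⊥ ∧ Ideal.absNorm I ≤ Y := by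
  simp [ideals]

/-- The summand obtained from the class of ideals `b` with `b * J` principal, by passing to the
generators `x` of `b * J` in the fundamental set; here `N(b) = |N x| / N(J)`. -/
noncomputable def Fc (C : ℝ) (U : Finset (𝓞 L)ˣ) (J : Ideal (𝓞 L)) (Y : ℕ) (θ : ℝ) (x : 𝓞 L) : ℂ :=
  if x ≠ 0 ∧ x ∈ J ∧ Dom C x ∧ |nrm x| ≤ Y * Ideal.absNorm J then
    (((wt C U x : ℝ)⁻¹ : ℝ) : ℂ) * eF (θ / Ideal.absNorm J * |nrm x|) else 0

/-- The sum over the ideals `b` in one class, through the generators of the principal ideals `b * J`. -/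
lemma sum_class {C : ℝ} {U : Finset (𝓞 L)ˣ}
    (h1 : ∀ x : 𝓞 L, x ≠ 0 → ∃ u : (𝓞 L)ˣ, Dom C ((u : 𝓞 L) * x))
    (h2 : ∀ (x : 𝓞 L) (u : (𝓞 L)ˣ), x ≠ 0 → Dom C x → Dom C ((u : 𝓞 L) * x) → u ∈ U)
    (J : Ideal (𝓞 L)) (hJ : J ≠ ⊥) (Y : ℕ) (θ : ℝ) (S : Finset (𝓞 L))
    (hS : ∀ x, Dom C x → |nrm x| ≤ Y * Ideal.absNorm J → x ∈ S) :
    ∑ b ∈ (ideals L Y).filter (fun b => ∃ x, Ideal.span {x} = b * J), eF (θ * Ideal.absNorm b) =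
      ∑ x ∈ S, Fc C U J Y θ x := by
  have hJ0 : (Ideal.absNorm J : ℝ) ≠ 0 := by
    exact_mod_cast (Ideal.absNorm_eq_zero_iff.not.2 hJ)
  have hJpos : (0 : ℝ) < Ideal.absNorm J := lt_of_le_of_ne (Nat.cast_nonneg _) (Ne.symm hJ0)
  simp only [Fc]
  rw [← Finset.sum_filter]
  set B := (ideals L Y).filter (fun b => ∃ x, Ideal.span {x} = b * J) with hB
  rw [← Finset.sum_fiberwise_of_maps_to (s := S.filter _) (t := B.image (fun b => b * J))
    (g := fun x => Ideal.span {x}) ?_]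
  · rw [Finset.sum_image fun a _ b _ h => mul_right_cancel₀ hJ h]
    refine Finset.sum_congr rfl fun b hb => ?_
    rw [hB, Finset.mem_filter, mem_ideals] at hb
    obtain ⟨⟨hb0, hbY⟩, x₀, hx₀⟩ := hb
    have hbJ : b * J ≠ ⊥ := mul_ne_zero hb0 hJ
    have hn : ∀ x : 𝓞 L, Ideal.span {x} = b * J → |nrm x| = Ideal.absNorm b * Ideal.absNorm J := by
      intro x hx; rw [abs_nrm, hx, map_mul]; push_cast; rfl
    have hle : ∀ x : 𝓞 L, Ideal.span {x} = b * J → |nrm x| ≤ Y * Ideal.absNorm J := by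
      intro x hx; rw [hn x hx]
      have : (Ideal.absNorm b : ℝ) ≤ Y := by exact_mod_cast hbY
      gcongr
    have hs := sum_wt h1 h2 S (b * J) hbJ x₀ hx₀ (fun x hx hx2 => hS x hx (hle x hx2))
    have hset : (S.filter fun x => x ≠ 0 ∧ x ∈ J ∧ Dom C x ∧ |nrm x| ≤ Y * Ideal.absNorm J).filter
        (fun x => Ideal.span {x} = b * J) = S.filter (fun x => Dom C x ∧ Ideal.span {x} = b * J) := by
      ext x
      simp only [Finset.mem_filter]
      constructor
      · rintro ⟨⟨a, _, _, c, _⟩, e⟩; exact ⟨a, c, e⟩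
      · rintro ⟨a, c, e⟩
        refine ⟨⟨a, ?_, ?_, c, hle x e⟩, e⟩
        · rintro rfl; apply hbJ; rw [← e]; simp
        · have : Ideal.span {x} ≤ J := by rw [e]; exact Ideal.mul_le_right (I := b) (J := J)
          exact this (Ideal.mem_span_singleton_self x)
    rw [hset]
    have : ∀ x ∈ S.filter (fun x => Dom C x ∧ Ideal.span {x} = b * J),
        (((wt C U x : ℝ)⁻¹ : ℝ) : ℂ) * eF (θ / Ideal.absNorm J * |nrm x|) =
        (((wt C U x : ℝ)⁻¹ : ℝ) : ℂ) * eF (θ * Ideal.absNorm b) := by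
      intro x hx
      rw [Finset.mem_filter] at hx
      rw [hn x hx.2.2]; congr 2; field_simp
    rw [Finset.sum_congr rfl this, ← Finset.sum_mul, ← Complex.ofReal_sum, hs]
    simp
  · intro x hx
    rw [Finset.mem_filter] at hx
    obtain ⟨_, hx0, hxJ, _, hxY⟩ := hx
    obtain ⟨b, hb⟩ := Ideal.dvd_span_singleton.2 hxJ
    rw [Finset.mem_image]
    have hb' : Ideal.span {x} = b * J := by rw [hb, mul_comm]
    refine ⟨b, ?_, hb'.symm⟩
    rw [hB, Finset.mem_filter, mem_ideals]
    refine ⟨⟨?_, ?_⟩, x, hb'⟩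
    · rintro rfl
      rw [Ideal.bot_mul, Ideal.span_singleton_eq_bot] at hb'
      exact hx0 hb'
    · rw [abs_nrm, hb', map_mul] at hxY
      push_cast at hxY
      exact_mod_cast le_of_mul_le_mul_right hxY hJpos

end

end VMI

/-! ### The norm form along lines -/

namespace VMI

section

open Polynomial

variable {L : Type*} [Field L] [NumberField L]

lemma sign_nonneg {a b : ℝ} (h : SignType.sign a = SignType.sign b) : 0 ≤ a ↔ 0 ≤ b := by
  rw [← sign_nonneg_iff, h, sign_nonneg_iff]

lemma sign_pos' {a b : ℝ} (h : SignType.sign a = SignType.sign b) : 0 < a ↔ 0 < b := by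
  rw [← sign_eq_one_iff, h, sign_eq_one_iff]

lemma sign_neg' {a b : ℝ} (h : SignType.sign a = SignType.sign b) : a < 0 ↔ b < 0 := by
  rw [← not_le, ← not_le, sign_nonneg h]

/-- The polynomial `t ↦ |z + t m|²`. -/
lemma conj_poly (z : ℂ) (m : ℕ) : ∃ p : ℝ[X], p.natDegree ≤ 2 ∧
    ∀ t : ℝ, p.eval t = ‖z + t * m‖ ^ 2 := by
  refine ⟨(C z.re + C (m : ℝ) * X) ^ 2 + C (z.im ^ 2), ?_, ?_⟩
  · compute_degree
  · intro t
    rw [← Complex.normSq_eq_norm_sq, Complex.normSq_apply]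
    simp
    ring

/-- The points `x + t m` of a line in `𝓞 L`. -/
def shift (x : 𝓞 L) (m t : ℕ) : 𝓞 L := x + (t : 𝓞 L) * (m : 𝓞 L)

lemma coe_shift (x : 𝓞 L) (m t : ℕ) : ((shift x m t : 𝓞 L) : L) = (x : L) + t * m := by
  simp [shift]

/-- Membership in the fundamental set, as polynomial inequalities in quantities that are polynomial along
lines. -/
lemma dom_iff {C : ℝ} (hC : 0 ≤ C) (u : (𝓞 L)ˣ) (y : 𝓞 L) : Dom C ((u : 𝓞 L) * y) ↔ ∀ φ : L →+* ℂ,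
    0 ≤ C ^ 2 * nrm y ^ 2 - ‖φ ((u : 𝓞 L) : L)‖ ^ (2 * Module.finrank ℚ L) *
      (‖φ (y : L)‖ ^ 2) ^ Module.finrank ℚ L := by
  refine forall_congr' fun φ => ?_
  have h4 : ‖φ ((u * y : 𝓞 L) : L)‖ = ‖φ ((u : 𝓞 L) : L)‖ * ‖φ (y : L)‖ := by
    rw [← norm_mul, ← map_mul]; exact congrArg (fun z => ‖φ z‖) (map_mul (algebraMap (𝓞 L) L) _ _)
  rw [h4, nrm_mul, abs_mul, abs_nrm_unit, one_mul, sub_nonneg,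
    ← pow_le_pow_iff_left₀ (by positivity) (by positivity) two_ne_zero, mul_pow C, sq_abs]
  rw [← pow_mul, ← pow_mul, mul_pow, mul_comm 2 (Module.finrank ℚ L)]

/-- The polynomials along a line whose signs decide the shape of the summand. -/
lemma line_polys {K : ℝ} (hC : 0 ≤ K) (U : Finset (𝓞 L)ˣ) (B : ℝ) (m : ℕ) (x : 𝓞 L) :
    ∃ p : (Fin 3 ⊕ (U × (L →+* ℂ))) → ℝ[X],
      (∑ i, ((p i).natDegree : ℝ) ≤ (3 + U.card * Module.finrank ℚ L) * (2 * Module.finrank ℚ L)) ∧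
      ∀ t : ℕ, (∀ i ∈ Finset.univ, SignType.sign ((p i).eval (t : ℝ)) =
        SignType.sign ((p i).eval ((t : ℝ) + 1))) →
        (∀ u ∈ U, (Dom K ((u : 𝓞 L) * shift x m t) ↔ Dom K ((u : 𝓞 L) * shift x m (t + 1)))) ∧
        SignType.sign (nrm (shift x m t)) = SignType.sign (nrm (shift x m (t + 1))) ∧
        (|nrm (shift x m t)| ≤ B ↔ |nrm (shift x m (t + 1))| ≤ B) := by
  obtain ⟨pN, h1, -, h2⟩ := norm_poly L (x : L) m
  have h2' : ∀ t : ℕ, pN.eval (t : ℝ) = nrm (shift x m t) := fun t => by rw [h2, nrm, coe_shift]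
  choose pφ hφ1 hφ2 using fun φ : L →+* ℂ => conj_poly (φ (x : L)) m
  have hφ2' : ∀ (φ : L →+* ℂ) (t : ℕ), (pφ φ).eval (t : ℝ) = ‖φ (shift x m t : L)‖ ^ 2 := by
    intro φ t; rw [hφ2, coe_shift]; simp
  set d := Module.finrank ℚ L with hd
  have hd1 : 1 ≤ d := Module.finrank_pos
  let p : (Fin 3 ⊕ (U × (L →+* ℂ))) → ℝ[X] := Sum.elim ![pN, C B - pN, C B + pN]
    (fun a => Polynomial.C (K ^ 2) * pN ^ 2 - C (‖a.2 (((a.1 : (𝓞 L)ˣ) : 𝓞 L) : L)‖ ^ (2 * d)) * (pφ a.2) ^ d)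
  have hdeg : ∀ i, (p i).natDegree ≤ 2 * d := by
    have hB1 : (C B - pN).natDegree ≤ 2 * d := by
      refine (natDegree_sub_le _ _).trans (max_le (by simp) (by omega))
    have hB2 : (C B + pN).natDegree ≤ 2 * d := by
      refine (natDegree_add_le _ _).trans (max_le (by simp) (by omega))
    rintro (i | ⟨u, φ⟩)
    · fin_cases i
      · change pN.natDegree ≤ _; omega
      · exact hB1
      · exact hB2
    · refine (natDegree_sub_le _ _).trans (max_le ?_ ?_)
      · refine (natDegree_C_mul_le _ _).trans (natDegree_pow_le.trans ?_)
        exact Nat.mul_le_mul_left _ h1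
      · refine (natDegree_C_mul_le _ _).trans (natDegree_pow_le.trans ?_)
        rw [mul_comm 2]
        exact Nat.mul_le_mul_left _ (hφ1 _)
  refine ⟨p, ?_, ?_⟩
  · calc ∑ i, ((p i).natDegree : ℝ) ≤ ∑ i : Fin 3 ⊕ (U × (L →+* ℂ)), (2 * d : ℝ) :=
          Finset.sum_le_sum fun i _ => by exact_mod_cast hdeg i
      _ = _ := by
          rw [Finset.sum_const, nsmul_eq_mul, Finset.card_univ, Fintype.card_sum, Fintype.card_prod,
            Embeddings.card, Fintype.card_coe, Fintype.card_fin]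
          push_cast; rfl
  · intro t ht
    have e0 := ht (Sum.inl 0) (Finset.mem_univ _)
    have e1 := ht (Sum.inl 1) (Finset.mem_univ _)
    have e2 := ht (Sum.inl 2) (Finset.mem_univ _)
    have et : (t : ℝ) + 1 = ((t + 1 : ℕ) : ℝ) := by push_cast; rfl
    rw [et] at e0 e1 e2
    simp only [p, Sum.elim_inl, Matrix.cons_val_zero, Matrix.cons_val_one, Matrix.cons_val, eval_sub,
      eval_add, eval_C, h2'] at e0 e1 e2
    refine ⟨fun u hu => ?_, e0, ?_⟩
    · rw [dom_iff hC, dom_iff hC]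
      refine forall_congr' fun φ => ?_
      have e3 := ht (Sum.inr (⟨u, hu⟩, φ)) (Finset.mem_univ _)
      rw [et] at e3
      simp only [p, Sum.elim_inr, eval_sub, eval_mul, eval_pow, eval_C, h2', hφ2'] at e3
      exact sign_nonneg e3
    · rw [abs_le, abs_le]
      have := sign_nonneg e1
      have := sign_nonneg e2
      constructor <;> rintro ⟨_, _⟩ <;> constructor <;> grind

end

end VMI

/-! ### Weyl's inequality for sums over ideals -/

namespace VMI

section

open Polynomial

variable {L : Type*} [Field L] [NumberField L]

/-- The part of the weight of `Fc` along a line on which the norm has the sign `σ`. -/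
noncomputable def cw (C : ℝ) (U : Finset (𝓞 L)ˣ) (J : Ideal (𝓞 L)) (B σ : ℝ) (x : 𝓞 L) (m t : ℕ) : ℝ :=
  if 0 < σ * nrm (shift x m t) ∧ x ∈ J ∧ Dom C (shift x m t) ∧ |nrm (shift x m t)| ≤ B then
    ((wt C U (shift x m t) : ℝ))⁻¹ else 0

lemma cw_abs (C : ℝ) (U : Finset (𝓞 L)ˣ) (J : Ideal (𝓞 L)) (B σ : ℝ) (x : 𝓞 L) (m t : ℕ) :
    |cw C U J B σ x m t| ≤ 1 := by
  rw [cw]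
  split_ifs
  · rw [abs_of_nonneg (by positivity)]; exact Nat.cast_inv_le_one _
  · simp

/-- `line_bound` for the part of a line on which the norm has the sign `σ`. -/
lemma cw_bound {C : ℝ} (hC : 0 ≤ C) (U : Finset (𝓞 L)ˣ) (hU : 1 ∈ U) (J : Ideal (𝓞 L)) (B σ : ℝ)
    (hσ : σ = 1 ∨ σ = -1) (x : 𝓞 L) (m j : ℕ) (hm : 0 < m) (hj : Module.finrank ℚ L = j + 1) (θ : ℝ)
    (T : ℕ) (hT : 0 < T) (l : ℝ) (hl : 0 < l) :
    ‖∑ t ∈ Finset.range T, (cw C U J B σ x m t : ℂ) * eF (θ / m * (σ * nrm (shift x m t)))‖ *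
      (T : ℝ) ^ j ≤ (1 + 4 * ((3 + U.card * Module.finrank ℚ L) * (2 * Module.finrank ℚ L))) *
        (2 ^ (2 ^ j) * (l * (T : ℝ) ^ (j + 1) + (l⁻¹) ^ (2 ^ j - 1) *
          H j T (θ * ((j + 1).factorial * m ^ j : ℕ)))) := by
  obtain ⟨p, hp1, hp2⟩ := line_polys hC U B m x
  obtain ⟨q, hq1, hq2, hq3⟩ := norm_poly L (x : L) m
  have hcs : ∀ t : ℕ, (∀ i ∈ Finset.univ, SignType.sign ((p i).eval (t : ℝ)) =
      SignType.sign ((p i).eval ((t : ℝ) + 1))) → cw C U J B σ x m t = cw C U J B σ x m (t + 1) := by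
    intro t ht
    obtain ⟨a, b, c⟩ := hp2 t ht
    have ha1 := a 1 hU
    rw [Units.val_one, one_mul, one_mul] at ha1
    have hw : wt C U (shift x m t) = wt C U (shift x m (t + 1)) := by
      rw [wt, wt, Finset.filter_congr a]
    have hs : 0 < σ * nrm (shift x m t) ↔ 0 < σ * nrm (shift x m (t + 1)) := by
      apply sign_pos'; rw [sign_mul, sign_mul, b]
    rw [cw, cw, hw]
    simp only [ha1, hs, c]
  have h := line_bound Finset.univ p (cw C U J B σ x m) (cw_abs C U J B σ x m) hcs j
    (Polynomial.C (θ / m * σ) * q) ((natDegree_C_mul_le _ _).trans (by rw [← hj]; exact hq1)) T hT l hl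
  have e1 : ∀ t : ℕ, eval (t : ℝ) (Polynomial.C (θ / m * σ) * q) = θ / m * (σ * nrm (shift x m t)) := by
    intro t; rw [eval_mul, eval_C, hq3, nrm, coe_shift, mul_assoc]
  simp only [e1] at h
  have e2 : H j T ((j + 1).factorial * (Polynomial.C (θ / m * σ) * q).coeff (j + 1)) =
      H j T (θ * ((j + 1).factorial * m ^ j : ℕ)) := by
    rw [coeff_C_mul, ← hj, hq2, hj]
    have hm' : (m : ℝ) ≠ 0 := by positivity
    have : ((j + 1).factorial : ℝ) * (θ / m * σ * (m : ℝ) ^ (j + 1)) =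
        σ * (θ * ((j + 1).factorial * m ^ j : ℕ)) := by
      push_cast; field_simp; ring
    rw [this]
    rcases hσ with rfl | rfl
    · rw [one_mul]
    · rw [neg_one_mul, H_neg]
  rw [e2] at h
  refine h.trans ?_
  have hH := H_nonneg j T (θ * ((j + 1).factorial * m ^ j : ℕ))
  have : 0 ≤ 2 ^ (2 ^ j) * (l * (T : ℝ) ^ (j + 1) + (l⁻¹) ^ (2 ^ j - 1) *
          H j T (θ * ((j + 1).factorial * m ^ j : ℕ))) := by positivity
  refine mul_le_mul_of_nonneg_right ?_ this
  linarith

/-- Splitting according to the sign of the norm replaces `|N x|` by a polynomial. Moving along multiples of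
`N(J)` preserves membership in `J`. -/
lemma Fc_shift (C : ℝ) (U : Finset (𝓞 L)ˣ) (J : Ideal (𝓞 L)) (Y : ℕ) (θ : ℝ) (x : 𝓞 L) (t : ℕ) :
    Fc C U J Y θ (shift x (Ideal.absNorm J) t) =
      cw C U J (Y * Ideal.absNorm J) 1 x (Ideal.absNorm J) t *
        eF (θ / Ideal.absNorm J * (1 * nrm (shift x (Ideal.absNorm J) t))) +
      cw C U J (Y * Ideal.absNorm J) (-1) x (Ideal.absNorm J) t *
        eF (θ / Ideal.absNorm J * (-1 * nrm (shift x (Ideal.absNorm J) t))) := by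
  set y := shift x (Ideal.absNorm J) t with hy
  have hmem : y ∈ J ↔ x ∈ J := by
    have : (t : 𝓞 L) * (Ideal.absNorm J : 𝓞 L) ∈ J := J.mul_mem_left _ (Ideal.absNorm_mem J)
    exact Submodule.add_mem_iff_left J this
  rw [Fc, cw, cw, ← hy]
  rcases lt_trichotomy (nrm y) 0 with h | h | h
  · have h0 : y ≠ 0 := by rintro h0; rw [h0] at h; simp [nrm] at h
    have h1 : ¬ (0 < 1 * nrm y) := by linarith
    have h2 : 0 < -1 * nrm y := by linarith
    rw [if_neg (c := 0 < 1 * nrm y ∧ _) (fun h3 => h1 h3.1), Complex.ofReal_zero, zero_mul, zero_add]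
    simp only [h0, h2, hmem, ne_eq, not_false_eq_true, true_and]
    simp only [abs_of_neg h, neg_one_mul]
    split_ifs <;> simp
  · have h0 : y = 0 := by by_contra h0; exact nrm_ne_zero h0 h
    rw [h0]; simp [nrm]
  · have h0 : y ≠ 0 := by rintro h0; rw [h0] at h; simp [nrm] at h
    have h1 : ¬ (0 < -1 * nrm y) := by linarith
    have h2 : 0 < 1 * nrm y := by linarith
    rw [if_neg (c := 0 < -1 * nrm y ∧ _) (fun h3 => h1 h3.1), Complex.ofReal_zero, zero_mul, add_zero]
    simp only [h0, h2, hmem, ne_eq, not_false_eq_true, true_and]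
    simp only [abs_of_pos h, one_mul]
    split_ifs <;> simp

/-- Weyl's inequality along one line in the direction of `N(J)`. -/
lemma Fc_line {C : ℝ} (hC : 0 ≤ C) (U : Finset (𝓞 L)ˣ) (hU : 1 ∈ U) (J : Ideal (𝓞 L)) (hJ : J ≠ ⊥)
    (Y j : ℕ) (hj : Module.finrank ℚ L = j + 1) (θ : ℝ) (x : 𝓞 L) (T : ℕ) (hT : 0 < T) (l : ℝ)
    (hl : 0 < l) :
    ‖∑ t ∈ Finset.range T, Fc C U J Y θ (shift x (Ideal.absNorm J) t)‖ * (T : ℝ) ^ j ≤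
      2 * (1 + 4 * ((3 + U.card * Module.finrank ℚ L) * (2 * Module.finrank ℚ L))) *
        (2 ^ (2 ^ j) * (l * (T : ℝ) ^ (j + 1) + (l⁻¹) ^ (2 ^ j - 1) *
          H j T (θ * ((j + 1).factorial * Ideal.absNorm J ^ j : ℕ)))) := by
  have hm : 0 < Ideal.absNorm J := Nat.pos_of_ne_zero (Ideal.absNorm_eq_zero_iff.not.2 hJ)
  have h1 := cw_bound hC U hU J (Y * Ideal.absNorm J) 1 (Or.inl rfl) x _ j hm hj θ T hT l hl
  have h2 := cw_bound hC U hU J (Y * Ideal.absNorm J) (-1) (Or.inr rfl) x _ j hm hj θ T hT l hl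
  simp only [Fc_shift, Finset.sum_add_distrib]
  refine (mul_le_mul_of_nonneg_right (norm_add_le _ _) (by positivity)).trans ?_
  linarith

/-- Averaging over the translates `x + t m` with `0 ≤ t < T`. The finite set `A` contains the support of
`F`, and `B` contains its translates by `- t m`. -/
lemma sum_translate (F : 𝓞 L → ℂ) (m T : ℕ) (A B : Finset (𝓞 L)) (hA : ∀ x, F x ≠ 0 → x ∈ A)
    (hAB : ∀ x t, t < T → shift x m t ∈ A → x ∈ B) :
    (T : ℂ) * ∑ x ∈ A, F x = ∑ x ∈ B, ∑ t ∈ Finset.range T, F (shift x m t) := by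
  rw [Finset.sum_comm]
  have : ∀ t ∈ Finset.range T, ∑ x ∈ B, F (shift x m t) = ∑ x ∈ A, F x := by
    intro t ht
    rw [Finset.mem_range] at ht
    have hinj : Function.Injective (fun x : 𝓞 L => shift x m t) := fun a b h => by
      simpa [shift] using h
    rw [← Finset.sum_image (s := B) (g := fun x => shift x m t) (f := F) (fun a _ b _ h => hinj h)]
    symm
    refine Finset.sum_subset ?_ ?_
    · intro y hy
      rw [Finset.mem_image]
      have e : shift (y - (t : 𝓞 L) * (m : 𝓞 L)) m t = y := by simp [shift]
      exact ⟨y - (t : 𝓞 L) * (m : 𝓞 L), hAB _ t ht (by rw [e]; exact hy), e⟩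
    · intro y _ hy
      by_contra h
      exact hy (hA y h)
  rw [Finset.sum_congr rfl this, Finset.sum_const, Finset.card_range, nsmul_eq_mul]

/-- The contribution of one ideal class, by averaging over segments of length `T` of lines. The
condition `Y ≤ T ^ d` ensures that the `O(T ^ d)` points of a box of side `O(T)` suffice. -/
lemma class_bound {C : ℝ} (hC : 1 ≤ C) (U : Finset (𝓞 L)ˣ) (hU : 1 ∈ U)
    (h1 : ∀ x : 𝓞 L, x ≠ 0 → ∃ u : (𝓞 L)ˣ, Dom C ((u : 𝓞 L) * x))
    (h2 : ∀ (x : 𝓞 L) (u : (𝓞 L)ˣ), x ≠ 0 → Dom C x → Dom C ((u : 𝓞 L) * x) → u ∈ U)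
    (J : Ideal (𝓞 L)) (hJ : J ≠ ⊥) (j : ℕ) (hj : Module.finrank ℚ L = j + 1) :
    ∃ K : ℝ, 0 < K ∧ ∀ (Y T : ℕ), 0 < T → Y ≤ T ^ (j + 1) → ∀ θ l : ℝ, 0 < l →
      ‖∑ b ∈ (ideals L Y).filter (fun b => ∃ x, Ideal.span {x} = b * J), eF (θ * Ideal.absNorm b)‖ ≤
      K * (l * (T : ℝ) ^ (j + 1) + (l⁻¹) ^ (2 ^ j - 1) *
          H j T (θ * ((j + 1).factorial * Ideal.absNorm J ^ j : ℕ))) := by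
  obtain ⟨K, hK, hbox⟩ := card_box L
  set n := Ideal.absNorm J with hn
  have hn1 : 1 ≤ n := Nat.pos_of_ne_zero (Ideal.absNorm_eq_zero_iff.not.2 hJ)
  have hn1' : (1 : ℝ) ≤ n := by exact_mod_cast hn1
  set W : ℝ := 2 * (1 + 4 * ((3 + U.card * Module.finrank ℚ L) * (2 * Module.finrank ℚ L))) * 2 ^ (2 ^ j)
    with hW
  have hW0 : 0 < W := by positivity
  refine ⟨K * ((C + 1) * n) ^ (j + 1) * W, by positivity, ?_⟩
  intro Y T hT hY θ l hl
  have hT1 : (1 : ℝ) ≤ T := by exact_mod_cast hT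
  have hY' : (Y : ℝ) ≤ (T : ℝ) ^ (j + 1) := by exact_mod_cast hY
  have hA : ∀ x : 𝓞 L, Dom C x → |nrm x| ≤ Y * n → x ∈ box L (C * n * T) := by
    intro x hx hxY
    rw [mem_box]
    intro φ
    have h3 := hx φ
    rw [hj] at h3
    refine le_of_pow_le_pow_left₀ (Nat.succ_ne_zero j) (by positivity) (h3.trans ?_)
    calc C * |nrm x| ≤ C * ((T : ℝ) ^ (j + 1) * n) := by gcongr; exact hxY.trans (by gcongr)
      _ = (C * n) * (T : ℝ) ^ (j + 1) := by ring
      _ ≤ (C * n) ^ (j + 1) * (T : ℝ) ^ (j + 1) := by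
          gcongr
          exact le_self_pow₀ (one_le_mul_of_one_le_of_one_le hC hn1') (Nat.succ_ne_zero j)
      _ = _ := by rw [← mul_pow]
  rw [sum_class h1 h2 J hJ Y θ (box L (C * n * T)) hA]
  have htr := sum_translate (Fc C U J Y θ) n T (box L (C * n * T)) (box L ((C + 1) * n * T)) ?_ ?_
  · set Bd := l * (T : ℝ) ^ (j + 1) + (l⁻¹) ^ (2 ^ j - 1) *
          H j T (θ * ((j + 1).factorial * n ^ j : ℕ)) with hBd
    have hline : ∀ x : 𝓞 L, ‖∑ t ∈ Finset.range T, Fc C U J Y θ (shift x n t)‖ * (T : ℝ) ^ j ≤ W * Bd := by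
      intro x
      have := Fc_line (C := C) (by linarith) U hU J hJ Y j hj θ x T hT l hl
      rw [← hn, ← hBd] at this
      refine this.trans (le_of_eq ?_)
      rw [hW]; ring
    have h3 : (T : ℝ) ^ (j + 1) * ‖∑ x ∈ box L (C * n * T), Fc C U J Y θ x‖ ≤
        (T : ℝ) ^ (j + 1) * (K * ((C + 1) * n) ^ (j + 1) * W * Bd) := by
      calc (T : ℝ) ^ (j + 1) * ‖∑ x ∈ box L (C * n * T), Fc C U J Y θ x‖
          = ‖(T : ℂ) * ∑ x ∈ box L (C * n * T), Fc C U J Y θ x‖ * (T : ℝ) ^ j := by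
            rw [norm_mul, Complex.norm_natCast]; ring
        _ ≤ (∑ x ∈ box L ((C + 1) * n * T), ‖∑ t ∈ Finset.range T, Fc C U J Y θ (shift x n t)‖) *
              (T : ℝ) ^ j := by
            rw [htr]; gcongr; exact norm_sum_le _ _
        _ ≤ ∑ x ∈ box L ((C + 1) * n * T), W * Bd := by
            rw [Finset.sum_mul]; exact Finset.sum_le_sum fun x _ => hline x
        _ = (box L ((C + 1) * n * T)).card * (W * Bd) := by rw [Finset.sum_const, nsmul_eq_mul]
        _ ≤ (K * ((C + 1) * n * T) ^ (j + 1)) * (W * Bd) := by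
            have hBd0 : 0 ≤ W * Bd := le_trans (by positivity) (hline 0)
            refine mul_le_mul_of_nonneg_right ?_ hBd0
            rw [← hj]
            refine hbox _ ?_
            exact one_le_mul_of_one_le_of_one_le (one_le_mul_of_one_le_of_one_le (by linarith) hn1') hT1
        _ = _ := by rw [mul_pow]; ring
    exact le_of_mul_le_mul_left h3 (by positivity)
  · intro x hx
    rw [Fc] at hx
    split_ifs at hx with h
    · exact hA x h.2.2.1 h.2.2.2
    · exact absurd rfl hx
  · intro x t ht hx
    rw [mem_box] at hx ⊢
    intro φ
    have h3 := hx φ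
    rw [coe_shift, map_add, map_mul, map_natCast, map_natCast] at h3
    have h4 : ‖φ (x : L)‖ ≤ ‖φ (x : L) + t * n‖ + ‖(t * n : ℂ)‖ := by
      have := norm_sub_le (φ (x : L) + t * n) (t * n : ℂ)
      simpa using this
    have h5 : ‖(t * n : ℂ)‖ ≤ T * n := by
      rw [norm_mul, Complex.norm_natCast, Complex.norm_natCast]; gcongr
    linarith

variable (L) in
/-- Weyl's inequality for the norm form, summed over all ideals. -/
lemma ideal_weyl (j : ℕ) (hj : Module.finrank ℚ L = j + 1) :
    ∃ (K : ℝ) (M : ClassGroup (𝓞 L) → ℕ), 0 < K ∧ (∀ c, 0 < M c) ∧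
      ∀ (Y T : ℕ), 0 < T → Y ≤ T ^ (j + 1) → ∀ θ l : ℝ, 0 < l →
      ‖∑ b ∈ ideals L Y, eF (θ * Ideal.absNorm b)‖ ≤
      K * (l * (T : ℝ) ^ (j + 1) + (l⁻¹) ^ (2 ^ j - 1) * ∑ c, H j T (θ * M c)) := by
  obtain ⟨C, U, hC, hU, h1, h2⟩ := exists_domain L
  have hsurj := fun c : ClassGroup (𝓞 L) => ClassGroup.mk0_surjective c⁻¹
  choose J hJ using hsurj
  have hJ0 : ∀ c, (J c : Ideal (𝓞 L)) ≠ ⊥ := fun c => nonZeroDivisors.coe_ne_zero (J c)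
  choose K hK hK2 using fun c => class_bound hC U hU h1 h2 (J c : Ideal (𝓞 L)) (hJ0 c) j hj
  refine ⟨∑ c, K c, fun c => (j + 1).factorial * Ideal.absNorm (J c : Ideal (𝓞 L)) ^ j,
    Finset.sum_pos (fun c _ => hK c) Finset.univ_nonempty, fun c => ?_, ?_⟩
  · have : 0 < Ideal.absNorm (J c : Ideal (𝓞 L)) :=
      Nat.pos_of_ne_zero (Ideal.absNorm_eq_zero_iff.not.2 (hJ0 c))
    positivity
  intro Y T hT hY θ l hl
  have hsplit : ∑ b ∈ ideals L Y, eF (θ * Ideal.absNorm b) = ∑ c, ∑ b ∈ (ideals L Y).filter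
      (fun b => ∃ x, Ideal.span {x} = b * (J c : Ideal (𝓞 L))), eF (θ * Ideal.absNorm b) := by
    simp only [Finset.sum_filter]
    rw [Finset.sum_comm]
    refine Finset.sum_congr rfl fun b hb => ?_
    rw [mem_ideals] at hb
    have hb0 : b ∈ nonZeroDivisors (Ideal (𝓞 L)) := mem_nonZeroDivisors_of_ne_zero hb.1
    have hiff : ∀ c, (∃ x, Ideal.span {x} = b * (J c : Ideal (𝓞 L))) ↔
        ClassGroup.mk0 ⟨b, hb0⟩ = c := by
      intro c
      have h3 : ClassGroup.mk0 (⟨b, hb0⟩ * J c) = 1 ↔ ClassGroup.mk0 ⟨b, hb0⟩ = c := by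
        rw [map_mul, hJ, mul_inv_eq_one]
      rw [← h3, ClassGroup.mk0_eq_one_iff]
      constructor
      · rintro ⟨x, hx⟩; exact ⟨x, hx.symm⟩
      · rintro ⟨x, hx⟩; exact ⟨x, hx.symm⟩
    simp only [hiff, Finset.sum_ite_eq, Finset.mem_univ, if_true]
  rw [hsplit]
  refine (norm_sum_le _ _).trans ?_
  rw [Finset.sum_mul]
  refine Finset.sum_le_sum fun c _ => (hK2 c Y T hT hY θ l hl).trans ?_
  refine mul_le_mul_of_nonneg_left ?_ (hK c).le
  have : H j T (θ * ((j + 1).factorial * Ideal.absNorm (J c : Ideal (𝓞 L)) ^ j : ℕ)) ≤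
      ∑ c, H j T (θ * ((j + 1).factorial * Ideal.absNorm (J c : Ideal (𝓞 L)) ^ j : ℕ)) :=
    Finset.single_le_sum (f := fun c => H j T (θ * ((j + 1).factorial *
      Ideal.absNorm (J c : Ideal (𝓞 L)) ^ j : ℕ))) (fun _ _ => H_nonneg _ _ _) (Finset.mem_univ c)
  gcongr

end

end VMI

/-! ### Ideals of given norm -/

namespace VMI

section

open UniqueFactorizationMonoid

variable (L : Type*) [Field L] [NumberField L]

/-- The ideals of norm `n`. -/
noncomputable def idn (n : ℕ) : Finset (Ideal (𝓞 L)) := (Ideal.finite_setOfPred_absNorm_eq n).toFinset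

/-- The prime ideals above the rational prime `p`. -/
noncomputable def above (p : ℕ) : Finset (Ideal (𝓞 L)) :=
  (normalizedFactors (Ideal.span {(p : 𝓞 L)})).toFinset

variable {L}

lemma mem_idn {n : ℕ} {I : Ideal (𝓞 L)} : I ∈ idn L n ↔ Ideal.absNorm I = n := by
  simp [idn]

lemma norm_prime {P : Ideal (𝓞 L)} (hP : Prime P) :
    ∃ p k, 0 < k ∧ p.Prime ∧ Ideal.absNorm P = p ^ k ∧ P ∈ above L p := by
  have h1 := Ideal.isPrime_of_prime hP
  have h2 : P.IsMaximal := h1.isMaximal hP.ne_zero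
  obtain ⟨p, k, hk, hpP, hp, h⟩ := Ideal.exists_prime_and_absNorm_eq_pow P
  refine ⟨p, k, hk, hp, h, ?_⟩
  rw [above, Multiset.mem_toFinset, mem_normalizedFactors_iff' ]
  · refine ⟨hP.irreducible, normalize_eq _, ?_⟩
    rw [Ideal.dvd_span_singleton]; exact hpP
  · have : (p : 𝓞 L) ≠ 0 := by exact_mod_cast hp.ne_zero
    simpa using this

lemma two_le_norm {P : Ideal (𝓞 L)} (hP : Prime P) : 2 ≤ Ideal.absNorm P := by
  obtain ⟨p, k, hk, hp, h, -⟩ := norm_prime hP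
  rw [h]
  exact hp.two_le.trans (Nat.le_self_pow hk.ne' p)

/-- At most `[L : ℚ]` primes lie above a rational prime: compare norms in `∏ P ∣ p`. -/
lemma card_above {p : ℕ} (hp : p.Prime) : (above L p).card ≤ Module.finrank ℚ L := by
  have hp0 : (p : 𝓞 L) ≠ 0 := by exact_mod_cast hp.ne_zero
  have hs : Ideal.span {(p : 𝓞 L)} ≠ 0 := by simpa using hp0
  have hprime : ∀ P ∈ above L p, Prime P := fun P hP =>
    prime_of_normalized_factor P (Multiset.mem_toFinset.1 hP)
  have h1 : ∏ P ∈ above L p, P ∣ Ideal.span {(p : 𝓞 L)} := by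
    refine Finset.prod_primes_dvd _ hprime fun P hP => ?_
    exact dvd_of_mem_normalizedFactors (Multiset.mem_toFinset.1 hP)
  have h2 := map_dvd (Ideal.absNorm (S := 𝓞 L)) h1
  rw [map_prod, Ideal.absNorm_span_natCast, RingOfIntegers.rank] at h2
  have h3 : ∀ P ∈ above L p, p ≤ Ideal.absNorm P := by
    intro P hP
    have h4 : Ideal.absNorm P ∣ p ^ Module.finrank ℚ L :=
      (Finset.dvd_prod_of_mem _ hP).trans h2
    obtain ⟨k, -, hk⟩ := (Nat.dvd_prime_pow hp).1 h4
    have := two_le_norm (hprime P hP)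
    rw [hk] at this ⊢
    refine Nat.le_self_pow ?_ p
    rintro rfl
    rw [pow_zero] at this
    omega
  have h4 : p ^ (above L p).card ≤ p ^ Module.finrank ℚ L := by
    rw [← Finset.prod_const]
    exact (Finset.prod_le_prod' h3).trans (Nat.le_of_dvd (pow_pos hp.pos _) h2)
  exact (Nat.pow_le_pow_iff_right hp.one_lt).1 h4

lemma pow_count_dvd {I : Ideal (𝓞 L)} (hI : I ≠ 0) (P : Ideal (𝓞 L)) :
    P ^ (normalizedFactors I).count P ∣ I := by
  have h := Multiset.le_count_iff_replicate_le.1 (le_refl ((normalizedFactors I).count P))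
  have h2 := Multiset.prod_dvd_prod_of_le h
  rwa [Multiset.prod_replicate, prod_normalizedFactors_eq, normalize_eq] at h2
  exact hI

lemma normalizedFactors_inj {I J : Ideal (𝓞 L)} (hI : I ≠ 0) (hJ : J ≠ 0)
    (h : normalizedFactors I = normalizedFactors J) : I = J := by
  have h1 := prod_normalizedFactors_eq hI
  have h2 := prod_normalizedFactors_eq hJ
  rw [h, h2, normalize_eq, normalize_eq] at h1
  exact h1.symm

/-- An ideal of norm `n` is determined by its exponents at the primes above the divisors `p` of `n`;
there are at most `[L : ℚ]` such primes for each `p`, with exponents at most `v_p(n)`. -/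
lemma card_idn_le (n : ℕ) (hn : n ≠ 0) :
    (idn L n).card ≤ n.divisors.card ^ Module.finrank ℚ L := by
  have hI0 : ∀ I ∈ idn L n, I ≠ 0 := by
    rintro I hI rfl
    rw [mem_idn] at hI
    exact hn (by rw [← hI]; simp)
  set t : Finset ((p : ℕ) → p ∈ n.primeFactors → (P : Ideal (𝓞 L)) → P ∈ above L p → ℕ) :=
    n.primeFactors.pi (fun p => (above L p).pi (fun _ => Finset.range (n.factorization p + 1))) with ht
  have h1 : (idn L n).card ≤ t.card := by
    refine Finset.card_le_card_of_injOn
      (fun I => fun p _ P _ => (normalizedFactors I).count P) ?_ ?_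
    · intro I hI
      have hI0' := hI0 I hI
      have hI' := mem_idn.1 hI
      rw [ht, Finset.mem_coe, Finset.mem_pi]
      intro p hp
      rw [Finset.mem_pi]
      intro P hP
      rw [Finset.mem_range, Nat.lt_succ_iff]
      have hpp := Nat.prime_of_mem_primeFactors hp
      have hPp : Prime P := prime_of_normalized_factor P (Multiset.mem_toFinset.1 hP)
      rw [← hpp.pow_dvd_iff_le_factorization hn]
      have h2 : p ∣ Ideal.absNorm P := by
        have h3 := map_dvd (Ideal.absNorm (S := 𝓞 L))
          (dvd_of_mem_normalizedFactors (Multiset.mem_toFinset.1 hP))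
        rw [Ideal.absNorm_span_natCast] at h3
        obtain ⟨k, -, hk⟩ := (Nat.dvd_prime_pow hpp).1 h3
        have := two_le_norm hPp
        rw [hk] at this ⊢
        refine dvd_pow_self p ?_
        rintro rfl
        rw [pow_zero] at this
        omega
      refine (pow_dvd_pow_of_dvd h2 _).trans ?_
      have h3 := map_dvd (Ideal.absNorm (S := 𝓞 L)) (pow_count_dvd hI0' P)
      rwa [map_pow, hI'] at h3
    · intro I hI J hJ h
      have hmain : ∀ I ∈ idn L n, ∀ P ∈ normalizedFactors I, ∃ p ∈ n.primeFactors, P ∈ above L p := by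
        intro I hI P hP
        obtain ⟨p, k, hk, hp, h1, h2⟩ := norm_prime (prime_of_normalized_factor P hP)
        refine ⟨p, ?_, h2⟩
        rw [Nat.mem_primeFactors]
        refine ⟨hp, ?_, hn⟩
        rw [← mem_idn.1 hI]
        refine (dvd_pow_self p hk.ne').trans ?_
        rw [← h1]
        exact map_dvd _ (dvd_of_mem_normalizedFactors hP)
      refine normalizedFactors_inj (hI0 I hI) (hI0 J hJ) (Multiset.ext.2 fun P => ?_)
      by_cases hP : ∃ p ∈ n.primeFactors, P ∈ above L p
      · obtain ⟨p, hp, hP⟩ := hP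
        exact congrFun (congrFun (congrFun (congrFun h p) hp) P) hP
      · rw [Multiset.count_eq_zero_of_notMem (fun h1 => hP (hmain I hI P h1)),
          Multiset.count_eq_zero_of_notMem (fun h1 => hP (hmain J hJ P h1))]
  refine h1.trans ?_
  rw [ht, Finset.card_pi, Nat.card_divisors hn, ← Finset.prod_pow]
  refine Finset.prod_le_prod' fun p hp => ?_
  rw [Finset.card_pi, Finset.prod_const, Finset.card_range]
  exact Nat.pow_le_pow_right (Nat.succ_pos _) (card_above (Nat.prime_of_mem_primeFactors hp))

variable (L) in
/-- The arithmetic function `n ↦ ∑ f(𝔞)` over the ideals `𝔞` of norm `n`. -/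
noncomputable def push (f : Ideal (𝓞 L) → ℝ) : ArithmeticFunction ℝ :=
  ⟨fun n => if n = 0 then 0 else ∑ I ∈ idn L n, f I, by simp⟩

lemma push_apply (f : Ideal (𝓞 L) → ℝ) {n : ℕ} (hn : n ≠ 0) : push L f n = ∑ I ∈ idn L n, f I := by
  simp [push, hn]

variable (L) in
/-- The number of ideals of norm `n`. -/
noncomputable def rr : ArithmeticFunction ℝ := push L (fun _ => 1)

lemma rr_apply {n : ℕ} (hn : n ≠ 0) : rr L n = (idn L n).card := by
  rw [rr, push_apply _ hn]; simp

lemma rr_nonneg (n : ℕ) : 0 ≤ rr L n := by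
  by_cases hn : n = 0
  · simp [hn]
  · rw [rr_apply hn]; positivity

lemma D_two (n : ℕ) : D 2 n = n.divisors.card := by
  rw [D_succ, Finset.sum_congr rfl (g := fun _ => (1 : ℝ)), Finset.sum_const, nsmul_eq_mul, mul_one]
  intro c hc
  rw [D, pow_one, zeta_apply' (Nat.pos_of_mem_divisors hc).ne']

lemma D_pow (j k n : ℕ) (hn : n ≠ 0) : D j n ^ k ≤ D (j ^ k) n := by
  induction k with
  | zero => rw [pow_zero, pow_zero, D, pow_one, zeta_apply' hn]
  | succ k ih =>
    rw [pow_succ, pow_succ]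
    exact (mul_le_mul_of_nonneg_right ih (D_nonneg _ _)).trans (D_mul_D _ _ _)

variable (L) in
/-- The number of ideals of norm `n` is at most `τ_{2^d}(n)`. -/
lemma rr_le (n : ℕ) : rr L n ≤ D (2 ^ Module.finrank ℚ L) n := by
  by_cases hn : n = 0
  · simp [hn]
  · refine le_trans ?_ (D_pow 2 _ n hn)
    rw [rr_apply hn, D_two]
    exact_mod_cast card_idn_le n hn

lemma abs_push_le {f : Ideal (𝓞 L) → ℝ} {g : ℕ → ℝ} (hf : ∀ I, |f I| ≤ g (Ideal.absNorm I)) (n : ℕ) :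
    |push L f n| ≤ rr L n * g n := by
  by_cases hn : n = 0
  · simp [hn]
  · rw [push_apply _ hn, rr_apply hn, ← nsmul_eq_mul]
    refine (Finset.abs_sum_le_sum_abs _ _).trans (Finset.sum_le_card_nsmul _ _ _ fun I hI => ?_)
    rw [← mem_idn.1 hI]; exact hf I

/-- Divisors of a nonzero ideal. -/
noncomputable def dvs (c : Ideal (𝓞 L)) : Finset (Ideal (𝓞 L)) :=
  (Ideal.finite_setOfPred_absNorm_le (Ideal.absNorm c)).toFinset.filter (· ∣ c)

lemma mem_dvs {c : Ideal (𝓞 L)} (hc : c ≠ 0) {a : Ideal (𝓞 L)} : a ∈ dvs c ↔ a ∣ c := by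
  simp only [dvs, Finset.mem_filter, Set.Finite.mem_toFinset, Set.mem_ofPred_eq, and_iff_right_iff_imp]
  intro h
  exact Nat.le_of_dvd (Nat.pos_of_ne_zero (Ideal.absNorm_eq_zero_iff.not.2 hc)) (map_dvd _ h)

/-- Convolution with `r` corresponds to summation over the divisors of an ideal. -/
lemma push_mul_rr (f : Ideal (𝓞 L) → ℝ) : push L f * rr L = push L (fun c => ∑ a ∈ dvs c, f a) := by
  ext n
  by_cases hn : n = 0
  · simp [hn]
  rw [push_apply _ hn, ArithmeticFunction.mul_apply]
  have h1 : ∀ p ∈ n.divisorsAntidiagonal, push L f p.1 * rr L p.2 =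
      ∑ x ∈ idn L p.1 ×ˢ idn L p.2, f x.1 := by
    intro p hp
    rw [Nat.mem_divisorsAntidiagonal] at hp
    have h2 : p.1 ≠ 0 := left_ne_zero_of_mul (hp.1.trans_ne hn)
    have h3 : p.2 ≠ 0 := right_ne_zero_of_mul (hp.1.trans_ne hn)
    rw [push_apply _ h2, rr, push_apply _ h3, Finset.sum_mul_sum, Finset.sum_product]
    simp
  rw [Finset.sum_congr rfl h1, Finset.sum_sigma', Finset.sum_sigma']
  have hc0 : ∀ c ∈ idn L n, c ≠ 0 := by
    rintro I hI rfl
    rw [mem_idn] at hI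
    exact hn (by rw [← hI]; simp)
  refine Finset.sum_bij (fun x _ => (⟨x.2.1 * x.2.2, x.2.1⟩ : Σ _ : Ideal (𝓞 L), Ideal (𝓞 L)))
    ?_ ?_ ?_ ?_
  · rintro ⟨⟨k, m⟩, a, b⟩ hx
    simp only [Finset.mem_sigma, Finset.mem_product, mem_idn, Nat.mem_divisorsAntidiagonal] at hx ⊢
    obtain ⟨⟨h2, -⟩, h3, h4⟩ := hx
    have h5 : Ideal.absNorm (a * b) = n := by rw [map_mul, h3, h4, h2]
    exact ⟨h5, (mem_dvs (hc0 _ (mem_idn.2 h5))).2 (dvd_mul_right a b)⟩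
  · rintro ⟨⟨k, m⟩, a, b⟩ hx ⟨⟨k', m'⟩, a', b'⟩ hx' h
    simp only [Finset.mem_sigma, Finset.mem_product, mem_idn, Nat.mem_divisorsAntidiagonal] at hx hx'
    obtain ⟨⟨h2, -⟩, rfl, rfl⟩ := hx
    obtain ⟨-, rfl, rfl⟩ := hx'
    simp only [Sigma.mk.injEq, heq_eq_eq] at h
    obtain ⟨h3, rfl⟩ := h
    have ha : a ≠ 0 := by
      rintro rfl
      exact hn (by rw [← h2]; simp)
    obtain rfl := mul_left_cancel₀ ha h3
    rfl
  · rintro ⟨c, a⟩ hx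
    simp only [Finset.mem_sigma] at hx
    obtain ⟨b, rfl⟩ := (mem_dvs (hc0 _ hx.1)).1 hx.2
    refine ⟨⟨(Ideal.absNorm a, Ideal.absNorm b), (a, b)⟩, ?_, rfl⟩
    simp only [Finset.mem_sigma, Finset.mem_product, mem_idn, Nat.mem_divisorsAntidiagonal, and_self,
      and_true]
    have := mem_idn.1 hx.1
    rw [map_mul] at this
    exact ⟨this, hn⟩
  · intro x _
    rfl

end

end VMI

/-! ### The von Mangoldt and Möbius functions on ideals -/

namespace VMI

section

open UniqueFactorizationMonoid

variable {L : Type*} [Field L] [NumberField L]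

lemma Lam_pow {P : Ideal (𝓞 L)} (hP : Prime P) {n : ℕ} (hn : n ≠ 0) :
    LamIdeal L (P ^ n) = Real.log (Ideal.absNorm P) := by
  have h1 := Ideal.isPrime_of_prime hP
  rw [LamIdeal, if_pos ⟨P, n, h1, hP.ne_zero, hn, rfl⟩, Ideal.radical_pow _ hn, h1.radical]

lemma Lam_ne_zero {I : Ideal (𝓞 L)} (h : LamIdeal L I ≠ 0) :
    ∃ P n, Prime P ∧ n ≠ 0 ∧ I = P ^ n := by
  rw [LamIdeal] at h
  split_ifs at h with h1
  · obtain ⟨P, n, h2, h3, h4, h5⟩ := h1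
    exact ⟨P, n, Ideal.prime_of_isPrime h3 h2, h4, h5⟩
  · exact absurd rfl h

lemma Lam_nonneg (I : Ideal (𝓞 L)) : 0 ≤ LamIdeal L I := by
  rw [LamIdeal]
  split_ifs
  · exact Real.log_natCast_nonneg _
  · exact le_rfl

lemma Lam_le (I : Ideal (𝓞 L)) : |LamIdeal L I| ≤ Real.log (Ideal.absNorm I) := by
  rw [abs_of_nonneg (Lam_nonneg I)]
  by_cases h : LamIdeal L I = 0
  · rw [h]; exact Real.log_natCast_nonneg _
  · obtain ⟨P, n, hP, hn, rfl⟩ := Lam_ne_zero h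
    rw [Lam_pow hP hn, map_pow]
    have := two_le_norm hP
    refine Real.log_le_log (by positivity) ?_
    exact_mod_cast Nat.le_self_pow hn _

/-- Passing from `𝔞` to `𝔭𝔞` creates exactly one new prime power divisor. -/
lemma sum_Lam (c : Ideal (𝓞 L)) (hc : c ≠ 0) :
    ∑ a ∈ dvs c, LamIdeal L a = Real.log (Ideal.absNorm c) := by
  induction c using induction_on_prime with
  | h₁ => exact absurd rfl hc
  | h₂ x hx =>
    rw [Ideal.isUnit_iff] at hx
    subst hx
    rw [Ideal.absNorm_top, Nat.cast_one, Real.log_one]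
    refine Finset.sum_eq_zero fun a ha => ?_
    by_contra h
    obtain ⟨P, n, hP, hn, rfl⟩ := Lam_ne_zero h
    have h1 := (mem_dvs hc).1 ha
    rw [← Ideal.one_eq_top, ← isUnit_iff_dvd_one, isUnit_pow_iff hn] at h1
    exact hP.not_isUnit h1
  | h₃ a p ha hp ih =>
    have h1 : dvs a ⊆ dvs (p * a) := fun x hx =>
      (mem_dvs hc).2 (((mem_dvs ha).1 hx).trans (dvd_mul_left a p))
    rw [← Finset.sum_sdiff h1, ih ha, map_mul, Nat.cast_mul, Real.log_mul, add_left_inj]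
    · obtain ⟨v, b, hb, hab⟩ := WfDvdMonoid.max_power_factor ha hp.irreducible
      have h2 : ¬ p ^ (v + 1) ∣ a := by
        rw [hab, pow_succ, mul_dvd_mul_iff_left (pow_ne_zero _ hp.ne_zero)]
        exact hb
      rw [Finset.sum_eq_single (p ^ (v + 1)), Lam_pow hp (Nat.succ_ne_zero v)]
      · intro x hx hne
        rw [Finset.mem_sdiff, mem_dvs hc, mem_dvs ha] at hx
        by_contra h
        obtain ⟨Q, n, hQ, hn, rfl⟩ := Lam_ne_zero h
        by_cases hQp : Q ∣ p
        · obtain rfl : Q = p := by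
            rw [hQ.dvd_prime_iff_associated hp, associated_iff_eq] at hQp
            exact hQp
          have h3 : Q ^ n ∣ Q ^ (v + 1) * b := by
            rw [pow_succ', mul_assoc, ← hab]; exact hx.1
          have h4 := hQ.pow_dvd_of_dvd_mul_right n hb h3
          rw [pow_dvd_pow_iff hQ.ne_zero hQ.not_isUnit] at h4
          rcases h4.lt_or_eq with h5 | h5
          · refine hx.2 ?_
            rw [hab]
            exact (pow_dvd_pow Q (Nat.lt_succ_iff.1 h5)).mul_right b
          · exact hne (by rw [h5])
        · exact hx.2 (hQ.pow_dvd_of_dvd_mul_left n hQp hx.1)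
      · intro h
        refine absurd ?_ h
        rw [Finset.mem_sdiff, mem_dvs hc, mem_dvs ha]
        refine ⟨?_, h2⟩
        rw [hab, ← mul_assoc, ← pow_succ']
        exact dvd_mul_right _ _
    · have := two_le_norm hp
      exact_mod_cast (by omega : Ideal.absNorm p ≠ 0)
    · exact_mod_cast Ideal.absNorm_eq_zero_iff.not.2 ha

/-- The Möbius function on ideals. -/
noncomputable def muI (I : Ideal (𝓞 L)) : ℝ :=
  if Squarefree I then (-1) ^ (normalizedFactors I).card else 0

lemma muI_le (I : Ideal (𝓞 L)) : |muI I| ≤ 1 := by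
  rw [muI]
  split_ifs <;> simp

lemma muI_mul {p a : Ideal (𝓞 L)} (hp : Prime p) (ha : ¬ p ∣ a) : muI (p * a) = - muI a := by
  have h1 : IsRelPrime p a := hp.irreducible.isRelPrime_iff_not_dvd.2 ha
  have ha0 : a ≠ 0 := by rintro rfl; exact ha (dvd_zero p)
  rw [muI, muI, squarefree_mul_iff, and_iff_right h1, and_iff_right hp.irreducible.squarefree]
  split_ifs
  · rw [normalizedFactors_mul hp.ne_zero ha0, normalizedFactors_irreducible hp.irreducible,
      Multiset.card_add, Multiset.card_singleton]
    ring
  · simp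

/-- Möbius inversion for ideals: for a prime `p` dividing `c`, the divisors of `c` cancel in pairs
`a`, `p * a`. -/
lemma sum_mu (c : Ideal (𝓞 L)) (hc : c ≠ 0) : ∑ a ∈ dvs c, muI a = if c = 1 then 1 else 0 := by
  split_ifs with h1
  · subst h1
    have : dvs (1 : Ideal (𝓞 L)) = {1} := by
      ext a
      rw [mem_dvs hc, Finset.mem_singleton, ← isUnit_iff_dvd_one, Ideal.isUnit_iff, Ideal.one_eq_top]
    rw [this, Finset.sum_singleton, muI, if_pos squarefree_one, normalizedFactors_one]
    simp
  · have hu : ¬ IsUnit c := by rwa [Ideal.isUnit_iff, ← Ideal.one_eq_top]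
    obtain ⟨p, hp, hpc⟩ := WfDvdMonoid.exists_irreducible_factor hu hc
    have hpp := hp.prime
    -- Squarefree divisors divisible by `p` are `p` times those that are not.
    rw [← Finset.sum_filter_add_sum_filter_not _ (fun a => ¬ p ∣ a)]
    have h2 : ∑ a ∈ (dvs c).filter (fun a => ¬ ¬ p ∣ a), muI a =
        ∑ a ∈ (dvs c).filter (fun a => ¬ p ∣ a), muI (p * a) := by
      symm
      rw [← Finset.sum_image (g := fun a => p * a) (f := muI)
        (fun a _ b _ h => mul_left_cancel₀ hpp.ne_zero h)]
      refine Finset.sum_subset ?_ ?_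
      · intro x hx
        obtain ⟨a, ha, rfl⟩ := Finset.mem_image.1 hx
        rw [Finset.mem_filter, mem_dvs hc] at ha ⊢
        refine ⟨?_, not_not.2 (dvd_mul_right p a)⟩
        exact (hp.isRelPrime_iff_not_dvd.2 ha.2).mul_dvd hpc ha.1
      · intro x hx hx'
        rw [Finset.mem_filter, mem_dvs hc, not_not] at hx
        obtain ⟨hxc, a, rfl⟩ := hx
        rw [muI, if_neg]
        rw [squarefree_mul_iff, hp.isRelPrime_iff_not_dvd]
        rintro ⟨h3, -, -⟩
        refine hx' (Finset.mem_image_of_mem _ ?_)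
        rw [Finset.mem_filter, mem_dvs hc]
        exact ⟨(dvd_mul_left a p).trans hxc, h3⟩
    rw [h2, ← Finset.sum_add_distrib]
    refine Finset.sum_eq_zero fun a ha => ?_
    rw [muI_mul hpp (Finset.mem_filter.1 ha).2]
    ring

lemma push_congr {f g : Ideal (𝓞 L) → ℝ} (h : ∀ c, c ≠ 0 → f c = g c) : push L f = push L g := by
  ext n
  by_cases hn : n = 0
  · simp [hn]
  rw [push_apply _ hn, push_apply _ hn]
  refine Finset.sum_congr rfl fun I hI => h I ?_
  rintro rfl
  rw [mem_idn] at hI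
  exact hn (by rw [← hI]; simp)

variable (L) in
/-- The push-forward of the von Mangoldt function along the norm. -/
noncomputable def lam : ArithmeticFunction ℝ := push L (LamIdeal L)

variable (L) in
/-- The push-forward of the Möbius function along the norm. -/
noncomputable def mu : ArithmeticFunction ℝ := push L muI

variable (L) in
/-- `n ↦ r(n) log n`. -/
noncomputable def rlog : ArithmeticFunction ℝ := ⟨fun n => rr L n * Real.log n, by simp⟩

/-- The push-forward of `∑_{𝔞 ∣ 𝔠} Λ_L(𝔞) = log N(𝔠)`. -/
lemma lam_mul_rr : lam L * rr L = rlog L := by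
  rw [lam, push_mul_rr, push_congr sum_Lam]
  ext n
  by_cases hn : n = 0
  · simp [hn]
  rw [push_apply _ hn, rlog, ArithmeticFunction.coe_mk, rr_apply hn, ← nsmul_eq_mul,
    Finset.sum_congr rfl fun I hI => by rw [mem_idn.1 hI], Finset.sum_const]

/-- The push-forward of `∑_{𝔞 ∣ 𝔠} μ(𝔞) = [𝔠 = 1]`. -/
lemma mu_mul_rr : mu L * rr L = 1 := by
  rw [mu, push_mul_rr, push_congr sum_mu]
  ext n
  by_cases hn : n = 0
  · simp [hn]
  rw [push_apply _ hn, ArithmeticFunction.one_apply, Finset.sum_ite_eq']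
  refine if_congr ?_ rfl rfl
  rw [mem_idn, map_one]
  exact eq_comm

lemma lam_nonneg (n : ℕ) : 0 ≤ lam L n := by
  by_cases hn : n = 0
  · simp [hn]
  rw [lam, push_apply _ hn]
  exact Finset.sum_nonneg fun I _ => Lam_nonneg I

lemma lam_le (n : ℕ) : lam L n ≤ rr L n * Real.log n :=
  (le_abs_self _).trans (abs_push_le (g := fun n => Real.log n) Lam_le n)

lemma abs_mu_le (n : ℕ) : |mu L n| ≤ rr L n := by
  have := abs_push_le (L := L) (g := fun _ => 1) muI_le n
  rwa [mul_one] at this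

end

end VMI

/-! ### The parameters, and the number of ideals -/

namespace VMI

section

/-- The range of parameters in which a saving of `v` over the trivial bound is proved in degree `d`:
the denominator `q` lies between `v^{-2^d}` and `X v^{2^d}`, and `v` is not smaller than a fixed
negative power of `X`, which keeps the lengths of the lines above `v^{-2^d}`. -/
structure Par (d : ℕ) (X α v : ℝ) (q : ℕ) : Prop where
  hX : 2 ≤ X
  hα : HasRatApprox α q
  hq : 0 < q
  v0 : 0 < v
  v1 : v ≤ 1
  q1 : (1 : ℝ) / q ≤ v ^ 2 ^ d
  q2 : (q : ℝ) ≤ X * v ^ 2 ^ d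
  X1 : X ^ (-(1 / (4 * d) : ℝ)) ≤ v ^ 2 ^ d

/-- The basic logarithm `1 + log X`. -/
noncomputable def el (X : ℝ) : ℝ := 1 + Real.log X

lemma one_le_el {X : ℝ} (hX : 2 ≤ X) : 1 ≤ el X := by
  have := Real.log_nonneg (by linarith : 1 ≤ X)
  rw [el]; linarith

lemma log_le_el {X c : ℝ} (hX : 2 ≤ X) (hc : 1 ≤ c) (n : ℕ) (hn : (n : ℝ) ≤ c * X) :
    1 + Real.log n ≤ (1 + Real.log c) * el X := by
  have h1 := Real.log_nonneg hc
  have h2 := Real.log_nonneg (by linarith : 1 ≤ X)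
  rw [el]
  rcases Nat.eq_zero_or_pos n with rfl | h
  · simp only [Nat.cast_zero, Real.log_zero, add_zero]
    nlinarith
  · have h3 : Real.log n ≤ Real.log c + Real.log X := by
      rw [← Real.log_mul (by linarith) (by linarith)]
      exact Real.log_le_log (by exact_mod_cast h) hn
    nlinarith

variable {d : ℕ} {X α v : ℝ} {q : ℕ}

lemma Par.vD (h : Par d X α v q) : v ^ 2 ^ d ≤ 1 := pow_le_one₀ h.v0.le h.v1

lemma Par.vD0 (h : Par d X α v q) : 0 < v ^ 2 ^ d := pow_pos h.v0 _

lemma Par.qX (h : Par d X α v q) : (q : ℝ) ≤ X := by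
  have := h.hX
  exact h.q2.trans (mul_le_of_le_one_right (by linarith) h.vD)

/-- `sum_G` for the multiples of `α M`, in the range of parameters where each of its three terms saves a
factor `v^{2^d}`. The fixed multiplier `M` is absorbed by passing to multiples of `α` in a range `M`
times as long. -/
lemma G_sum_le (h : Par d X α v q) (c : ℝ) (hc : 1 ≤ c) (M : ℕ) (hM : 0 < M) (N : ℕ)
    (hN : (N : ℝ) ≤ c * (X * v ^ 2 ^ d)) :
    ∑ n ∈ Finset.Icc 1 N, G (c * X / n) (α * M * n) ≤
      60 * (c * M) * (2 + Real.log (c * M)) * (X * v ^ 2 ^ d * el X) := by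
  have hX := h.hX
  have hX0 : 0 < X := by linarith
  have hM1 : (1 : ℝ) ≤ M := by exact_mod_cast hM
  have hcM : 1 ≤ c * M := one_le_mul_of_one_le_of_one_le hc hM1
  have hel := one_le_el hX
  have hlog := Real.log_nonneg hcM
  have hvD := h.vD
  have hvD0 := h.vD0
  have h1 : ∑ n ∈ Finset.Icc 1 N, G (c * X / n) (α * M * n) ≤
      ∑ n ∈ Finset.Icc 1 (M * N), G (c * M * X / n) (α * n) := by
    have h2 : ∀ n ∈ Finset.Icc 1 N, G (c * X / n) (α * M * n) =
        G (c * M * X / ((M * n : ℕ) : ℝ)) (α * ((M * n : ℕ) : ℝ)) := by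
      intro n hn
      have : (0 : ℝ) < n := by exact_mod_cast (Finset.mem_Icc.1 hn).1
      congr 1
      · push_cast; field_simp
      · push_cast; ring
    rw [Finset.sum_congr rfl h2, ← Finset.sum_image (s := Finset.Icc 1 N) (g := fun n => M * n)
      (f := fun n : ℕ => G (c * M * X / n) (α * n)) (fun a _ b _ h => Nat.eq_of_mul_eq_mul_left hM h)]
    refine Finset.sum_le_sum_of_subset_of_nonneg ?_ (fun i _ _ => G_nonneg (by positivity) _)
    intro x hx
    obtain ⟨n, hn, rfl⟩ := Finset.mem_image.1 hx
    rw [Finset.mem_Icc] at hn ⊢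
    exact ⟨Nat.mul_pos hM hn.1, Nat.mul_le_mul_left M hn.2⟩
  have h3 : ((M * N : ℕ) : ℝ) ≤ c * M * (X * v ^ 2 ^ d) := by
    push_cast
    calc (M : ℝ) * N ≤ M * (c * (X * v ^ 2 ^ d)) := by gcongr
      _ = _ := by ring
  have hl1 : 1 + Real.log (2 * q) ≤ (2 + Real.log (c * M)) * el X := by
    have := log_le_el hX (by norm_num : (1 : ℝ) ≤ 2) (2 * q)
      (by push_cast; linarith [h.qX])
    push_cast at this
    refine this.trans (mul_le_mul_of_nonneg_right ?_ (by linarith))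
    linarith [Real.log_two_lt_d9]
  have hl2 : 1 + Real.log ((M * N : ℕ) : ℝ) ≤ (2 + Real.log (c * M)) * el X := by
    have := log_le_el hX hcM (M * N) (h3.trans (by
      gcongr; exact mul_le_of_le_one_right hX0.le hvD))
    refine this.trans (mul_le_mul_of_nonneg_right ?_ (by linarith))
    linarith
  refine h1.trans ((sum_G α q h.hq h.hα (c * M * X) (by positivity) (M * N) _ hl1 hl2).trans ?_)
  have h4 : c * M * X / q ≤ c * M * (X * v ^ 2 ^ d) := by
    have := h.q1
    calc c * M * X / q = c * M * (X * (1 / q)) := by ring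
      _ ≤ _ := by gcongr
  have h5 : (q : ℝ) ≤ c * M * (X * v ^ 2 ^ d) :=
    h.q2.trans (le_mul_of_one_le_left (by positivity) hcM)
  calc 20 * (c * M * X / q + ((M * N : ℕ) : ℝ) + q) * ((2 + Real.log (c * M)) * el X)
      ≤ 20 * (c * M * (X * v ^ 2 ^ d) + c * M * (X * v ^ 2 ^ d) + c * M * (X * v ^ 2 ^ d)) *
        ((2 + Real.log (c * M)) * el X) := by gcongr
    _ = _ := by ring

section
variable {L : Type*} [Field L] [NumberField L]

/-- Grouping ideals by their norm. -/
lemma sum_ideals {E : Type*} [AddCommGroup E] [Module ℝ E] (f : Ideal (𝓞 L) → ℝ) (F : ℕ → E) (Y : ℕ) :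
    ∑ b ∈ ideals L Y, f b • F (Ideal.absNorm b) = ∑ n ∈ Finset.Icc 1 Y, push L f n • F n := by
  rw [← Finset.sum_fiberwise_of_maps_to (t := Finset.Icc 1 Y) (g := fun b => Ideal.absNorm b)]
  · refine Finset.sum_congr rfl fun n hn => ?_
    rw [Finset.mem_Icc] at hn
    rw [push_apply _ (by omega), Finset.sum_smul]
    have : (ideals L Y).filter (fun b => Ideal.absNorm b = n) = idn L n := by
      ext b
      rw [Finset.mem_filter, mem_ideals, mem_idn]
      constructor
      · exact fun h => h.2
      · rintro rfl
        refine ⟨⟨?_, hn.2⟩, rfl⟩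
        rintro rfl
        simp at hn
    rw [this]
    refine Finset.sum_congr rfl fun b hb => ?_
    rw [mem_idn.1 hb]
  · intro b hb
    rw [mem_ideals] at hb
    rw [Finset.mem_Icc]
    exact ⟨Nat.pos_of_ne_zero (Ideal.absNorm_eq_zero_iff.not.2 hb.1), hb.2⟩

variable (L) in
/-- `ideal_weyl` as a statement on the coefficients `r(n)`. -/
lemma norm_weyl (j : ℕ) (hj : Module.finrank ℚ L = j + 1) :
    ∃ (K : ℝ) (M : ClassGroup (𝓞 L) → ℕ), 0 < K ∧ (∀ c, 0 < M c) ∧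
      ∀ (Y T : ℕ), 0 < T → Y ≤ T ^ (j + 1) → ∀ θ l : ℝ, 0 < l →
      ‖∑ n ∈ Finset.Icc 1 Y, rr L n • eF (θ * n)‖ ≤
      K * (l * (T : ℝ) ^ (j + 1) + (l⁻¹) ^ (2 ^ j - 1) * ∑ c, H j T (θ * M c)) := by
  obtain ⟨K, M, h1, h2, h3⟩ := ideal_weyl L j hj
  refine ⟨K, M, h1, h2, fun Y T hT hY θ l hl => ?_⟩
  rw [rr, ← sum_ideals (fun _ => 1) (fun n => eF (θ * n))]
  simpa using h3 Y T hT hY θ l hl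

/-- An integer approximation from above to a `(j+1)`-st root. -/
lemma exists_root (j : ℕ) {Z : ℝ} (hZ : 1 ≤ Z) : ∃ T : ℕ, 0 < T ∧ Z ^ ((j + 1 : ℕ) : ℝ)⁻¹ ≤ T ∧
    Z ≤ (T : ℝ) ^ (j + 1) ∧ (T : ℝ) ^ (j + 1) ≤ 2 ^ (j + 1) * Z := by
  set z := Z ^ ((j + 1 : ℕ) : ℝ)⁻¹ with hz
  have hz1 : 1 ≤ z := Real.one_le_rpow hZ (by positivity)
  have hzp : z ^ (j + 1) = Z := Real.rpow_inv_natCast_pow (by linarith) (Nat.succ_ne_zero j)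
  refine ⟨⌈z⌉₊, Nat.ceil_pos.2 (by linarith), Nat.le_ceil z, ?_, ?_⟩
  · rw [← hzp]; gcongr; exact Nat.le_ceil z
  · rw [← hzp, ← mul_pow]
    gcongr
    have := Nat.ceil_lt_add_one (by linarith : 0 ≤ z)
    linarith

variable (L) in
/-- The number of ideals of norm at most `Y` is `O(Y)`. -/
lemma count_le : ∃ C : ℝ, 0 < C ∧ ∀ Y : ℕ, ∑ n ∈ Finset.Icc 1 Y, rr L n ≤ C * Y := by
  obtain ⟨j, hj⟩ : ∃ j, Module.finrank ℚ L = j + 1 :=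
    Nat.exists_eq_succ_of_ne_zero (Module.finrank_pos (R := ℚ) (M := L)).ne'
  obtain ⟨K, M, hK, hM, h⟩ := norm_weyl L j hj
  set h' := Fintype.card (ClassGroup (𝓞 L))
  refine ⟨K * ((1 + h' * 2 ^ j) * 2 ^ (j + 1)), by positivity, fun Y => ?_⟩
  rcases Nat.eq_zero_or_pos Y with rfl | hY
  · simp
  have hY1 : (1 : ℝ) ≤ Y := by exact_mod_cast hY
  obtain ⟨T, hT, -, hT1, hT2⟩ := exists_root j hY1
  -- At `θ = 0` the Weyl bound, with the trivial estimate for `H`, counts ideals.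
  have h1 := h Y T hT (by exact_mod_cast hT1) 0 1 one_pos
  have h2 : ∑ n ∈ Finset.Icc 1 Y, rr L n • eF (0 * n) =
      ((∑ n ∈ Finset.Icc 1 Y, rr L n : ℝ) : ℂ) := by
    rw [Complex.ofReal_sum]
    refine Finset.sum_congr rfl fun n _ => ?_
    rw [zero_mul, eF]
    simp
  rw [h2, Complex.norm_real, Real.norm_of_nonneg (Finset.sum_nonneg fun n _ => rr_nonneg n)] at h1
  have h3 : ∑ c, H j T (0 * M c) ≤ h' * (2 ^ j * (T : ℝ) ^ (j + 1)) := by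
    refine (Finset.sum_le_card_nsmul _ _ ((2 * (T : ℝ)) ^ j * T) fun c _ => H_le j T hT _).trans ?_
    rw [nsmul_eq_mul, Finset.card_univ, mul_pow, pow_succ (T : ℝ) j, mul_assoc]
  calc ∑ n ∈ Finset.Icc 1 Y, rr L n
      ≤ K * (1 * (T : ℝ) ^ (j + 1) + 1⁻¹ ^ (2 ^ j - 1) * (h' * (2 ^ j * (T : ℝ) ^ (j + 1)))) := by
        refine h1.trans ?_; gcongr
    _ = K * ((1 + h' * 2 ^ j) * (T : ℝ) ^ (j + 1)) := by rw [inv_one, one_pow]; ring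
    _ ≤ K * ((1 + h' * 2 ^ j) * (2 ^ (j + 1) * Y)) := by gcongr
    _ = _ := by ring

end

end

end VMI

/-! ### Type I sums -/

namespace VMI

section

variable {X α v : ℝ} {q : ℕ} {j : ℕ}

/-- Cauchy-Schwarz in the form used to remove a weight `a` from a sum of terms `0 ≤ F ≤ W`. -/
lemma amgm {a F W m : ℝ} (hm : 0 < m) (hF : 0 ≤ F) (hW : F ≤ W) :
    a * F ≤ m * (a ^ 2 * W) + m⁻¹ * F := by
  have h1 : 2 * a ≤ m * a ^ 2 + m⁻¹ := by
    have h3 : m * m⁻¹ = 1 := mul_inv_cancel₀ hm.ne'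
    have h4 : (m * a ^ 2 + m⁻¹ - 2 * a) * m = (a * m - 1) ^ 2 := by
      linear_combination h3
    by_contra! hlt
    nlinarith [sq_nonneg (a * m - 1)]
  have h2 : m * (a ^ 2 * F) ≤ m * (a ^ 2 * W) := by gcongr
  have h5 : 0 ≤ m * a ^ 2 + m⁻¹ := by positivity
  nlinarith

/-- The divisor function weight in `G_sum_le` is removed by the arithmetic-geometric mean
inequality, at the cost of half of the exponent of the saving. -/
lemma D_G_sum (h : Par (j + 1) X α v q) (c : ℝ) (hc : 1 ≤ c) (M : ℕ) (hM : 0 < M) (i N : ℕ)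
    (hN : (N : ℝ) ≤ c * (X * v ^ 2 ^ (j + 1))) :
    ∑ n ∈ Finset.Icc 1 N, D i n * G (c * X / n) (α * M * n) ≤
      (c * (1 + Real.log c) ^ i ^ 2 + 60 * (c * M) * (2 + Real.log (c * M))) *
        (X * v ^ 2 ^ j * el X ^ (i ^ 2 + 1)) := by
  have hX := h.hX
  have hX0 : 0 < X := by linarith
  have hM1 : (1 : ℝ) ≤ M := by exact_mod_cast hM
  have hcM : 1 ≤ c * M := one_le_mul_of_one_le_of_one_le hc hM1
  have hel := one_le_el hX
  have hlog := Real.log_nonneg hcM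
  have hlogc := Real.log_nonneg hc
  have hm : 0 < v ^ 2 ^ j := pow_pos h.v0 _
  set m := v ^ 2 ^ j with hmdef
  have hsq : v ^ 2 ^ (j + 1) = m * m := by rw [hmdef, ← pow_add, pow_succ, mul_two]
  have h1 : ∀ n ∈ Finset.Icc 1 N, D i n * G (c * X / n) (α * M * n) ≤
      m * (c * X) * (D (i ^ 2) n / n) + m⁻¹ * G (c * X / n) (α * M * n) := by
    intro n hn
    have hn0 : (0 : ℝ) < n := by exact_mod_cast (Finset.mem_Icc.1 hn).1
    have hW : 0 < c * X / n := by positivity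
    refine (amgm hm (G_nonneg hW.le _) (G_le hW _)).trans ?_
    have := D_mul_D i i n
    rw [← sq, ← sq] at this
    have e : m * (D i n ^ 2 * (c * X / n)) = m * (c * X) * (D i n ^ 2 / n) := by ring
    rw [e]
    gcongr
  refine (Finset.sum_le_sum h1).trans ?_
  rw [Finset.sum_add_distrib, ← Finset.mul_sum, ← Finset.mul_sum]
  have h2 := sum_D_div (i ^ 2) N
  have h3 := log_le_el hX hc N (hN.trans (by
    gcongr; exact mul_le_of_le_one_right hX0.le h.vD))
  have h4 := G_sum_le h c hc M hM N hN
  have h0 : 0 ≤ 1 + Real.log N := by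
    have := Real.log_natCast_nonneg N; linarith
  have h5 : ∑ n ∈ Finset.Icc 1 N, D (i ^ 2) n / n ≤ (1 + Real.log c) ^ i ^ 2 * el X ^ (i ^ 2 + 1) := by
    refine h2.trans ((pow_le_pow_left₀ h0 h3 _).trans ?_)
    rw [mul_pow]
    gcongr
    omega
  have h6 : el X ≤ el X ^ (i ^ 2 + 1) := le_self_pow₀ hel (Nat.succ_ne_zero _)
  calc m * (c * X) * ∑ n ∈ Finset.Icc 1 N, D (i ^ 2) n / n +
        m⁻¹ * ∑ n ∈ Finset.Icc 1 N, G (c * X / n) (α * M * n)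
      ≤ m * (c * X) * ((1 + Real.log c) ^ i ^ 2 * el X ^ (i ^ 2 + 1)) +
        m⁻¹ * (60 * (c * M) * (2 + Real.log (c * M)) * (X * v ^ 2 ^ (j + 1) * el X ^ (i ^ 2 + 1))) := by
        refine add_le_add (by gcongr) ?_
        refine mul_le_mul_of_nonneg_left (h4.trans ?_) (by positivity)
        gcongr
        exact mul_nonneg hX0.le h.vD0.le
    _ = _ := by rw [hsq]; field_simp

variable {L : Type*} [Field L] [NumberField L]

lemma rr_conv_D_le (hj : Module.finrank ℚ L = j + 1) (n : ℕ) :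
    (rr L * D j) n ≤ D (2 ^ (j + 1) + j) n := by
  have : D (2 ^ (j + 1) + j) = D (2 ^ (j + 1)) * D j := pow_add _ _ _
  rw [this]
  refine mul_le' rr_nonneg (D_nonneg j) (fun n => ?_) (fun n => le_rfl) n
  rw [← hj]; exact rr_le L n

/-- The average over `k` of the sums in Weyl's inequality at `α k M`: the products `k h₁⋯h_j` are grouped,
with multiplicity bounded by a divisor function, and `D_G_sum` applies. -/
lemma typeI_Hp (hj : Module.finrank ℚ L = j + 1) (h : Par (j + 1) X α v q) (M : ℕ) (hM : 0 < M)
    (R : ℕ) (T : ℕ → ℕ) (hT : ∀ k ∈ Finset.Icc 1 R, 0 < T k ∧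
      (k : ℝ) * (T k : ℝ) ^ (j + 1) ≤ 2 ^ (j + 1) * X ∧ 1 ≤ T k * v ^ 2 ^ (j + 1)) :
    ∑ k ∈ Finset.Icc 1 R, rr L k * Hp j (T k) (α * k * M) ≤
      ((2 : ℝ) ^ (j + 1) * (1 + Real.log (2 ^ (j + 1))) ^ (2 ^ (j + 1) + j) ^ 2 +
        60 * (2 ^ (j + 1) * M) * (2 + Real.log (2 ^ (j + 1) * M))) *
        (X * v ^ 2 ^ j * el X ^ ((2 ^ (j + 1) + j) ^ 2 + 1)) := by
  have hX := h.hX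
  have hX0 : 0 < X := by linarith
  have hc : (1 : ℝ) ≤ 2 ^ (j + 1) := one_le_pow₀ one_le_two
  set c : ℝ := 2 ^ (j + 1) with hcdef
  have hvD0 := h.vD0
  set N := ⌊c * (X * v ^ 2 ^ (j + 1))⌋₊ with hNdef
  have hN : (N : ℝ) ≤ c * (X * v ^ 2 ^ (j + 1)) := Nat.floor_le (by positivity)
  set F : ℕ → ℝ := fun n => G (c * X / n) (α * M * n) with hF
  have hF0 : ∀ n, 0 ≤ F n := fun n => G_nonneg (by positivity) _
  refine le_trans ?_ (D_G_sum h c hc M hM (2 ^ (j + 1) + j) N hN)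
  have h1 : ∀ k ∈ Finset.Icc 1 R, Hp j (T k) (α * k * M) ≤
      ∑ m ∈ Finset.Icc 1 (N / k), D j m * F (k * m) := by
    intro k hk
    obtain ⟨hT0, hT1, hT2⟩ := hT k hk
    have hk0 := (Finset.mem_Icc.1 hk).1
    have hT0' : (0 : ℝ) < T k := by exact_mod_cast hT0
    rw [mul_right_comm]
    refine Hp_le_sum j (T k) hT0 _ F hF0 N k hk0 fun n hn hn2 => ?_
    have hn2' : (n : ℝ) ≤ k * (T k : ℝ) ^ j := by exact_mod_cast hn2
    constructor
    · refine Nat.le_floor ?_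
      calc (n : ℝ) ≤ k * (T k : ℝ) ^ j * 1 := by rw [mul_one]; exact hn2'
        _ ≤ k * (T k : ℝ) ^ j * (T k * v ^ 2 ^ (j + 1)) := by gcongr
        _ = (k * (T k : ℝ) ^ (j + 1)) * v ^ 2 ^ (j + 1) := by ring
        _ ≤ (c * X) * v ^ 2 ^ (j + 1) := by gcongr
        _ = _ := by ring
    · refine G_mono hT0' ?_ _
      rw [le_div_iff₀ (by exact_mod_cast hn)]
      calc (T k : ℝ) * n ≤ T k * (k * (T k : ℝ) ^ j) := by gcongr
        _ = k * (T k : ℝ) ^ (j + 1) := by ring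
        _ ≤ _ := hT1
  have hin0 : ∀ k, 0 ≤ ∑ m ∈ Finset.Icc 1 (N / k), D j m * F (k * m) := fun k =>
    Finset.sum_nonneg fun m _ => mul_nonneg (D_nonneg _ _) (hF0 _)
  calc ∑ k ∈ Finset.Icc 1 R, rr L k * Hp j (T k) (α * k * M)
      ≤ ∑ k ∈ Finset.Icc 1 R, rr L k * ∑ m ∈ Finset.Icc 1 (N / k), D j m * F (k * m) :=
        Finset.sum_le_sum fun k hk => mul_le_mul_of_nonneg_left (h1 k hk) (rr_nonneg k)
    _ ≤ ∑ k ∈ Finset.Icc 1 N, rr L k * ∑ m ∈ Finset.Icc 1 (N / k), D j m * F (k * m) := by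
        rw [← Finset.sum_filter_add_sum_filter_not (Finset.Icc 1 R) (fun k => k ≤ N)]
        rw [Finset.sum_eq_zero (s := (Finset.Icc 1 R).filter fun k => ¬ k ≤ N), add_zero]
        · refine Finset.sum_le_sum_of_subset_of_nonneg (fun k hk => ?_)
            fun k _ _ => mul_nonneg (rr_nonneg k) (hin0 k)
          rw [Finset.mem_filter, Finset.mem_Icc] at hk
          exact Finset.mem_Icc.2 ⟨hk.1.1, hk.2⟩
        · intro k hk
          rw [Nat.div_eq_of_lt (not_le.1 (Finset.mem_filter.1 hk).2)]
          simp
    _ = ∑ n ∈ Finset.Icc 1 N, (rr L * D j) n * F n := by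
        have := sum_conv (rr L) (D j) F N
        simp only [smul_eq_mul] at this
        rw [this]
    _ ≤ ∑ n ∈ Finset.Icc 1 N, D (2 ^ (j + 1) + j) n * F n :=
        Finset.sum_le_sum fun n _ => mul_le_mul_of_nonneg_right (rr_conv_D_le hj n) (hF0 n)

variable (L) in
/-- Σ r(k)/k is at most a power of the logarithm. -/
lemma sum_rr_div (hX : 2 ≤ X) (R : ℕ) (hR : (R : ℝ) ≤ X) :
    ∑ k ∈ Finset.Icc 1 R, rr L k / k ≤ el X ^ 2 ^ Module.finrank ℚ L := by
  have h1 := log_le_el hX le_rfl R (by rwa [one_mul])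
  rw [Real.log_one, add_zero, one_mul] at h1
  have h0 : 0 ≤ 1 + Real.log R := by
    have := Real.log_natCast_nonneg R; linarith
  refine le_trans ?_ ((sum_D_div _ R).trans (pow_le_pow_left₀ h0 h1 _))
  refine Finset.sum_le_sum fun k _ => ?_
  gcongr
  exact rr_le L k

/-- The powers of the logarithm in the Type I estimate are dominated by a common one. -/
lemma exps (j : ℕ) : (2 ^ (j + 1) + j) ^ 2 + 1 ≤ 4 * 4 ^ (j + 1) + 1 ∧
    2 ^ (j + 1) ≤ 4 * 4 ^ (j + 1) + 1 := by
  have h1 : j ≤ 2 ^ (j + 1) := (Nat.lt_two_pow_self (n := j)).le.trans (Nat.pow_le_pow_right (by norm_num) (by omega))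
  have h2 : 4 ^ (j + 1) = 2 ^ (j + 1) * 2 ^ (j + 1) := by rw [← mul_pow]; norm_num
  have h3 : 0 < 2 ^ (j + 1) := by positivity
  rw [h2]
  constructor <;> nlinarith

variable (L) in
/-- The Type I estimate: short sums of `r(m) e(αkm)` are small on average over `k`. -/
lemma typeI (hj : Module.finrank ℚ L = j + 1) :
    ∃ C : ℝ, 0 < C ∧ ∀ (X α v : ℝ) (q : ℕ), Par (j + 1) X α v q → ∀ (R : ℕ) (y : ℕ → ℕ),
      (R : ℝ) ^ 2 ≤ X → (∀ k ∈ Finset.Icc 1 R, (y k : ℝ) * k ≤ X) →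
      ∑ k ∈ Finset.Icc 1 R, rr L k * ‖∑ m ∈ Finset.Icc 1 (y k), rr L m • eF (α * k * m)‖ ≤
        C * (X * v * el X ^ (4 * 4 ^ (j + 1) + 1)) := by
  obtain ⟨K, M, hK, hM, hw⟩ := norm_weyl L j hj
  set Cc : ClassGroup (𝓞 L) → ℝ := fun c =>
    ((2 : ℝ) ^ (j + 1) * (1 + Real.log (2 ^ (j + 1))) ^ (2 ^ (j + 1) + j) ^ 2 +
        60 * (2 ^ (j + 1) * M c) * (2 + Real.log (2 ^ (j + 1) * M c))) with hCc
  have hCc0 : ∀ c, 0 ≤ Cc c := by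
    intro c
    have h1 : (1 : ℝ) ≤ 2 ^ (j + 1) := one_le_pow₀ one_le_two
    have h2 : (1 : ℝ) ≤ M c := by exact_mod_cast hM c
    have h3 := Real.log_nonneg h1
    have h4 := Real.log_nonneg (one_le_mul_of_one_le_of_one_le h1 h2)
    positivity
  refine ⟨K * (2 ^ (j + 1) + ∑ c, (2 ^ j * Cc c + j * 2 ^ j * 2 ^ (j + 1))),
    mul_pos hK (add_pos_of_pos_of_nonneg (by positivity)
      (Finset.sum_nonneg fun c _ => by have := hCc0 c; positivity)), ?_⟩
  intro X α v q h R y hR hy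
  have hX := h.hX
  have hX0 : 0 < X := by linarith
  have hel := one_le_el hX
  have hv := h.v0
  set E := 4 * 4 ^ (j + 1) + 1 with hE
  have hRX : (R : ℝ) ≤ X := by
    rcases Nat.eq_zero_or_pos R with h0 | h0
    · rw [h0, Nat.cast_zero]; exact hX0.le
    · have : (1 : ℝ) ≤ R := by exact_mod_cast h0
      nlinarith
  have hkX : ∀ k ∈ Finset.Icc 1 R, 1 ≤ X / k := by
    intro k hk
    rw [Finset.mem_Icc] at hk
    have h1 : (0 : ℝ) < k := by exact_mod_cast hk.1
    rw [le_div_iff₀ h1, one_mul]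
    exact le_trans (by exact_mod_cast hk.2) hRX
  -- The lines used for the modulus `k` have length about `(X / k) ^ (1 / (j + 1))`.
  have hTex : ∀ k, ∃ T : ℕ, k ∈ Finset.Icc 1 R → (0 < T ∧ (X / k) ^ ((j + 1 : ℕ) : ℝ)⁻¹ ≤ T ∧
    X / k ≤ (T : ℝ) ^ (j + 1) ∧ (T : ℝ) ^ (j + 1) ≤ 2 ^ (j + 1) * (X / k)) := by
    intro k
    by_cases hk : k ∈ Finset.Icc 1 R
    · obtain ⟨T, hT⟩ := exists_root j (hkX k hk)
      exact ⟨T, fun _ => hT⟩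
    · exact ⟨0, fun h => absurd h hk⟩
  choose T hT using hTex
  have hT' : ∀ k ∈ Finset.Icc 1 R, 0 < T k ∧
      (k : ℝ) * (T k : ℝ) ^ (j + 1) ≤ 2 ^ (j + 1) * X ∧ 1 ≤ T k * v ^ 2 ^ (j + 1) := by
    intro k hk
    obtain ⟨h1, h2, h3, h4⟩ := hT k hk
    rw [Finset.mem_Icc] at hk
    have hk0 : (0 : ℝ) < k := by exact_mod_cast hk.1
    have hkR : (k : ℝ) ≤ R := by exact_mod_cast hk.2
    refine ⟨h1, ?_, ?_⟩
    · calc (k : ℝ) * (T k : ℝ) ^ (j + 1) ≤ k * (2 ^ (j + 1) * (X / k)) := by gcongr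
        _ = _ := by field_simp
    · have h5 : X ^ (1 / 2 : ℝ) ≤ X / k := by
        rw [le_div_iff₀ hk0]
        have h6 : (k : ℝ) ≤ X ^ (1 / 2 : ℝ) := by
          rw [← Real.sqrt_eq_rpow]
          refine Real.le_sqrt_of_sq_le (le_trans ?_ hR)
          gcongr
        calc X ^ (1 / 2 : ℝ) * k ≤ X ^ (1 / 2 : ℝ) * X ^ (1 / 2 : ℝ) := by gcongr
          _ = X := by rw [← Real.rpow_add hX0]; norm_num
      have h7 : X ^ (1 / (4 * (j + 1 : ℕ)) : ℝ) ≤ T k := by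
        refine le_trans ?_ h2
        calc X ^ (1 / (4 * (j + 1 : ℕ)) : ℝ) ≤ X ^ ((1 / 2 : ℝ) * ((j + 1 : ℕ) : ℝ)⁻¹) := by
              refine Real.rpow_le_rpow_of_exponent_le (by linarith) ?_
              have : (0 : ℝ) < (j + 1 : ℕ) := by positivity
              rw [div_le_iff₀ (by positivity)]
              field_simp
              norm_num
          _ = (X ^ (1 / 2 : ℝ)) ^ ((j + 1 : ℕ) : ℝ)⁻¹ := Real.rpow_mul hX0.le _ _
          _ ≤ _ := Real.rpow_le_rpow (by positivity) h5 (by positivity)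
      calc (1 : ℝ) = X ^ (1 / (4 * (j + 1 : ℕ)) : ℝ) * X ^ (-(1 / (4 * (j + 1 : ℕ)) : ℝ)) := by
            rw [← Real.rpow_add hX0, add_neg_cancel, Real.rpow_zero]
        _ ≤ T k * v ^ 2 ^ (j + 1) := by gcongr; exact h.X1
  have hrd := sum_rr_div L hX R hRX
  rw [hj] at hrd
  have hrd' : ∑ k ∈ Finset.Icc 1 R, rr L k / k ≤ el X ^ E :=
    hrd.trans (pow_le_pow_right₀ hel (exps j).2)
  -- the diagonal term
  have hS1 : ∑ k ∈ Finset.Icc 1 R, rr L k * (T k : ℝ) ^ (j + 1) ≤ 2 ^ (j + 1) * (X * el X ^ E) := by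
    calc ∑ k ∈ Finset.Icc 1 R, rr L k * (T k : ℝ) ^ (j + 1)
        ≤ ∑ k ∈ Finset.Icc 1 R, 2 ^ (j + 1) * X * (rr L k / k) := by
          refine Finset.sum_le_sum fun k hk => ?_
          have := (hT k hk).2.2.2
          have h0 := rr_nonneg (L := L) k
          calc rr L k * (T k : ℝ) ^ (j + 1) ≤ rr L k * (2 ^ (j + 1) * (X / k)) := by gcongr
            _ = _ := by ring
      _ = 2 ^ (j + 1) * X * ∑ k ∈ Finset.Icc 1 R, rr L k / k := by rw [Finset.mul_sum]
      _ ≤ 2 ^ (j + 1) * X * el X ^ E := by gcongr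
      _ = _ := by ring
  have hS2 : ∑ k ∈ Finset.Icc 1 R, rr L k * (T k : ℝ) ^ j ≤
      v ^ 2 ^ (j + 1) * (2 ^ (j + 1) * (X * el X ^ E)) := by
    refine le_trans ?_ (mul_le_mul_of_nonneg_left hS1 h.vD0.le)
    rw [Finset.mul_sum]
    refine Finset.sum_le_sum fun k hk => ?_
    have h0 := rr_nonneg (L := L) k
    have h1 := (hT' k hk).2.2
    calc rr L k * (T k : ℝ) ^ j = rr L k * (T k : ℝ) ^ j * 1 := by ring
      _ ≤ rr L k * (T k : ℝ) ^ j * (T k * v ^ 2 ^ (j + 1)) := by gcongr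
      _ = _ := by ring
  have hvv : (v⁻¹) ^ (2 ^ j - 1) * v ^ 2 ^ j = v := by
    have : 2 ^ j = (2 ^ j - 1) + 1 := by have : 0 < 2 ^ j := by positivity
                                         omega
    rw [this, Nat.add_sub_cancel, pow_succ, ← mul_assoc, ← mul_pow, inv_mul_cancel₀ hv.ne', one_pow, one_mul]
  have hv2 : v ^ 2 ^ (j + 1) ≤ v ^ 2 ^ j :=
    pow_le_pow_of_le_one hv.le h.v1 (Nat.pow_le_pow_right (by norm_num) (by omega))
  have hS3 : ∀ c, ∑ k ∈ Finset.Icc 1 R, rr L k * H j (T k) (α * k * M c) ≤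
      v ^ 2 ^ j * (X * el X ^ E) * (2 ^ j * Cc c + j * 2 ^ j * 2 ^ (j + 1)) := by
    intro c
    have h1 := typeI_Hp hj h (M c) (hM c) R T hT'
    calc ∑ k ∈ Finset.Icc 1 R, rr L k * H j (T k) (α * k * M c)
        ≤ ∑ k ∈ Finset.Icc 1 R, (2 ^ j * (rr L k * Hp j (T k) (α * k * M c)) +
            j * 2 ^ j * (rr L k * (T k : ℝ) ^ j)) := by
          refine Finset.sum_le_sum fun k hk => ?_
          have := mul_le_mul_of_nonneg_left (H_le_Hp j (T k) (hT' k hk).1 (α * k * M c))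
            (rr_nonneg (L := L) k)
          linarith
      _ = 2 ^ j * ∑ k ∈ Finset.Icc 1 R, rr L k * Hp j (T k) (α * k * M c) +
            j * 2 ^ j * ∑ k ∈ Finset.Icc 1 R, rr L k * (T k : ℝ) ^ j := by
          rw [Finset.sum_add_distrib, Finset.mul_sum, Finset.mul_sum]
      _ ≤ 2 ^ j * (Cc c * (X * v ^ 2 ^ j * el X ^ E)) +
            j * 2 ^ j * (v ^ 2 ^ j * (2 ^ (j + 1) * (X * el X ^ E))) := by
          gcongr
          · refine h1.trans ?_
            have := hCc0 c
            have := pow_le_pow_right₀ hel (exps j).1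
            gcongr
          · refine hS2.trans ?_
            gcongr
      _ = _ := by ring
  -- The Weyl bound is used with the parameter `l = v`, since the averages of `H` save `v ^ 2 ^ j`.
  calc ∑ k ∈ Finset.Icc 1 R, rr L k * ‖∑ m ∈ Finset.Icc 1 (y k), rr L m • eF (α * k * m)‖
      ≤ ∑ k ∈ Finset.Icc 1 R, (K * v * (rr L k * (T k : ℝ) ^ (j + 1)) +
          K * (v⁻¹) ^ (2 ^ j - 1) * ∑ c, rr L k * H j (T k) (α * k * M c)) := by
        refine Finset.sum_le_sum fun k hk => ?_
        have hk0 : (0 : ℝ) < k := by exact_mod_cast (Finset.mem_Icc.1 hk).1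
        have h1 : y k ≤ T k ^ (j + 1) := by
          have h2 : (y k : ℝ) ≤ X / k := by rw [le_div_iff₀ hk0]; exact hy k hk
          exact_mod_cast h2.trans (hT k hk).2.2.1
        have := mul_le_mul_of_nonneg_left (hw (y k) (T k) (hT k hk).1 h1 (α * k) v hv)
          (rr_nonneg (L := L) k)
        refine this.trans (le_of_eq ?_)
        rw [← Finset.mul_sum]; ring
    _ = K * v * ∑ k ∈ Finset.Icc 1 R, rr L k * (T k : ℝ) ^ (j + 1) +
          K * (v⁻¹) ^ (2 ^ j - 1) * ∑ c, ∑ k ∈ Finset.Icc 1 R, rr L k * H j (T k) (α * k * M c) := by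
        rw [Finset.sum_add_distrib, ← Finset.mul_sum, ← Finset.mul_sum, Finset.sum_comm]
    _ ≤ K * v * (2 ^ (j + 1) * (X * el X ^ E)) + K * (v⁻¹) ^ (2 ^ j - 1) *
          ∑ c, v ^ 2 ^ j * (X * el X ^ E) * (2 ^ j * Cc c + j * 2 ^ j * 2 ^ (j + 1)) := by
        gcongr with c
        exact hS3 c
    _ = K * (v * (2 ^ (j + 1) * (X * el X ^ E)) + ((v⁻¹) ^ (2 ^ j - 1) * v ^ 2 ^ j) *
          ((X * el X ^ E) * ∑ c, (2 ^ j * Cc c + j * 2 ^ j * 2 ^ (j + 1)))) := by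
        rw [← Finset.mul_sum]; ring
    _ = _ := by rw [hvv]; ring

end

end VMI

/-! ### Bilinear sums: opening the square -/

namespace VMI

section

lemma geom_bound_nat (γ : ℝ) (a b : ℕ) (T : ℝ) (hT : 0 < T) (hb : (b : ℝ) ≤ T) :
    ‖∑ m ∈ Finset.Ioc a b, eF (γ * m)‖ ≤ 2 * G T γ := by
  have h1 : ∑ m ∈ Finset.Ioc a b, eF (γ * m) = ∑ t ∈ Finset.Ico ((a : ℤ) + 1) (b + 1), eF (γ * t) := by
    refine Finset.sum_nbij' (fun m => (m : ℤ)) Int.toNat ?_ ?_ ?_ ?_ ?_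
    · intro m hm; rw [Finset.mem_Ioc] at hm; rw [Finset.mem_Ico]; omega
    · intro m hm; rw [Finset.mem_Ico] at hm; rw [Finset.mem_Ioc]; omega
    · intro m _; simp
    · intro m hm; rw [Finset.mem_Ico] at hm; omega
    · intro m _; simp
  rw [h1]
  refine geom_bound (fun t => γ * t) γ (fun t => by push_cast; ring) _ _ T hT ?_
  push_cast
  have : (0 : ℝ) ≤ a := Nat.cast_nonneg a
  linarith

/-- Exponential sums weighted by `m`: write `m` as the number of `1 ≤ s ≤ m`. -/
lemma weighted_geom (γ : ℝ) (a b : ℕ) (T : ℝ) (hT : 0 < T) (hb : (b : ℝ) ≤ T) :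
    ‖∑ m ∈ Finset.Ioc a b, (m : ℝ) • eF (γ * m)‖ ≤ b * (2 * G T γ) := by
  have h1 : ∑ m ∈ Finset.Ioc a b, (m : ℝ) • eF (γ * m) =
      ∑ s ∈ Finset.Icc 1 b, ∑ m ∈ Finset.Ioc (max (s - 1) a) b, eF (γ * m) := by
    have h2 : ∀ m ∈ Finset.Ioc a b, (m : ℝ) • eF (γ * m) = ∑ s ∈ Finset.Icc 1 m, eF (γ * m) := by
      intro m _
      rw [Finset.sum_const, Nat.card_Icc, Nat.add_sub_cancel, Nat.cast_smul_eq_nsmul]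
    rw [Finset.sum_congr rfl h2]
    refine Finset.sum_comm' fun m s => ?_
    simp only [Finset.mem_Ioc, Finset.mem_Icc]
    omega
  rw [h1]
  refine (norm_sum_le _ _).trans ?_
  refine (Finset.sum_le_sum fun s _ => geom_bound_nat γ _ b T hT hb).trans ?_
  rw [Finset.sum_const, Nat.card_Icc, Nat.add_sub_cancel, nsmul_eq_mul]

/-- The opened square of an exponential sum. -/
lemma norm_sq_sum (s : Finset ℕ) (b : ℕ → ℝ) (θ : ℝ) :
    ((‖∑ k ∈ s, b k • eF (θ * k)‖ ^ 2 : ℝ) : ℂ) =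
      ∑ k ∈ s, ∑ l ∈ s, (b k * b l) • eF (θ * ((k : ℝ) - l)) := by
  rw [Complex.ofReal_pow, ← Complex.mul_conj', map_sum, Finset.sum_mul_sum]
  refine Finset.sum_congr rfl fun k _ => Finset.sum_congr rfl fun l _ => ?_
  rw [mul_sub, sub_eq_add_neg, eF_add, ← eF_conj]
  simp only [Complex.real_smul, map_mul, Complex.conj_ofReal, Complex.ofReal_mul]
  ring

/-- Opening the square in a bilinear sum and exchanging the order of summation. -/
lemma bilinear_open (α : ℝ) (U Y : ℕ) (b : ℕ → ℝ) :
    ∑ m ∈ Finset.Ioc U Y, (m : ℝ) * ‖∑ k ∈ Finset.Icc 1 (Y / m), b k • eF (α * (m * k))‖ ^ 2 ≤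
      ∑ k ∈ Finset.Icc 1 (Y / (U + 1)), ∑ l ∈ Finset.Icc 1 (Y / (U + 1)), |b k * b l| *
        ‖∑ m ∈ Finset.Ioc U (Y / max k l), (m : ℝ) • eF (α * ((k : ℝ) - l) * m)‖ := by
  set Q := ∑ m ∈ Finset.Ioc U Y, (m : ℝ) * ‖∑ k ∈ Finset.Icc 1 (Y / m), b k • eF (α * (m * k))‖ ^ 2
    with hQ
  have hQ0 : 0 ≤ Q := Finset.sum_nonneg fun m _ => by positivity
  have h1 : (Q : ℂ) = ∑ k ∈ Finset.Icc 1 (Y / (U + 1)), ∑ l ∈ Finset.Icc 1 (Y / (U + 1)),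
      (b k * b l) • ∑ m ∈ Finset.Ioc U (Y / max k l), (m : ℝ) • eF (α * ((k : ℝ) - l) * m) := by
    have h2 : (Q : ℂ) = ∑ m ∈ Finset.Ioc U Y, ∑ p ∈ Finset.Icc 1 (Y / m) ×ˢ Finset.Icc 1 (Y / m),
        (b p.1 * b p.2) • ((m : ℝ) • eF (α * ((p.1 : ℝ) - p.2) * m)) := by
      rw [hQ, Complex.ofReal_sum]
      refine Finset.sum_congr rfl fun m _ => ?_
      rw [Complex.ofReal_mul]
      have : ∀ k : ℕ, eF (α * (m * k)) = eF (α * m * k) := fun k => by rw [mul_assoc]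
      simp only [this]
      rw [norm_sq_sum, Finset.sum_product, Finset.mul_sum]
      refine Finset.sum_congr rfl fun k _ => ?_
      rw [Finset.mul_sum]
      refine Finset.sum_congr rfl fun l _ => ?_
      rw [show α * m * ((k : ℝ) - l) = α * ((k : ℝ) - l) * m by ring]
      simp only [Complex.real_smul]
      ring
    rw [h2, ← Finset.sum_product']
    simp only [Finset.smul_sum]
    refine Finset.sum_comm' fun m p => ?_
    simp only [Finset.mem_Ioc, Finset.mem_product, Finset.mem_Icc]
    constructor
    · rintro ⟨⟨hm1, hm2⟩, ⟨hk1, hk2⟩, hl1, hl2⟩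
      have hm : 0 < m := by omega
      have hd : Y / m ≤ Y / (U + 1) := Nat.div_le_div_left hm1 (Nat.succ_pos U)
      refine ⟨⟨hm1, ?_⟩, ⟨hk1, hk2.trans hd⟩, hl1, hl2.trans hd⟩
      rw [Nat.le_div_iff_mul_le (lt_max_of_lt_left hk1)]
      rw [Nat.le_div_iff_mul_le hm] at hk2 hl2
      rcases max_choice p.1 p.2 with h | h <;> rw [h, mul_comm] <;> assumption
    · rintro ⟨⟨hm1, hm2⟩, ⟨hk1, hk2⟩, hl1, hl2⟩
      have hm : 0 < m := by omega
      refine ⟨⟨hm1, hm2.trans (Nat.div_le_self _ _)⟩, ⟨hk1, ?_⟩, hl1, ?_⟩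
      · rw [Nat.le_div_iff_mul_le (lt_max_of_lt_left hk1)] at hm2
        rw [Nat.le_div_iff_mul_le hm, mul_comm]
        exact (Nat.mul_le_mul_left m (le_max_left _ _)).trans hm2
      · rw [Nat.le_div_iff_mul_le (lt_max_of_lt_left hk1)] at hm2
        rw [Nat.le_div_iff_mul_le hm, mul_comm]
        exact (Nat.mul_le_mul_left m (le_max_right _ _)).trans hm2
  calc Q = ‖(Q : ℂ)‖ := by rw [Complex.norm_real, Real.norm_of_nonneg hQ0]
    _ ≤ _ := by
      rw [h1]
      refine (norm_sum_le _ _).trans (Finset.sum_le_sum fun k _ => ?_)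
      refine (norm_sum_le _ _).trans (Finset.sum_le_sum fun l _ => ?_)
      rw [norm_smul, Real.norm_eq_abs]

/-- A symmetric kernel is bounded by its row sums. -/
lemma schur (s : Finset ℕ) (b w : ℕ → ℝ) (g : ℕ → ℕ → ℝ) (hg : ∀ k l, 0 ≤ g k l)
    (hgs : ∀ k l, g k l = g l k) (A : ℝ) (hw : ∀ k ∈ s, 0 ≤ w k)
    (hA : ∀ k ∈ s, ∑ l ∈ s, g k l ≤ A) :
    ∑ k ∈ s, ∑ l ∈ s, |b k * b l| * (min (w k) (w l) * g k l) ≤ (∑ k ∈ s, b k ^ 2 * w k) * A := by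
  have h1 : ∀ k ∈ s, ∀ l ∈ s, |b k * b l| * (min (w k) (w l) * g k l) ≤
      (b k ^ 2 * w k * g k l + b l ^ 2 * w l * g l k) / 2 := by
    intro k hk l hl
    have h2 : |b k * b l| ≤ (b k ^ 2 + b l ^ 2) / 2 := by
      rw [abs_mul, ← sq_abs (b k), ← sq_abs (b l)]
      nlinarith [sq_nonneg (|b k| - |b l|)]
    have h3 : 0 ≤ min (w k) (w l) := le_min (hw k hk) (hw l hl)
    rw [hgs l k]
    calc |b k * b l| * (min (w k) (w l) * g k l)
        ≤ (b k ^ 2 + b l ^ 2) / 2 * (min (w k) (w l) * g k l) :=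
          mul_le_mul_of_nonneg_right h2 (mul_nonneg h3 (hg k l))
      _ = (b k ^ 2 * min (w k) (w l) * g k l + b l ^ 2 * min (w k) (w l) * g k l) / 2 := by ring
      _ ≤ _ := by
        have := hg k l
        gcongr
        · exact min_le_left _ _
        · exact min_le_right _ _
  have h4 : ∑ k ∈ s, ∑ l ∈ s, b k ^ 2 * w k * g k l ≤ (∑ k ∈ s, b k ^ 2 * w k) * A := by
    rw [Finset.sum_mul]
    refine Finset.sum_le_sum fun k hk => ?_
    rw [← Finset.mul_sum]
    exact mul_le_mul_of_nonneg_left (hA k hk) (mul_nonneg (sq_nonneg _) (hw k hk))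
  have h5 : ∑ k ∈ s, ∑ l ∈ s, b l ^ 2 * w l * g l k = ∑ k ∈ s, ∑ l ∈ s, b k ^ 2 * w k * g k l :=
    Finset.sum_comm
  calc _ ≤ ∑ k ∈ s, ∑ l ∈ s, (b k ^ 2 * w k * g k l + b l ^ 2 * w l * g l k) / 2 :=
        Finset.sum_le_sum fun k hk => Finset.sum_le_sum fun l hl => h1 k hk l hl
    _ = (∑ k ∈ s, ∑ l ∈ s, b k ^ 2 * w k * g k l + ∑ k ∈ s, ∑ l ∈ s, b l ^ 2 * w l * g l k) / 2 := by
        simp only [← Finset.sum_div, Finset.sum_add_distrib]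
    _ ≤ _ := by rw [h5]; linarith

/-- For fixed `k`, every value of `|k - l|` is taken at most twice. -/
lemma sum_dist_le (f : ℕ → ℝ) (hf : ∀ n, 0 ≤ f n) (K k : ℕ) (hk : k ∈ Finset.Icc 1 K) :
    ∑ l ∈ Finset.Icc 1 K, f (Nat.dist k l) ≤ f 0 + 2 * ∑ n ∈ Finset.Icc 1 K, f n := by
  rw [Finset.mem_Icc] at hk
  have h1 : Finset.Icc 1 K = insert k (Finset.Icc 1 (k - 1) ∪ Finset.Icc (k + 1) K) := by
    ext x
    simp only [Finset.mem_Icc, Finset.mem_insert, Finset.mem_union]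
    omega
  have h2 : ∑ l ∈ Finset.Icc 1 (k - 1), f (Nat.dist k l) ≤ ∑ n ∈ Finset.Icc 1 K, f n := by
    rw [← Finset.sum_image (s := Finset.Icc 1 (k - 1)) (g := fun l => Nat.dist k l) (f := f)]
    · refine Finset.sum_le_sum_of_subset_of_nonneg ?_ fun n _ _ => hf n
      intro n hn
      obtain ⟨l, hl, rfl⟩ := Finset.mem_image.1 hn
      simp only [Finset.mem_Icc, Nat.dist] at hl ⊢
      omega
    · intro a ha b hb h
      simp only [Finset.coe_Icc, Set.mem_Icc, Nat.dist] at ha hb h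
      omega
  have h3 : ∑ l ∈ Finset.Icc (k + 1) K, f (Nat.dist k l) ≤ ∑ n ∈ Finset.Icc 1 K, f n := by
    rw [← Finset.sum_image (s := Finset.Icc (k + 1) K) (g := fun l => Nat.dist k l) (f := f)]
    · refine Finset.sum_le_sum_of_subset_of_nonneg ?_ fun n _ _ => hf n
      intro n hn
      obtain ⟨l, hl, rfl⟩ := Finset.mem_image.1 hn
      simp only [Finset.mem_Icc, Nat.dist] at hl ⊢
      omega
    · intro a ha b hb h
      simp only [Finset.coe_Icc, Set.mem_Icc, Nat.dist] at ha hb h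
      omega
  conv_lhs => rw [h1]
  rw [Finset.sum_insert, Finset.sum_union, Nat.dist_self]
  · linarith
  · rw [Finset.disjoint_left]
    intro x hx hx2
    rw [Finset.mem_Icc] at hx hx2
    omega
  · simp only [Finset.mem_Icc, Finset.mem_union]
    omega

end

end VMI

/-! ### The Type II estimate -/

namespace VMI

section

variable {X α v : ℝ} {q : ℕ} {d : ℕ}

/-- The mean square of the inner sums. The pairs `k = l` contribute the `f 0` term of `sum_dist_le`; the
others are geometric sums at the multiples `(k - l) α`. -/
lemma bilinear_sq (h : Par d X α v q) (U Y : ℕ) (hY : (Y : ℝ) ≤ X)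
    (hUX : X ≤ 2 * (X * v ^ 2 ^ d) * U) (b : ℕ → ℝ) (hb : ∀ k, k ≤ U → b k = 0) :
    ∑ m ∈ Finset.Ioc U Y, (m : ℝ) * ‖∑ k ∈ Finset.Icc 1 (Y / m), b k • eF (α * (m * k))‖ ^ 2 ≤
      (∑ k ∈ Finset.Icc 1 (Y / (U + 1)), b k ^ 2 / k) * X * (1500 * (X * v ^ 2 ^ d * el X)) := by
  have hX := h.hX
  have hX0 : 0 < X := by linarith
  have hel := one_le_el hX
  have hvD0 := h.vD0
  set w := X * v ^ 2 ^ d with hw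
  have hw0 : 0 < w := mul_pos hX0 hvD0
  set K := Y / (U + 1) with hK
  have hK2 : (K : ℝ) ≤ 2 * w := by
    have h1 : (K : ℝ) ≤ X / ((U + 1 : ℕ) : ℝ) := Nat.cast_div_le.trans (by gcongr)
    refine h1.trans ?_
    rw [div_le_iff₀ (by positivity)]
    push_cast
    linarith
  set f : ℕ → ℝ := fun n => if n = 0 then 4 * w else 2 * G (2 * X / n) (α * n) with hf
  have hf0 : ∀ n, 0 ≤ f n := by
    intro n
    simp only [hf]
    split_ifs
    · positivity
    · have := G_nonneg (Y := 2 * X / n) (by positivity) (α * n)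
      positivity
  have hsum : ∑ n ∈ Finset.Icc 1 K, f n ≤ 720 * (w * el X) := by
    have h1 := G_sum_le h 2 one_le_two 1 one_pos K hK2
    simp only [Nat.cast_one, mul_one] at h1
    have h2 : ∑ n ∈ Finset.Icc 1 K, f n = 2 * ∑ n ∈ Finset.Icc 1 K, G (2 * X / n) (α * n) := by
      rw [Finset.mul_sum]
      refine Finset.sum_congr rfl fun n hn => ?_
      rw [Finset.mem_Icc] at hn
      simp only [hf, if_neg (by omega : n ≠ 0)]
    have h3 : Real.log 2 ≤ 1 := by have := Real.log_two_lt_d9; linarith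
    have h4 : 0 ≤ w * el X := by positivity
    rw [h2]
    nlinarith
  have hrow : ∀ k ∈ Finset.Icc 1 K, ∑ l ∈ Finset.Icc 1 K, f (Nat.dist k l) ≤ 1500 * (w * el X) := by
    intro k hk
    refine (sum_dist_le f hf0 K k hk).trans ?_
    have h1 : f 0 = 4 * w := if_pos rfl
    have h2 : w * 1 ≤ w * el X := by gcongr
    linarith
  have hmain := schur (Finset.Icc 1 K) b (fun k => X / k) (fun k l => f (Nat.dist k l))
    (fun k l => hf0 _) (fun k l => by simp only [Nat.dist_comm]) _ (fun k _ => by positivity) hrow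
  refine (bilinear_open α U Y b).trans (le_trans ?_ (hmain.trans (le_of_eq ?_)))
  · refine Finset.sum_le_sum fun k hk => Finset.sum_le_sum fun l hl => ?_
    rw [Finset.mem_Icc] at hk hl
    by_cases hkU : k ≤ U
    · rw [hb k hkU]; simp
    push Not at hkU
    refine mul_le_mul_of_nonneg_left ?_ (abs_nonneg _)
    have hk0 : (0 : ℝ) < k := by exact_mod_cast hk.1
    have hl0 : (0 : ℝ) < l := by exact_mod_cast hl.1
    have hM0 : (0 : ℝ) < (max k l : ℕ) := by exact_mod_cast lt_max_of_lt_left hk.1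
    have hZ : ((Y / max k l : ℕ) : ℝ) ≤ X / (max k l : ℕ) := Nat.cast_div_le.trans (by gcongr)
    have hmin : X / (max k l : ℕ) ≤ min (X / k) (X / l) := by
      refine le_min ?_ ?_
      · gcongr; exact le_max_left _ _
      · gcongr; exact le_max_right _ _
    refine (weighted_geom (α * ((k : ℝ) - l)) U (Y / max k l) (X / (max k l : ℕ)) (by positivity) hZ).trans ?_
    refine mul_le_mul (hZ.trans hmin) ?_ (mul_nonneg zero_le_two (G_nonneg (by positivity) _))
      (le_min (by positivity) (by positivity))
    by_cases hkl : k = l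
    · subst hkl
      rw [Nat.dist_self, sub_self, mul_zero, G_zero, max_self, show f 0 = 4 * w from if_pos rfl]
      have : X / k ≤ 2 * w := by
        rw [div_le_iff₀ hk0]
        refine hUX.trans ?_
        gcongr
      linarith
    · have hne : Nat.dist k l ≠ 0 := fun h0 => hkl (Nat.eq_of_dist_eq_zero h0)
      have hle : Nat.dist k l ≤ max k l := by simp only [Nat.dist]; omega
      have hG : G (X / (max k l : ℕ)) (α * ((k : ℝ) - l)) =
          G (X / (max k l : ℕ)) (α * (Nat.dist k l : ℕ)) := by
        rcases le_total k l with hc | hc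
        · rw [Nat.dist_eq_sub_of_le hc, Nat.cast_sub hc, ← G_neg]
          congr 1; ring
        · rw [Nat.dist_eq_sub_of_le_right hc, Nat.cast_sub hc]
      simp only [hf, if_neg hne]
      rw [hG]
      refine mul_le_mul_of_nonneg_left (G_mono (by positivity) ?_ _) zero_le_two
      have : (0 : ℝ) < (Nat.dist k l : ℕ) := by exact_mod_cast Nat.pos_of_ne_zero hne
      calc X / (max k l : ℕ) ≤ X / (Nat.dist k l : ℕ) := by gcongr
        _ ≤ _ := by gcongr; linarith
  · rw [Finset.sum_mul, Finset.sum_mul, Finset.sum_mul]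
    refine Finset.sum_congr rfl fun k _ => ?_
    ring

/-- The Type II estimate: the arithmetic-geometric mean inequality with the optimal balance, then
opening the square of the inner sum. -/
lemma bilinear (h : Par (d + 1) X α v q) (U Y : ℕ) (hY : (Y : ℝ) ≤ X)
    (hUX : X ≤ 2 * (X * v ^ 2 ^ (d + 1)) * U) (a b : ℕ → ℝ) (hb : ∀ k, k ≤ U → b k = 0) (A B : ℝ)
    (hA : ∑ m ∈ Finset.Ioc U Y, a m ^ 2 / m ≤ A)
    (hB : ∑ k ∈ Finset.Icc 1 (Y / (U + 1)), b k ^ 2 / k ≤ B) :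
    ‖∑ m ∈ Finset.Ioc U Y, a m • ∑ k ∈ Finset.Icc 1 (Y / m), b k • eF (α * (m * k))‖ ≤
      X * v ^ 2 ^ d * (A + 1500 * (B * el X)) := by
  have hX := h.hX
  have hX0 : 0 < X := by linarith
  have hel := one_le_el hX
  have hm : 0 < v ^ 2 ^ d := pow_pos h.v0 _
  set κ := v ^ 2 ^ d with hκ
  have hsq : v ^ 2 ^ (d + 1) = κ * κ := by rw [hκ, ← pow_add, pow_succ, mul_two]
  have h1 := bilinear_sq h U Y hY hUX b hb
  rw [hsq] at h1
  set c : ℕ → ℂ := fun m => ∑ k ∈ Finset.Icc 1 (Y / m), b k • eF (α * (m * k)) with hc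
  -- The mean square of the inner sums saves `κ ^ 2`, so the balance `κ X` saves `κ` in both terms.
  have h2 : ∀ m ∈ Finset.Ioc U Y, ‖a m • c m‖ ≤
      κ * X * (a m ^ 2 / m) + (κ * X)⁻¹ * (m * ‖c m‖ ^ 2) := by
    intro m hm1
    have hm0 : (0 : ℝ) < m := by exact_mod_cast (Nat.zero_le U).trans_lt (Finset.mem_Ioc.1 hm1).1
    rw [norm_smul, Real.norm_eq_abs, ← sq_abs (a m)]
    have e : κ * X * (|a m| ^ 2 / m) + (κ * X)⁻¹ * (m * ‖c m‖ ^ 2) - |a m| * ‖c m‖ =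
        ((κ * X * |a m| - m * ‖c m‖) ^ 2 + (κ * X * |a m|) * (m * ‖c m‖)) / (κ * X * m) := by
      field_simp
      ring
    have h3 : 0 ≤ ((κ * X * |a m| - m * ‖c m‖) ^ 2 + (κ * X * |a m|) * (m * ‖c m‖)) / (κ * X * m) := by
      positivity
    linarith
  calc ‖∑ m ∈ Finset.Ioc U Y, a m • c m‖ ≤ ∑ m ∈ Finset.Ioc U Y, ‖a m • c m‖ := norm_sum_le _ _
    _ ≤ κ * X * ∑ m ∈ Finset.Ioc U Y, a m ^ 2 / m +
        (κ * X)⁻¹ * ∑ m ∈ Finset.Ioc U Y, m * ‖c m‖ ^ 2 := by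
      rw [Finset.mul_sum, Finset.mul_sum, ← Finset.sum_add_distrib]
      exact Finset.sum_le_sum h2
    _ ≤ κ * X * A + (κ * X)⁻¹ * (B * X * (1500 * (X * (κ * κ) * el X))) := by
      refine add_le_add (by gcongr) (mul_le_mul_of_nonneg_left (h1.trans ?_) (by positivity))
      gcongr
    _ = _ := by field_simp

end

end VMI

/-! ### Vaughan's identity -/

namespace VMI

section

/-- The restriction of an arithmetic function to `n ≤ U`. -/
noncomputable def lo (f : ArithmeticFunction ℝ) (U : ℕ) : ArithmeticFunction ℝ :=
  ⟨fun n => if n ≤ U then f n else 0, by simp⟩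

/-- The restriction of an arithmetic function to `n > U`. -/
noncomputable def hi (f : ArithmeticFunction ℝ) (U : ℕ) : ArithmeticFunction ℝ :=
  ⟨fun n => if n ≤ U then 0 else f n, by simp⟩

lemma lo_apply (f : ArithmeticFunction ℝ) (U n : ℕ) : lo f U n = if n ≤ U then f n else 0 := rfl

lemma hi_apply (f : ArithmeticFunction ℝ) (U n : ℕ) : hi f U n = if n ≤ U then 0 else f n := rfl

lemma lo_add_hi (f : ArithmeticFunction ℝ) (U : ℕ) : lo f U + hi f U = f := by
  ext n
  rw [ArithmeticFunction.add_apply, lo_apply, hi_apply]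
  split_ifs <;> simp

lemma abs_lo_le {f : ArithmeticFunction ℝ} {g : ℕ → ℝ} (h : ∀ n, |f n| ≤ g n) (U n : ℕ) :
    |lo f U n| ≤ g n := by
  rw [lo_apply]
  split_ifs
  · exact h n
  · rw [abs_zero]; exact (abs_nonneg _).trans (h n)

lemma abs_hi_le {f : ArithmeticFunction ℝ} {g : ℕ → ℝ} (h : ∀ n, |f n| ≤ g n) (U n : ℕ) :
    |hi f U n| ≤ g n := by
  rw [hi_apply]
  split_ifs
  · rw [abs_zero]; exact (abs_nonneg _).trans (h n)
  · exact h n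

lemma lo_mul_lo (f g : ArithmeticFunction ℝ) (U k : ℕ) (hk : U * U < k) : (lo f U * lo g U) k = 0 := by
  rw [ArithmeticFunction.mul_apply]
  refine Finset.sum_eq_zero fun p hp => ?_
  rw [lo_apply, lo_apply]
  by_cases h1 : p.1 ≤ U
  · by_cases h2 : p.2 ≤ U
    · have := (Nat.mem_divisorsAntidiagonal.1 hp).1
      have := Nat.mul_le_mul h1 h2
      omega
    · rw [if_neg h2, mul_zero]
  · rw [if_neg h1, zero_mul]

lemma hi_mul (f g : ArithmeticFunction ℝ) (U k : ℕ) (hk : k ≤ U) : (hi f U * g) k = 0 := by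
  rw [ArithmeticFunction.mul_apply]
  refine Finset.sum_eq_zero fun p hp => ?_
  obtain ⟨h1, h2⟩ := Nat.mem_divisorsAntidiagonal.1 hp
  have h3 : p.1 ≤ k := Nat.le_of_dvd (Nat.pos_of_ne_zero h2) (h1 ▸ dvd_mul_right _ _)
  rw [hi_apply, if_pos (h3.trans hk), zero_mul]

/-- Summation by parts against the logarithm. -/
lemma log_abel (a : ℕ → ℂ) (y : ℕ) : ∑ m ∈ Finset.Icc 1 y, Real.log m • a m =
    Real.log y • ∑ m ∈ Finset.Icc 1 y, a m -
      ∑ s ∈ Finset.range y, (Real.log (s + 1 : ℕ) - Real.log s) • ∑ m ∈ Finset.Icc 1 s, a m := by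
  induction y with
  | zero => simp
  | succ y ih =>
    rw [Finset.sum_Icc_succ_top (by omega), Finset.sum_Icc_succ_top (by omega), ih,
      Finset.sum_range_succ]
    simp only [Complex.real_smul]
    push_cast
    ring

/-- The logarithmic weight is removed by partial summation; the cutoffs `s` carry a total mass `log Y`. -/
lemma norm_log_sum_le (a : ℕ → ℂ) (y Y : ℕ) (hy : y ≤ Y) :
    ‖∑ m ∈ Finset.Icc 1 y, Real.log m • a m‖ ≤ Real.log Y * ‖∑ m ∈ Finset.Icc 1 y, a m‖ +
      ∑ s ∈ Finset.range Y, (Real.log (s + 1 : ℕ) - Real.log s) *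
        ‖∑ m ∈ Finset.Icc 1 (min s y), a m‖ := by
  have hw : ∀ s : ℕ, 0 ≤ Real.log (s + 1 : ℕ) - Real.log s := by
    intro s
    rcases Nat.eq_zero_or_pos s with rfl | hs
    · simp
    · refine sub_nonneg.2 (Real.log_le_log (by exact_mod_cast hs) ?_)
      push_cast; linarith
  rw [log_abel]
  refine (norm_sub_le _ _).trans (add_le_add ?_ ?_)
  · rw [norm_smul, Real.norm_of_nonneg (Real.log_natCast_nonneg y)]
    rcases Nat.eq_zero_or_pos y with rfl | h0
    · simp
    · refine mul_le_mul_of_nonneg_right (Real.log_le_log (by exact_mod_cast h0) ?_) (norm_nonneg _)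
      exact_mod_cast hy
  · refine (norm_sum_le _ _).trans ?_
    calc ∑ s ∈ Finset.range y, ‖(Real.log (s + 1 : ℕ) - Real.log s) • ∑ m ∈ Finset.Icc 1 s, a m‖
        = ∑ s ∈ Finset.range y, (Real.log (s + 1 : ℕ) - Real.log s) *
            ‖∑ m ∈ Finset.Icc 1 (min s y), a m‖ := by
          refine Finset.sum_congr rfl fun s hs => ?_
          rw [norm_smul, Real.norm_of_nonneg (hw s), min_eq_left (Finset.mem_range.1 hs).le]
      _ ≤ _ := Finset.sum_le_sum_of_subset_of_nonneg (Finset.range_mono hy)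
          fun s _ _ => mul_nonneg (hw s) (norm_nonneg _)

variable {L : Type*} [Field L] [NumberField L] {j : ℕ}

lemma rlog_apply (n : ℕ) : rlog L n = rr L n * Real.log n := rfl

/-- Vaughan's identity with both cutoffs equal to `U`, a formal consequence of `λ * r = r log` and
`μ * r = 1`. -/
lemma vaughan (U : ℕ) : lam L = lo (lam L) U + lo (mu L) U * rlog L -
    lo (mu L) U * lo (lam L) U * rr L + hi (lam L) U * (hi (mu L) U * rr L) := by
  have h1 := lo_add_hi (lam L) U
  have h2 := lo_add_hi (mu L) U
  have h3 : hi (lam L) U = hi (lam L) U * (mu L * rr L) := by rw [mu_mul_rr, mul_one]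
  have h4 : lo (mu L) U * rlog L = lo (mu L) U * (lam L * rr L) := by rw [lam_mul_rr]
  calc lam L = lo (lam L) U + hi (lam L) U * ((lo (mu L) U + hi (mu L) U) * rr L) := by
        rw [h2, ← h3, h1]
    _ = lo (lam L) U + lo (mu L) U * ((lo (lam L) U + hi (lam L) U) * rr L) -
          lo (mu L) U * lo (lam L) U * rr L + hi (lam L) U * (hi (mu L) U * rr L) := by ring
    _ = _ := by rw [h1, h4]

variable (L) in
/-- The Type I estimate with an additional logarithmic weight. -/
lemma typeI_log (hj : Module.finrank ℚ L = j + 1) :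
    ∃ C : ℝ, 0 < C ∧ ∀ (X α v : ℝ) (q : ℕ), Par (j + 1) X α v q → ∀ (R Y : ℕ),
      (R : ℝ) ^ 2 ≤ X → (Y : ℝ) ≤ X →
      ∑ k ∈ Finset.Icc 1 R, rr L k * ‖∑ m ∈ Finset.Icc 1 (Y / k), rlog L m • eF (α * k * m)‖ ≤
        C * (X * v * el X ^ (4 * 4 ^ (j + 1) + 2)) := by
  obtain ⟨C, hC, hI⟩ := typeI L hj
  refine ⟨2 * C, by positivity, ?_⟩
  intro X α v q h R Y hR hY
  have hX := h.hX
  have hX0 : 0 < X := by linarith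
  have hel := one_le_el hX
  have hv := h.v0
  set T := C * (X * v * el X ^ (4 * 4 ^ (j + 1) + 1)) with hT
  have hT0 : 0 ≤ T := by positivity
  have hlog : Real.log Y ≤ el X := by
    have := log_le_el hX le_rfl Y (by rwa [one_mul])
    rw [Real.log_one, add_zero, one_mul] at this
    linarith
  have hlog0 := Real.log_natCast_nonneg Y
  have hyk : ∀ k ∈ Finset.Icc 1 R, ((Y / k : ℕ) : ℝ) * k ≤ X := by
    intro k _
    refine le_trans ?_ hY
    exact_mod_cast Nat.div_mul_le_self Y k
  have h1 := hI X α v q h R (fun k => Y / k) hR hyk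
  have h2 : ∀ s : ℕ, ∑ k ∈ Finset.Icc 1 R,
      rr L k * ‖∑ m ∈ Finset.Icc 1 (min s (Y / k)), rr L m • eF (α * k * m)‖ ≤ T := by
    intro s
    refine hI X α v q h R (fun k => min s (Y / k)) hR fun k hk => le_trans ?_ (hyk k hk)
    gcongr
    exact min_le_right _ _
  have hw : ∀ s : ℕ, 0 ≤ Real.log (s + 1 : ℕ) - Real.log s := by
    intro s
    rcases Nat.eq_zero_or_pos s with rfl | hs
    · simp
    · refine sub_nonneg.2 (Real.log_le_log (by exact_mod_cast hs) ?_)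
      push_cast; linarith
  calc ∑ k ∈ Finset.Icc 1 R, rr L k * ‖∑ m ∈ Finset.Icc 1 (Y / k), rlog L m • eF (α * k * m)‖
      ≤ ∑ k ∈ Finset.Icc 1 R, rr L k * (Real.log Y *
          ‖∑ m ∈ Finset.Icc 1 (Y / k), rr L m • eF (α * k * m)‖ +
          ∑ s ∈ Finset.range Y, (Real.log (s + 1 : ℕ) - Real.log s) *
            ‖∑ m ∈ Finset.Icc 1 (min s (Y / k)), rr L m • eF (α * k * m)‖) := by
        refine Finset.sum_le_sum fun k _ => mul_le_mul_of_nonneg_left ?_ (rr_nonneg k)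
        refine le_trans (le_of_eq ?_) (norm_log_sum_le (fun m => rr L m • eF (α * k * m)) (Y / k) Y
          (Nat.div_le_self _ _))
        congr 1
        refine Finset.sum_congr rfl fun m _ => ?_
        rw [rlog_apply, smul_smul, mul_comm]
    _ = Real.log Y * ∑ k ∈ Finset.Icc 1 R,
          rr L k * ‖∑ m ∈ Finset.Icc 1 (Y / k), rr L m • eF (α * k * m)‖ +
        ∑ s ∈ Finset.range Y, (Real.log (s + 1 : ℕ) - Real.log s) * ∑ k ∈ Finset.Icc 1 R,
          rr L k * ‖∑ m ∈ Finset.Icc 1 (min s (Y / k)), rr L m • eF (α * k * m)‖ := by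
        simp only [mul_add, Finset.sum_add_distrib, Finset.mul_sum]
        rw [Finset.sum_comm (s := Finset.range Y)]
        congr 1
        · exact Finset.sum_congr rfl fun k _ => by ring
        · exact Finset.sum_congr rfl fun k _ => Finset.sum_congr rfl fun s _ => by ring
    _ ≤ Real.log Y * T + ∑ s ∈ Finset.range Y, (Real.log (s + 1 : ℕ) - Real.log s) * T :=
        add_le_add (mul_le_mul_of_nonneg_left h1 hlog0)
          (Finset.sum_le_sum fun s _ => mul_le_mul_of_nonneg_left (h2 s) (hw s))
    _ = 2 * Real.log Y * T := by
        rw [← Finset.sum_mul, Finset.sum_range_sub (fun s : ℕ => Real.log s)]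
        simp only [Nat.cast_zero, Real.log_zero, sub_zero]
        ring
    _ ≤ 2 * el X * T := by gcongr
    _ = _ := by rw [hT]; ring

variable (L) in
/-- The trivial bound. -/
lemma lam_sum_le : ∃ C : ℝ, 0 < C ∧ ∀ (Y : ℕ) (ℓ : ℝ), Real.log Y ≤ ℓ →
    ∑ n ∈ Finset.Icc 1 Y, lam L n ≤ C * Y * ℓ := by
  obtain ⟨C, hC, h⟩ := count_le L
  refine ⟨C, hC, fun Y ℓ hℓ => ?_⟩
  have hlog0 := Real.log_natCast_nonneg Y
  calc ∑ n ∈ Finset.Icc 1 Y, lam L n ≤ ∑ n ∈ Finset.Icc 1 Y, rr L n * Real.log Y := by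
        refine Finset.sum_le_sum fun n hn => (lam_le n).trans ?_
        rw [Finset.mem_Icc] at hn
        refine mul_le_mul_of_nonneg_left (Real.log_le_log (by exact_mod_cast hn.1) ?_) (rr_nonneg n)
        exact_mod_cast hn.2
    _ ≤ C * Y * Real.log Y := by rw [← Finset.sum_mul]; gcongr; exact h Y
    _ ≤ _ := by gcongr

end

end VMI

/-! ### The main estimate -/

namespace VMI

section

variable {L : Type*} [Field L] [NumberField L] {j : ℕ}

/-- A convolution with a factor supported on `k ≤ R` and bounded by `κ r(k)` is bounded by a Type I
sum. -/
lemma conv_norm_le (c g : ArithmeticFunction ℝ) (R Y : ℕ) (α κ : ℝ) (hc0 : ∀ k, R < k → c k = 0)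
    (hc : ∀ k, k ≤ R → |c k| ≤ κ * rr L k) :
    ‖∑ n ∈ Finset.Icc 1 Y, (c * g) n • eF (α * n)‖ ≤
      κ * ∑ k ∈ Finset.Icc 1 R, rr L k * ‖∑ m ∈ Finset.Icc 1 (Y / k), g m • eF (α * k * m)‖ := by
  have hκ : ∀ k, k ≤ R → 0 ≤ κ * rr L k := fun k hk => (abs_nonneg _).trans (hc k hk)
  rw [sum_conv c g (fun n : ℕ => eF (α * n)) Y]
  have h1 : ∑ k ∈ Finset.Icc 1 Y, c k • ∑ m ∈ Finset.Icc 1 (Y / k), g m • eF (α * ((k * m : ℕ) : ℝ)) =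
      ∑ k ∈ (Finset.Icc 1 Y).filter (· ≤ R), c k • ∑ m ∈ Finset.Icc 1 (Y / k), g m • eF (α * k * m) := by
    rw [Finset.sum_filter]
    refine Finset.sum_congr rfl fun k _ => ?_
    split_ifs with hk
    · simp only [Nat.cast_mul, mul_assoc]
    · rw [hc0 k (not_le.1 hk), zero_smul]
  rw [h1, Finset.mul_sum]
  refine (norm_sum_le _ _).trans (le_trans (Finset.sum_le_sum (g := fun k => κ * (rr L k *
    ‖∑ m ∈ Finset.Icc 1 (Y / k), g m • eF (α * k * m)‖)) fun k hk => ?_)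
    (Finset.sum_le_sum_of_subset_of_nonneg (fun k hk => ?_) fun k hk _ => ?_))
  · rw [norm_smul, Real.norm_eq_abs, ← mul_assoc]
    exact mul_le_mul_of_nonneg_right (hc k (Finset.mem_filter.1 hk).2) (norm_nonneg _)
  · rw [Finset.mem_filter, Finset.mem_Icc] at hk
    exact Finset.mem_Icc.2 ⟨hk.1.1, hk.2⟩
  · rw [← mul_assoc]
    exact mul_nonneg (hκ k (Finset.mem_Icc.1 hk).2) (norm_nonneg _)

/-- The Type II part of Vaughan's identity. -/
lemma typeII (hj : Module.finrank ℚ L = j + 1) {X α v : ℝ} {q : ℕ} (h : Par (j + 1) X α v q)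
    (U Y : ℕ) (hY : (Y : ℝ) ≤ X) (hUX : X ≤ 2 * (X * v ^ 2 ^ (j + 1)) * U) :
    ‖∑ n ∈ Finset.Icc 1 Y, (hi (lam L) U * (hi (mu L) U * rr L)) n • eF (α * n)‖ ≤
      1501 * (X * v * el X ^ (4 * 4 ^ (j + 1) + 2)) := by
  have hX := h.hX
  have hX0 : 0 < X := by linarith
  have hel := one_le_el hX
  have hv := h.v0
  have hlogY : ∀ m : ℕ, m ≤ Y → 1 + Real.log m ≤ el X := by
    intro m hm
    have := log_le_el hX le_rfl m (by rw [one_mul]; exact le_trans (by exact_mod_cast hm) hY)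
    rwa [Real.log_one, add_zero, one_mul] at this
  have h4 : (2 : ℕ) ^ (j + 1) * 2 ^ (j + 1) = 4 ^ (j + 1) := by rw [← mul_pow]; norm_num
  have hrrsq : ∀ n, rr L n ^ 2 ≤ D (4 ^ (j + 1)) n := by
    intro n
    have h1 : rr L n ≤ D (2 ^ (j + 1)) n := by rw [← hj]; exact rr_le L n
    rw [sq, ← h4]
    exact (mul_le_mul h1 h1 (rr_nonneg n) (D_nonneg _ _)).trans (D_mul_D _ _ n)
  have hDsum : ∀ (i Z : ℕ), Z ≤ Y → ∑ n ∈ Finset.Icc 1 Z, D i n / n ≤ el X ^ i := by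
    intro i Z hZ
    refine (sum_D_div i Z).trans (pow_le_pow_left₀ ?_ (hlogY Z hZ) _)
    have := Real.log_natCast_nonneg Z
    linarith
  have hA : ∑ m ∈ Finset.Ioc U Y, lam L m ^ 2 / m ≤ el X ^ (4 ^ (j + 1) + 2) := by
    calc ∑ m ∈ Finset.Ioc U Y, lam L m ^ 2 / m ≤ ∑ m ∈ Finset.Icc 1 Y, lam L m ^ 2 / m := by
          refine Finset.sum_le_sum_of_subset_of_nonneg (fun m hm => ?_) fun m _ _ => by positivity
          rw [Finset.mem_Ioc] at hm
          rw [Finset.mem_Icc]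
          omega
      _ ≤ ∑ m ∈ Finset.Icc 1 Y, el X ^ 2 * (D (4 ^ (j + 1)) m / m) := by
          refine Finset.sum_le_sum fun m hm => ?_
          rw [Finset.mem_Icc] at hm
          have h1 := hlogY m hm.2
          have h2 := Real.log_natCast_nonneg m
          have h3 : lam L m ≤ rr L m * el X :=
            (lam_le m).trans (mul_le_mul_of_nonneg_left (by linarith) (rr_nonneg m))
          have h5 : lam L m ^ 2 ≤ el X ^ 2 * D (4 ^ (j + 1)) m := by
            calc lam L m ^ 2 ≤ (rr L m * el X) ^ 2 := pow_le_pow_left₀ (lam_nonneg m) h3 2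
              _ = el X ^ 2 * rr L m ^ 2 := by ring
              _ ≤ _ := by gcongr; exact hrrsq m
          rw [← mul_div_assoc]
          gcongr
      _ ≤ el X ^ 2 * el X ^ 4 ^ (j + 1) := by
          rw [← Finset.mul_sum]
          gcongr
          exact hDsum _ Y le_rfl
      _ = _ := by rw [← pow_add, add_comm]
  have hB : ∑ k ∈ Finset.Icc 1 (Y / (U + 1)), (hi (mu L) U * rr L) k ^ 2 / k ≤
      el X ^ (4 * 4 ^ (j + 1)) := by
    refine le_trans (Finset.sum_le_sum fun k _ => ?_) (hDsum (4 * 4 ^ (j + 1)) _ (Nat.div_le_self _ _))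
    have h1 : |(hi (mu L) U * rr L) k| ≤ D (2 ^ (j + 1) + 2 ^ (j + 1)) k := by
      have e : D (2 ^ (j + 1) + 2 ^ (j + 1)) = D (2 ^ (j + 1)) * D (2 ^ (j + 1)) := pow_add _ _ _
      rw [e]
      refine abs_mul_le' (abs_hi_le (fun n => (abs_mu_le n).trans ?_) U) (fun n => ?_) k
      · rw [← hj]; exact rr_le L n
      · rw [abs_of_nonneg (rr_nonneg n), ← hj]; exact rr_le L n
    have e : (2 ^ (j + 1) + 2 ^ (j + 1)) * (2 ^ (j + 1) + 2 ^ (j + 1)) = 4 * 4 ^ (j + 1) := by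
      rw [← h4]; ring
    gcongr
    rw [← sq_abs, sq, ← e]
    exact (mul_le_mul h1 h1 (abs_nonneg _) (D_nonneg _ _)).trans (D_mul_D _ _ k)
  have hbil := bilinear h U Y hY hUX (lam L) (fun k => (hi (mu L) U * rr L) k) (fun k hk => hi_mul _ _ U k hk)
    _ _ hA hB
  rw [sum_conv (hi (lam L) U) (hi (mu L) U * rr L) (fun n : ℕ => eF (α * n)) Y]
  have h1 : ∑ m ∈ Finset.Icc 1 Y, hi (lam L) U m • ∑ k ∈ Finset.Icc 1 (Y / m),
        (hi (mu L) U * rr L) k • eF (α * ((m * k : ℕ) : ℝ)) =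
      ∑ m ∈ Finset.Ioc U Y, lam L m • ∑ k ∈ Finset.Icc 1 (Y / m),
        (hi (mu L) U * rr L) k • eF (α * (m * k)) := by
    have h2 : Finset.Ioc U Y = (Finset.Icc 1 Y).filter (fun m => ¬ m ≤ U) := by
      ext m
      simp only [Finset.mem_Ioc, Finset.mem_filter, Finset.mem_Icc]
      omega
    rw [h2, Finset.sum_filter]
    refine Finset.sum_congr rfl fun m _ => ?_
    rw [hi_apply]
    split_ifs with hm
    · rw [zero_smul]
    · simp only [Nat.cast_mul]
  rw [h1]
  refine hbil.trans ?_
  have hvP : v ^ 2 ^ j ≤ v := pow_le_of_le_one hv.le h.v1 (by positivity)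
  calc X * v ^ 2 ^ j * (el X ^ (4 ^ (j + 1) + 2) + 1500 * (el X ^ (4 * 4 ^ (j + 1)) * el X))
      ≤ X * v * (el X ^ (4 * 4 ^ (j + 1) + 2) + 1500 * el X ^ (4 * 4 ^ (j + 1) + 2)) := by
        rw [← pow_succ]
        gcongr <;> first | exact hel | omega
    _ = _ := by ring

variable (L) in
/-- The main estimate: a saving of `v` over the trivial bound, up to powers of the logarithm. -/
theorem core (hj : Module.finrank ℚ L = j + 1) :
    ∃ C : ℝ, 0 < C ∧ ∀ (X α v : ℝ) (q : ℕ), Par (j + 1) X α v q → ∀ Y : ℕ, (Y : ℝ) ≤ X →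
      ‖∑ n ∈ Finset.Icc 1 Y, lam L n • eF (α * n)‖ ≤
        C * (X * v * el X ^ (4 * 4 ^ (j + 1) + 2)) := by
  obtain ⟨C1, hC1, hT⟩ := lam_sum_le L
  obtain ⟨C2, hC2, hI⟩ := typeI_log L hj
  obtain ⟨C3, hC3, hI'⟩ := typeI L hj
  refine ⟨C1 + C2 + C3 + 1501, by positivity, ?_⟩
  intro X α v q h Y hY
  have hX := h.hX
  have hX0 : 0 < X := by linarith
  have hX1 : 1 ≤ X := by linarith
  have hel := one_le_el hX
  have hv := h.v0
  have hvD0 := h.vD0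
  -- the cutoff `U` is about `X ^ (1 / 4)`
  set r := X ^ (1 / 4 : ℝ) with hr
  have hr0 : 0 < r := Real.rpow_pos_of_pos hX0 _
  have hr4 : r ^ 4 = X := by
    rw [hr, ← Real.rpow_natCast, ← Real.rpow_mul hX0.le]; norm_num
  have hr1 : 1 ≤ r := Real.one_le_rpow hX1 (by norm_num)
  set U := ⌊r⌋₊ with hU
  have hUr : (U : ℝ) ≤ r := Nat.floor_le hr0.le
  have hU1 : (1 : ℝ) ≤ U := by exact_mod_cast Nat.le_floor (by exact_mod_cast hr1)
  have hrU : r ≤ 2 * U := by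
    have := Nat.lt_floor_add_one r
    linarith
  have hrv : 1 ≤ v ^ 2 ^ (j + 1) * r := by
    have h1 : X ^ (-(1 / 4) : ℝ) ≤ v ^ 2 ^ (j + 1) := by
      refine le_trans (Real.rpow_le_rpow_of_exponent_le hX1 (neg_le_neg ?_)) h.X1
      push_cast
      have : (0 : ℝ) ≤ j := Nat.cast_nonneg j
      exact one_div_le_one_div_of_le (by norm_num) (by linarith)
    calc (1 : ℝ) = X ^ (-(1 / 4) : ℝ) * r := by
          rw [hr, ← Real.rpow_add hX0, neg_add_cancel, Real.rpow_zero]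
      _ ≤ _ := by gcongr
  have hvv : v ^ 2 ^ (j + 1) ≤ v := pow_le_of_le_one hv.le h.v1 (by positivity)
  have hUX : X ≤ 2 * (X * v ^ 2 ^ (j + 1)) * U := by
    calc X = X * 1 := (mul_one X).symm
      _ ≤ X * (v ^ 2 ^ (j + 1) * (2 * U)) := by
        refine mul_le_mul_of_nonneg_left (hrv.trans ?_) hX0.le
        gcongr
      _ = _ := by ring
  -- The double Type I sum has the range `U ^ 2`, admissible because `U ^ 4 ≤ X`.
  have hR : ((U * U : ℕ) : ℝ) ^ 2 ≤ X := by
    push_cast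
    calc ((U : ℝ) * U) ^ 2 ≤ (r * r) ^ 2 := by gcongr
      _ = X := by rw [← hr4]; ring
  have hUU : (U : ℝ) ≤ (U * U : ℕ) := by push_cast; nlinarith
  have hR1 : (U : ℝ) ^ 2 ≤ X := le_trans (by gcongr) hR
  have hrX : r ≤ X * v := by
    have h1 : r * r ≤ X := by rw [← hr4]; nlinarith [one_le_pow₀ hr1 (n := 2)]
    calc r = r * 1 := (mul_one r).symm
      _ ≤ r * (v * r) := by
        refine mul_le_mul_of_nonneg_left (hrv.trans ?_) hr0.le
        gcongr
      _ = r * r * v := by ring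
      _ ≤ _ := by gcongr
  have hlog : ∀ n : ℕ, (n : ℝ) ≤ X → Real.log n ≤ el X := by
    intro n hn
    have := log_le_el hX le_rfl n (by rwa [one_mul])
    rw [Real.log_one, add_zero, one_mul] at this
    linarith
  set E := 4 * 4 ^ (j + 1) + 2 with hE
  have hS1 : ‖∑ n ∈ Finset.Icc 1 Y, lo (lam L) U n • eF (α * n)‖ ≤ C1 * (X * v * el X ^ E) := by
    calc ‖∑ n ∈ Finset.Icc 1 Y, lo (lam L) U n • eF (α * n)‖
        ≤ ∑ n ∈ Finset.Icc 1 Y, ‖lo (lam L) U n • eF (α * n)‖ := norm_sum_le _ _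
      _ = ∑ n ∈ (Finset.Icc 1 Y).filter (· ≤ U), lam L n := by
        rw [Finset.sum_filter]
        refine Finset.sum_congr rfl fun n _ => ?_
        rw [norm_smul, norm_eF, mul_one, lo_apply]
        split_ifs
        · exact Real.norm_of_nonneg (lam_nonneg n)
        · exact norm_zero
      _ ≤ ∑ n ∈ Finset.Icc 1 U, lam L n := by
        refine Finset.sum_le_sum_of_subset_of_nonneg (fun n hn => ?_) fun n _ _ => lam_nonneg n
        rw [Finset.mem_filter, Finset.mem_Icc] at hn
        exact Finset.mem_Icc.2 ⟨hn.1.1, hn.2⟩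
      _ ≤ C1 * U * el X := hT U _ (hlog U (hUU.trans (by nlinarith)))
      _ ≤ C1 * (X * v) * el X ^ E := by
        gcongr
        · exact hUr.trans hrX
        · exact le_self_pow₀ hel (by omega)
      _ = _ := by ring
  have hS2 : ‖∑ n ∈ Finset.Icc 1 Y, (lo (mu L) U * rlog L) n • eF (α * n)‖ ≤
      C2 * (X * v * el X ^ E) := by
    refine (conv_norm_le (L := L) (lo (mu L) U) (rlog L) U Y α 1 (fun k hk => ?_) fun k _ => ?_).trans ?_
    · rw [lo_apply, if_neg (not_le.2 hk)]
    · rw [one_mul]; exact abs_lo_le abs_mu_le U k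
    · rw [one_mul]; exact hI X α v q h U Y hR1 hY
  have hS3 : ‖∑ n ∈ Finset.Icc 1 Y, (lo (mu L) U * lo (lam L) U * rr L) n • eF (α * n)‖ ≤
      C3 * (X * v * el X ^ E) := by
    refine (conv_norm_le (L := L) (lo (mu L) U * lo (lam L) U) (rr L) (U * U) Y α (el X)
      (fun k hk => lo_mul_lo _ _ U k hk) fun k hk => ?_).trans ?_
    · have h1 : |(lo (mu L) U * lo (lam L) U) k| ≤ (rr L * lam L) k :=
        abs_mul_le' (abs_lo_le abs_mu_le U)
          (abs_lo_le (fun n => (abs_of_nonneg (lam_nonneg n)).le) U) k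
      rw [mul_comm (rr L), lam_mul_rr, rlog_apply] at h1
      refine h1.trans ?_
      rw [mul_comm]
      refine mul_le_mul_of_nonneg_right (hlog k ?_) (rr_nonneg k)
      have h2 : (k : ℝ) ≤ (U * U : ℕ) := by exact_mod_cast hk
      nlinarith
    · calc el X * _ ≤ el X * (C3 * (X * v * el X ^ (4 * 4 ^ (j + 1) + 1))) := by
            refine mul_le_mul_of_nonneg_left (hI' X α v q h (U * U) (fun k => Y / k) hR fun k _ => ?_)
              (by linarith)
            refine le_trans ?_ hY
            exact_mod_cast Nat.div_mul_le_self Y k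
        _ = _ := by rw [hE]; ring
  have hS4 := typeII hj h U Y hY hUX
  have hsplit : ∑ n ∈ Finset.Icc 1 Y, lam L n • eF (α * n) =
      ∑ n ∈ Finset.Icc 1 Y, lo (lam L) U n • eF (α * n) +
      ∑ n ∈ Finset.Icc 1 Y, (lo (mu L) U * rlog L) n • eF (α * n) -
      ∑ n ∈ Finset.Icc 1 Y, (lo (mu L) U * lo (lam L) U * rr L) n • eF (α * n) +
      ∑ n ∈ Finset.Icc 1 Y, (hi (lam L) U * (hi (mu L) U * rr L)) n • eF (α * n) := by
    rw [← Finset.sum_add_distrib, ← Finset.sum_sub_distrib, ← Finset.sum_add_distrib]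
    refine Finset.sum_congr rfl fun n _ => ?_
    conv_lhs => rw [vaughan (L := L) U]
    simp only [ArithmeticFunction.add_apply, sub_eq_add_neg, ArithmeticFunction.neg_apply, add_smul,
      neg_smul]
  rw [hsplit]
  refine (norm_add_le _ _).trans (le_trans (add_le_add_left ((norm_sub_le _ _).trans
    (add_le_add_left (norm_add_le _ _) _)) _) ?_)
  linarith

end

end VMI

/-! ### Deduction of the bound in terms of `B` -/

namespace VMI

section

variable (L : Type*) [Field L] [NumberField L]

/-- The sum over ideals as a sum over their norms. -/
lemma finsum_eq (X α : ℝ) (hX : 0 ≤ X) :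
    (∑ᶠ I : Ideal (𝓞 L), if (Ideal.absNorm I : ℝ) ≤ X then
      (LamIdeal L I : ℂ) * eF (α * (Ideal.absNorm I : ℝ)) else 0) =
    ∑ n ∈ Finset.Icc 1 ⌊X⌋₊, lam L n • eF (α * n) := by
  rw [lam, ← sum_ideals (LamIdeal L) (fun n : ℕ => eF (α * n)) ⌊X⌋₊]
  rw [finsum_eq_sum_of_support_subset (s := ideals L ⌊X⌋₊)]
  · refine Finset.sum_congr rfl fun I hI => ?_
    rw [if_pos, Complex.real_smul]
    exact (Nat.le_floor_iff hX).1 (mem_ideals.1 hI).2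
  · intro I hI
    rw [Function.mem_support] at hI
    have h1 : (Ideal.absNorm I : ℝ) ≤ X := by
      by_contra h
      exact hI (if_neg h)
    rw [if_pos h1] at hI
    have h2 : LamIdeal L I ≠ 0 := fun h => hI (by rw [h]; simp)
    rw [Finset.mem_coe, mem_ideals]
    refine ⟨?_, Nat.le_floor h1⟩
    rintro rfl
    obtain ⟨P, n, hP, hn, h⟩ := Lam_ne_zero h2
    exact pow_ne_zero n hP.ne_zero h.symm

lemma el_le_log {X : ℝ} (hX : 2 ≤ X) : el X ≤ 3 * Real.log X := by
  have h1 : Real.log 2 ≤ Real.log X := Real.log_le_log two_pos hX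
  have h2 := Real.log_two_gt_d9
  rw [el]; linarith

/-- Powers of the logarithm are `O(X ^ ε)`. -/
lemma el_pow_le (n : ℕ) (ε : ℝ) (hε : 0 < ε) :
    ∃ C : ℝ, 0 < C ∧ ∀ X : ℝ, 2 ≤ X → el X ^ n ≤ C * X ^ ε := by
  set δ := ε / (n + 1) with hδ
  have hδ0 : 0 < δ := by positivity
  refine ⟨(1 + 1 / δ) ^ n, by positivity, fun X hX => ?_⟩
  have hX1 : 1 ≤ X := by linarith
  have hX0 : 0 ≤ X := by linarith
  have h1 : el X ≤ (1 + 1 / δ) * X ^ δ := by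
    have h2 := Real.log_le_rpow_div hX0 hδ0
    have h3 := Real.one_le_rpow hX1 hδ0.le
    rw [el, add_mul, one_mul, one_div, inv_mul_eq_div]
    linarith
  calc el X ^ n ≤ ((1 + 1 / δ) * X ^ δ) ^ n :=
        pow_le_pow_left₀ (by linarith [one_le_el hX]) h1 n
    _ = (1 + 1 / δ) ^ n * X ^ (δ * n) := by
        rw [mul_pow, Real.rpow_mul hX0, Real.rpow_natCast]
    _ ≤ _ := by
        gcongr
        rw [hδ, div_mul_eq_mul_div, div_le_iff₀ (by positivity)]
        linarith

/-- The bound of the main estimate in terms of `B`; for small `B` the trivial bound suffices. -/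
theorem main_bound (j : ℕ) (hj : Module.finrank ℚ L = j + 1) :
    ∃ C : ℝ, 0 < C ∧ ∀ X : ℝ, 2 ≤ X → ∀ B : ℝ, 0 < B → ∀ (α : ℝ) (q : ℕ), HasRatApprox α q →
      B < (q : ℝ) → (q : ℝ) < X / B →
      ‖∑ n ∈ Finset.Icc 1 ⌊X⌋₊, lam L n • eF (α * n)‖ ≤
        C * X * (el X ^ 2 * B ^ (-(((10 : ℝ) ^ (j + 1))⁻¹ / 12)) +
          el X ^ 2 * X ^ (-(((10 : ℝ) ^ (j + 1))⁻¹ / 60))) := by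
  obtain ⟨C0, hC0, hT⟩ := lam_sum_le L
  obtain ⟨C1, hC1, hmain⟩ := core L hj
  set s : ℝ := ((2 : ℝ) ^ (j + 1))⁻¹ with hs
  set c0 : ℝ := ((10 : ℝ) ^ (j + 1))⁻¹ / 12 with hc0
  set c1 : ℝ := ((10 : ℝ) ^ (j + 1))⁻¹ / 60 with hc1
  have hs0 : 0 < s := by positivity
  have hc00 : 0 < c0 := by positivity
  have h10 : (10 : ℝ) ^ (j + 1) = 5 ^ (j + 1) * 2 ^ (j + 1) := by rw [← mul_pow]; norm_num
  have hj5 : (j + 1 : ℝ) ≤ 5 ^ (j + 1) := by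
    exact_mod_cast (Nat.lt_pow_self (n := j + 1) (by norm_num : 1 < 5)).le
  -- The gap between the exponents of `X` absorbs the powers of the logarithm.
  have hε : 0 < s / (4 * (j + 1)) - c1 := by
    have hc1' : c1 = s / (60 * 5 ^ (j + 1)) := by rw [hc1, hs, h10]; field_simp
    have hp : (0 : ℝ) < 5 ^ (j + 1) := by positivity
    rw [hc1', sub_pos]
    exact div_lt_div_of_pos_left hs0 (by positivity) (by linarith)
  obtain ⟨C2, hC2, hlog⟩ := el_pow_le (4 * 4 ^ (j + 1)) _ hε
  refine ⟨C0 + C1 + C1 * C2, by positivity, ?_⟩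
  intro X hX B hB α q hα hBq hqX
  have hX0 : 0 < X := by linarith
  have hX1 : 1 ≤ X := by linarith
  have hel := one_le_el hX
  have hY : (⌊X⌋₊ : ℝ) ≤ X := Nat.floor_le hX0.le
  have hBp : 0 < B ^ (-c0) := Real.rpow_pos_of_pos hB _
  have hXp : 0 < X ^ (-c1) := Real.rpow_pos_of_pos hX0 _
  -- The threshold is chosen so that below it `B ^ c0 ≤ el X`, and the trivial bound suffices.
  by_cases hcase : B ≤ el X ^ (12 * 10 ^ (j + 1))
  · have h1 : B ^ c0 ≤ el X := by
      calc B ^ c0 ≤ (el X ^ (12 * 10 ^ (j + 1))) ^ c0 := Real.rpow_le_rpow hB.le hcase hc00.le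
        _ = el X := by
          rw [← Real.rpow_natCast, ← Real.rpow_mul (by linarith), hc0]
          push_cast
          rw [show (12 * (10 : ℝ) ^ (j + 1)) * (((10 : ℝ) ^ (j + 1))⁻¹ / 12) = 1 by field_simp,
            Real.rpow_one]
    have h2 : 1 ≤ el X * B ^ (-c0) := by
      rw [Real.rpow_neg hB.le, ← div_eq_mul_inv, le_div_iff₀ (Real.rpow_pos_of_pos hB _), one_mul]
      exact h1
    have h3 : Real.log ⌊X⌋₊ ≤ el X := by
      have := log_le_el hX le_rfl ⌊X⌋₊ (by rwa [one_mul])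
      rw [Real.log_one, add_zero, one_mul] at this
      linarith
    have h4 : el X ≤ el X ^ 2 * B ^ (-c0) := by nlinarith
    calc ‖∑ n ∈ Finset.Icc 1 ⌊X⌋₊, lam L n • eF (α * n)‖
        ≤ ∑ n ∈ Finset.Icc 1 ⌊X⌋₊, ‖lam L n • eF (α * n)‖ := norm_sum_le _ _
      _ = ∑ n ∈ Finset.Icc 1 ⌊X⌋₊, lam L n := Finset.sum_congr rfl fun n _ => by
          rw [norm_smul, norm_eF, mul_one, Real.norm_of_nonneg (lam_nonneg n)]
      _ ≤ C0 * ⌊X⌋₊ * el X := hT _ _ h3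
      _ ≤ (C0 + C1 + C1 * C2) * X * (el X ^ 2 * B ^ (-c0) + el X ^ 2 * X ^ (-c1)) := by
          gcongr
          · have : 0 < C1 * C2 := by positivity
            linarith
          · have : 0 < el X ^ 2 * X ^ (-c1) := by positivity
            linarith
  · push Not at hcase
    have hB1 : 1 ≤ B := (one_le_pow₀ hel).trans hcase.le
    -- The admissible saving is `v = w ^ s`, that is `v ^ 2 ^ d = w`.
    set w : ℝ := max B⁻¹ (X ^ (-(1 / (4 * (j + 1 : ℕ)) : ℝ))) with hw
    have hw0 : 0 < w := lt_max_of_lt_left (inv_pos.2 hB)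
    have hw1 : w ≤ 1 := max_le (inv_le_one_of_one_le₀ hB1)
      (Real.rpow_le_one_of_one_le_of_nonpos hX1 (neg_nonpos.2 (by positivity)))
    have hwv : (w ^ s) ^ 2 ^ (j + 1) = w := by
      rw [← Real.rpow_natCast, ← Real.rpow_mul hw0.le, hs]
      push_cast
      rw [inv_mul_cancel₀ (by positivity), Real.rpow_one]
    have hBw : 1 / B ≤ w := by rw [one_div]; exact le_max_left _ _
    have hpar : Par (j + 1) X α (w ^ s) q :=
      { hX := hX
        hα := hα
        hq := by exact_mod_cast hB.trans hBq
        v0 := Real.rpow_pos_of_pos hw0 _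
        v1 := Real.rpow_le_one hw0.le hw1 hs0.le
        q1 := by rw [hwv]; exact (one_div_le_one_div_of_le hB hBq.le).trans hBw
        q2 := by
          rw [hwv]
          refine hqX.le.trans ?_
          rw [div_eq_mul_one_div]
          gcongr
        X1 := by rw [hwv]; exact le_max_right _ _ }
    have hws : w ^ s ≤ B ^ (-s) + X ^ (-(s / (4 * (j + 1)))) := by
      have e1 : B⁻¹ ^ s = B ^ (-s) := by rw [Real.rpow_neg hB.le, Real.inv_rpow hB.le]
      have e2 : (X ^ (-(1 / (4 * (j + 1 : ℕ)) : ℝ))) ^ s = X ^ (-(s / (4 * (j + 1)))) := by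
        rw [← Real.rpow_mul hX0.le]
        congr 1
        push_cast
        ring
      have p1 := Real.rpow_pos_of_pos hB (-s)
      have p2 := Real.rpow_pos_of_pos hX0 (-(s / (4 * (j + 1))))
      rw [hw]
      rcases max_choice B⁻¹ (X ^ (-(1 / (4 * (j + 1 : ℕ)) : ℝ))) with h | h <;> rw [h]
      · rw [e1]; linarith
      · rw [e2]; linarith
    have hkeyB : el X ^ (4 * 4 ^ (j + 1)) * B ^ (-s) ≤ B ^ (-c0) := by
      have h1 : el X ^ (4 * 4 ^ (j + 1)) ≤ B ^ (s - c0) := by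
        have hn : 4 * 4 ^ (j + 1) + 1 ≤ 12 * 5 ^ (j + 1) := by
          have h2 : 4 ^ (j + 1) ≤ 5 ^ (j + 1) := Nat.pow_le_pow_left (by norm_num) _
          have h3 : 0 < 5 ^ (j + 1) := by positivity
          omega
        have hn' : (4 * 4 ^ (j + 1) : ℝ) + 1 ≤ 12 * 5 ^ (j + 1) := by exact_mod_cast hn
        have hexp : (12 * 10 ^ (j + 1) : ℝ) * (s - c0) = 12 * 5 ^ (j + 1) - 1 := by
          rw [hs, hc0, h10]; field_simp
        have hsc : 0 ≤ s - c0 := by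
          by_contra! hneg
          have h6 : (12 * 10 ^ (j + 1) : ℝ) * (s - c0) < 0 :=
            mul_neg_of_pos_of_neg (by positivity) hneg
          have h7 : (0 : ℝ) < 4 * 4 ^ (j + 1) := by positivity
          linarith
        calc el X ^ (4 * 4 ^ (j + 1)) = el X ^ ((4 * 4 ^ (j + 1) : ℕ) : ℝ) := (Real.rpow_natCast _ _).symm
          _ ≤ el X ^ ((12 * 10 ^ (j + 1) : ℝ) * (s - c0)) := by
            refine Real.rpow_le_rpow_of_exponent_le hel ?_
            rw [hexp]
            push_cast
            linarith
          _ = (el X ^ (12 * 10 ^ (j + 1))) ^ (s - c0) := by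
            have e : el X ^ (12 * 10 ^ (j + 1)) = el X ^ (12 * 10 ^ (j + 1) : ℝ) := by
              rw [← Real.rpow_natCast (el X) (12 * 10 ^ (j + 1))]
              congr 1
              push_cast
              rfl
            rw [Real.rpow_mul (by linarith), e]
          _ ≤ B ^ (s - c0) := Real.rpow_le_rpow (by positivity) hcase.le hsc
      calc el X ^ (4 * 4 ^ (j + 1)) * B ^ (-s) ≤ B ^ (s - c0) * B ^ (-s) := by gcongr
        _ = B ^ (-c0) := by rw [← Real.rpow_add hB]; congr 1; ring
    have hkeyX : el X ^ (4 * 4 ^ (j + 1)) * X ^ (-(s / (4 * (j + 1)))) ≤ C2 * X ^ (-c1) := by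
      calc el X ^ (4 * 4 ^ (j + 1)) * X ^ (-(s / (4 * (j + 1))))
          ≤ C2 * X ^ (s / (4 * (j + 1)) - c1) * X ^ (-(s / (4 * (j + 1)))) := by
            gcongr; exact hlog X hX
        _ = C2 * X ^ (-c1) := by rw [mul_assoc, ← Real.rpow_add hX0]; congr 2; ring
    calc ‖∑ n ∈ Finset.Icc 1 ⌊X⌋₊, lam L n • eF (α * n)‖
        ≤ C1 * (X * w ^ s * el X ^ (4 * 4 ^ (j + 1) + 2)) := hmain X α (w ^ s) q hpar _ hY
      _ ≤ C1 * (X * (B ^ (-s) + X ^ (-(s / (4 * (j + 1))))) * el X ^ (4 * 4 ^ (j + 1) + 2)) := by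
          gcongr
      _ = C1 * X * (el X ^ 2 * (el X ^ (4 * 4 ^ (j + 1)) * B ^ (-s)) +
            el X ^ 2 * (el X ^ (4 * 4 ^ (j + 1)) * X ^ (-(s / (4 * (j + 1)))))) := by ring
      _ ≤ C1 * X * (el X ^ 2 * B ^ (-c0) + el X ^ 2 * (C2 * X ^ (-c1))) := by gcongr
      _ = C1 * X * (el X ^ 2 * B ^ (-c0)) + C1 * C2 * (X * (el X ^ 2 * X ^ (-c1))) := by ring
      _ ≤ _ := by
          have p1 : 0 ≤ X * (el X ^ 2 * B ^ (-c0)) := by positivity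
          have p2 : 0 ≤ X * (el X ^ 2 * X ^ (-c1)) := by positivity
          have p3 : 0 < C1 * C2 := by positivity
          nlinarith

end

end VMI

/-- Bound for `Σ_{N(𝔞) ≤ X} Λ_L(𝔞)·e(α·N(𝔞))` when `α` has a rational approximation of
denominator `q` with `X/B > q > B`. -/
theorem von_mangoldt_ideal_exp_sum_bound (L : Type*) [Field L] [NumberField L]
    (d : ℕ) (hd : d = Module.finrank ℚ L) :
    ∃ Cst : ℝ, 0 < Cst ∧ ∀ X : ℝ, 2 ≤ X → ∀ B : ℝ, 0 < B →
      ∀ (α : ℝ) (q : ℕ), HasRatApprox α q → B < (q : ℝ) → (q : ℝ) < X / B →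
      ‖∑ᶠ I : Ideal (𝓞 L),
          if (Ideal.absNorm I : ℝ) ≤ X then
            (LamIdeal L I : ℂ) * eF (α * (Ideal.absNorm I : ℝ))
          else 0‖
        ≤ Cst * X *
            (Real.log X ^ 2 * B ^ (-(((10 : ℝ) ^ d)⁻¹ / 12))
              + Real.log X ^ 2 * X ^ (-(((10 : ℝ) ^ d)⁻¹ / 60))
              + Real.log X ^ 2 * X ^ (-(((10 : ℝ) ^ d)⁻¹ / (10 * d)))
              + Real.log X ^ ((2 : ℝ) + (d : ℝ) ^ 2 / 2) * B ^ (-(1 : ℝ) / 12)) := by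
  obtain ⟨j, hj⟩ : ∃ j, Module.finrank ℚ L = j + 1 :=
    Nat.exists_eq_succ_of_ne_zero (Module.finrank_pos (R := ℚ) (M := L)).ne'
  obtain ⟨C, hC, h⟩ := VMI.main_bound L j hj
  refine ⟨9 * C, by positivity, fun X hX B hB α q hα hBq hqX => ?_⟩
  have hX0 : 0 < X := by linarith
  have hlog : 0 ≤ Real.log X := Real.log_nonneg (by linarith)
  rw [VMI.finsum_eq L X α hX0.le, hd, hj]
  refine (h X hX B hB α q hα hBq hqX).trans ?_
  have h1 : VMI.el X ^ 2 ≤ 9 * Real.log X ^ 2 := by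
    calc VMI.el X ^ 2 ≤ (3 * Real.log X) ^ 2 :=
          pow_le_pow_left₀ (by linarith [VMI.one_le_el hX]) (VMI.el_le_log hX) 2
      _ = _ := by ring
  have p3 : 0 ≤ Real.log X ^ 2 * X ^ (-(((10 : ℝ) ^ (j + 1))⁻¹ / (10 * ((j + 1 : ℕ) : ℝ)))) := by
    positivity
  have p4 : 0 ≤ Real.log X ^ ((2 : ℝ) + (((j + 1 : ℕ) : ℝ)) ^ 2 / 2) * B ^ (-(1 : ℝ) / 12) := by
    positivity
  calc C * X * (VMI.el X ^ 2 * B ^ (-(((10 : ℝ) ^ (j + 1))⁻¹ / 12)) +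
          VMI.el X ^ 2 * X ^ (-(((10 : ℝ) ^ (j + 1))⁻¹ / 60)))
      ≤ C * X * (9 * Real.log X ^ 2 * B ^ (-(((10 : ℝ) ^ (j + 1))⁻¹ / 12)) +
          9 * Real.log X ^ 2 * X ^ (-(((10 : ℝ) ^ (j + 1))⁻¹ / 60))) := by gcongr
    _ = 9 * C * X * (Real.log X ^ 2 * B ^ (-(((10 : ℝ) ^ (j + 1))⁻¹ / 12)) +
          Real.log X ^ 2 * X ^ (-(((10 : ℝ) ^ (j + 1))⁻¹ / 60))) := by ring
    _ ≤ _ := by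
      refine mul_le_mul_of_nonneg_left ?_ (by positivity)
      linarith
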